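/- arXiv:2003.11002 — 5 statements merged into one kernel-verified Lean document; each statement's English description precedes it below -/
import Mathlib

section
/- (V. A. Markov's theorem on real Banach spaces.) Let X be a real Banach space, let P be a continuous polynomial of degree at most n on X with ‖P‖ ≤ 1, and let 1 ≤ k ≤ n. Then for every x ∈ X with ‖x‖ ≤ 1, ‖D̂^k P(x)‖ ≤ T_n^{(k)}(1) = n²(n²−1²)⋯(n²−(k−1)²)/(1·3⋯(2k−1)). -/
/-!
Restricting `P` to the plane spanned by `x` and `y` gives a polynomial `F (t, u)` of total degree at
most `n`, bounded by `1` for `|t| + |u| ≤ 1`, and `D̂ᵏ P(x) y` is `k!` times the coefficient of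
`uᵏ` in `F (1, u)`. Interpolate `F (z z', √((1 - z²) (1 - z'²)))`, or rather its part of the same
parity as `k` in `u`, separately in `z` and `z'` by Lagrange's formula, and evaluate at
`(z, z') = (c, c⁻¹)`: there `z z' = 1`, and `ρ = (1 - z²) (1 - z'²) = 2 - c² - c⁻²` plays the role
of `u²`. After averaging over `c ↦ ±c, ±c⁻¹` the product of two fundamental polynomials becomes a
polynomial in `ρ` which, up to the sign of its barycentric weights, has nonnegative coefficients.
Comparing coefficients expresses the coefficient of `uᵏ` through values of `F` at points with
`|t| + |u| ≤ 1`. For nodes `z = cos θ` taken at the extrema (`k` even) or the zeros (`k` odd) of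
`T_n`, the polynomial `T_n (t + u)` attains the extreme values with exactly the signs of the
weights, so no `F` has a larger coefficient.
-/

open Metric

/-- `T_n^{(k)}(1)`: the `k`-th derivative of the `n`-th Chebyshev polynomial of the
first kind, evaluated at `1`. -/
noncomputable def chebTDerivOne (n k : ℕ) : ℝ :=
  (Polynomial.derivative^[k] (Polynomial.Chebyshev.T ℝ (n : ℤ))).eval 1

namespace MarkovBanach

open Polynomial Real

section Kernel

variable {K : Type*} [Field K]

/-- The polynomial in `ρ = 2 - a - b` which equals `(a - s) * (b - s)` whenever `a * b = 1`. -/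
noncomputable def pairFactor (s : K) : K[X] := C ((1 - s) ^ 2) + C s * X

theorem eval_pairFactor {a b : K} (hab : a * b = 1) (s : K) :
    (pairFactor s).eval (2 - a - b) = (a - s) * (b - s) := by
  simp only [pairFactor, eval_add, eval_mul, eval_C, eval_X]
  linear_combination -hab

theorem inv_sub_mul_inv_sub_add_neg {c y z z' : K} (hz : c ^ 2 ≠ z ^ 2) (hy : y ^ 2 ≠ z' ^ 2) :
    (c - z)⁻¹ * (y - z')⁻¹ + (-c - z)⁻¹ * (-y - z')⁻¹ =
      2 * (c * y + z * z') * ((c ^ 2 - z ^ 2) * (y ^ 2 - z' ^ 2))⁻¹ := by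
  rw [Ne, sq_eq_sq_iff_eq_or_eq_neg, not_or] at hz hy
  have hcz := sub_ne_zero.2 hz.1
  have hcz_neg := sub_ne_zero.2 hz.2
  have hyz' := sub_ne_zero.2 hy.1
  have hyz'_neg := sub_ne_zero.2 hy.2
  have hneg (a b : K) : -a - b = -(a - -b) := by ring
  have hfactor (a b : K) : a ^ 2 - b ^ 2 = (a - b) * (a - -b) := by ring
  rw [hneg c, hneg y, hfactor c, hfactor y]
  field_simp
  ring

theorem sq_ne_sq_of_mem_of_notMem {Z : Finset K} (hZ : ∀ z ∈ Z, -z ∈ Z) {a z : K} (ha : a ∉ Z)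
    (hz : z ∈ Z) : a ^ 2 ≠ z ^ 2 := fun h =>
  (sq_eq_sq_iff_eq_or_eq_neg.1 h).elim (fun h => ha (h ▸ hz)) fun h => ha (h ▸ hZ z hz)

theorem eq_of_eval_two_sub_sq_sub_sq_eq [Infinite K] {p q : K[X]} (B : Finset K)
    (h : ∀ c y, c * y = 1 → c ∉ B → y ∉ B →
      p.eval (2 - c ^ 2 - y ^ 2) = q.eval (2 - c ^ 2 - y ^ 2)) : p = q := by
  classical
  refine eq_of_infinite_eval_eq p q ?_
  set ρ : K → K := fun c => 2 - c ^ 2 - c⁻¹ ^ 2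
  set S : Set K := (↑(insert 0 (B ∪ B.image (·⁻¹))) : Set K)ᶜ
  have hS {c : K} (hc : c ∈ S) : c ≠ 0 ∧ c ∉ B ∧ c⁻¹ ∉ B := by simpa [S] using hc
  have hinf : (ρ '' S).Infinite := fun hfin =>
    (Finset.finite_toSet _).infinite_compl <| hfin.of_finite_fibers ρ fun r _ => by
      have hne : (X ^ 4 - C (2 - r) * X ^ 2 + 1 : K[X]) ≠ 0 := fun h0 => by
        simpa using congrArg (coeff · 0) h0
      refine (finite_setOfPred_isRoot hne).subset fun c ⟨hc, hcr⟩ => ?_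
      have hc0 := (hS hc).1
      have hcr : 2 - c ^ 2 - c⁻¹ ^ 2 = r := hcr
      simp only [Set.mem_ofPred_eq, IsRoot.def, ← hcr, eval_add, eval_sub, eval_mul, eval_pow,
        eval_X, eval_C, eval_one]
      field
  refine hinf.mono (Set.image_subset_iff.2 fun c hc => ?_)
  exact h c c⁻¹ (mul_inv_cancel₀ (hS hc).1) (hS hc).2.1 (hS hc).2.2

variable [DecidableEq K]

/-- The polynomial in `ρ = 2 - a - b` which, whenever `a * b = 1`, equals the product of all
`(a - r) * (b - r)`, `r ∈ S`, times the symmetrisation in `(a, b)` of `1 / ((a - s) * (b - s'))`. -/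
noncomputable def pairKernel (S : Finset K) (s s' : K) : K[X] :=
  if s = s' then 2 * ∏ r ∈ S.erase s, pairFactor r
  else (C (2 * (1 - s) * (1 - s')) + C (s + s') * X) * ∏ r ∈ (S.erase s).erase s', pairFactor r

theorem eval_pairKernel {S : Finset K} {s s' a b : K} (hs : s ∈ S) (hs' : s' ∈ S)
    (ha : ∀ r ∈ S, a ≠ r) (hb : ∀ r ∈ S, b ≠ r) (hab : a * b = 1) :
    (pairKernel S s s').eval (2 - a - b) =
      (∏ r ∈ S, (a - r) * (b - r)) * (((a - s) * (b - s'))⁻¹ + ((b - s) * (a - s'))⁻¹) := by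
  have has := sub_ne_zero.2 (ha s hs)
  have hbs := sub_ne_zero.2 (hb s hs)
  have has' := sub_ne_zero.2 (ha s' hs')
  have hbs' := sub_ne_zero.2 (hb s' hs')
  rw [← Finset.mul_prod_erase S _ hs, pairKernel]
  split_ifs with h
  · subst h
    simp only [eval_mul, eval_ofNat, eval_prod, eval_pairFactor hab]
    field
  · have hmem : s' ∈ S.erase s := Finset.mem_erase.2 ⟨Ne.symm h, hs'⟩
    have hlin : 2 * (1 - s) * (1 - s') + (s + s') * (2 - a - b) =
        (a - s) * (b - s') + (b - s) * (a - s') := by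
      linear_combination -2 * hab
    rw [← Finset.mul_prod_erase _ _ hmem]
    simp only [eval_mul, eval_add, eval_C, eval_X, eval_prod, eval_pairFactor hab, hlin]
    field

theorem prod_image_sq_eq_prod_sub_mul_prod_sub [CharZero K] {Z : Finset K}
    (hZ : ∀ z ∈ Z, -z ∈ Z) {a b : K} (hab : a * b = 1) :
    ∏ r ∈ Z.image (· ^ 2), (a ^ 2 - r) * (b ^ 2 - r) = (∏ z ∈ Z, (a - z)) * ∏ z ∈ Z, (b - z) := by
  rw [← Finset.prod_mul_distrib]
  refine Finset.prod_image' _ fun t ht => ?_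
  have hfiber : {z ∈ Z | z ^ 2 = t ^ 2} = {t, -t} := by
    ext z
    simp only [Finset.mem_filter, sq_eq_sq_iff_eq_or_eq_neg, Finset.mem_insert,
      Finset.mem_singleton, and_iff_right_iff_imp]
    rintro (rfl | rfl)
    exacts [ht, hZ _ ht]
  rw [hfiber]
  by_cases h0 : t = 0
  · subst h0
    simp only [neg_zero, Finset.mem_singleton, Finset.insert_eq_of_mem, Finset.prod_singleton]
    linear_combination a * b * hab
  · rw [Finset.prod_pair (self_ne_neg.2 h0)]
    ring

/-- The polynomial in `ρ = 2 - c ^ 2 - c⁻¹ ^ 2` to which the products `ℓ_z (c) * ℓ_z' (c⁻¹)` of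
fundamental Lagrange polynomials of the nodes `Z` average over `c ↦ ±c, ±c⁻¹`, up to the factor
`nodalWeight Z id z * nodalWeight Z id z'`. -/
noncomputable def nodeKernel (Z : Finset K) (z z' : K) : K[X] :=
  C ((1 + z * z') / 2) * pairKernel (Z.image (· ^ 2)) (z ^ 2) (z' ^ 2)

variable [CharZero K]

theorem eval_basis_mul_eval_basis_add_neg {Z : Finset K} (hZ : ∀ z ∈ Z, -z ∈ Z) {c y : K}
    (hcy : c * y = 1) (hc : c ∉ Z) (hy : y ∉ Z) {z z' : K} (hz : z ∈ Z) (hz' : z' ∈ Z) :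
    (Lagrange.basis Z id z).eval c * (Lagrange.basis Z id z').eval y +
        (Lagrange.basis Z id z).eval (-c) * (Lagrange.basis Z id z').eval (-y) =
      Lagrange.nodalWeight Z id z * Lagrange.nodalWeight Z id z' * (2 * (1 + z * z')) *
        (∏ r ∈ Z.image (· ^ 2), (c ^ 2 - r) * (y ^ 2 - r)) *
        ((c ^ 2 - z ^ 2) * (y ^ 2 - z' ^ 2))⁻¹ := by
  have hneg {a : K} (ha : a ∉ Z) : -a ∉ Z := fun h => ha (neg_neg a ▸ hZ _ h)
  have hbasis {a t : K} (ha : a ∉ Z) (ht : t ∈ Z) : (Lagrange.basis Z id t).eval a =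
      (∏ r ∈ Z, (a - r)) * (Lagrange.nodalWeight Z id t * (a - t)⁻¹) := by
    rw [Lagrange.eval_basis_not_at_node ht (ne_of_mem_of_not_mem ht ha).symm, Lagrange.eval_nodal]
    rfl
  have hprod := prod_image_sq_eq_prod_sub_mul_prod_sub hZ hcy
  have hprod_neg := prod_image_sq_eq_prod_sub_mul_prod_sub hZ ((neg_mul_neg c y).trans hcy)
  have hinv := inv_sub_mul_inv_sub_add_neg (sq_ne_sq_of_mem_of_notMem hZ hc hz)
    (sq_ne_sq_of_mem_of_notMem hZ hy hz')
  rw [neg_sq, neg_sq] at hprod_neg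
  rw [hcy] at hinv
  rw [hbasis hc hz, hbasis hy hz', hbasis (hneg hc) hz, hbasis (hneg hy) hz']
  linear_combination Lagrange.nodalWeight Z id z * Lagrange.nodalWeight Z id z' *
    ((∏ r ∈ Z.image (· ^ 2), (c ^ 2 - r) * (y ^ 2 - r)) * hinv -
      (c - z)⁻¹ * (y - z')⁻¹ * hprod - (-c - z)⁻¹ * (-y - z')⁻¹ * hprod_neg)

theorem sum_eval_basis_mul_eval_basis {Z : Finset K} (hZ : ∀ z ∈ Z, -z ∈ Z) {c y : K}
    (hcy : c * y = 1) (hc : c ∉ Z) (hy : y ∉ Z) {z z' : K} (hz : z ∈ Z) (hz' : z' ∈ Z) :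
    (Lagrange.basis Z id z).eval c * (Lagrange.basis Z id z').eval y +
        (Lagrange.basis Z id z).eval (-c) * (Lagrange.basis Z id z').eval (-y) +
        ((Lagrange.basis Z id z).eval y * (Lagrange.basis Z id z').eval c +
        (Lagrange.basis Z id z).eval (-y) * (Lagrange.basis Z id z').eval (-c)) =
      4 * (Lagrange.nodalWeight Z id z * Lagrange.nodalWeight Z id z' *
        (nodeKernel Z z z').eval (2 - c ^ 2 - y ^ 2)) := by
  have hsq {a : K} (ha : a ∉ Z) : ∀ r ∈ Z.image (· ^ 2), a ^ 2 ≠ r :=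
    Finset.forall_mem_image.2 fun _ => sq_ne_sq_of_mem_of_notMem hZ ha
  have hyc : y * c = 1 := by rw [mul_comm, hcy]
  rw [eval_basis_mul_eval_basis_add_neg hZ hcy hc hy hz hz',
    eval_basis_mul_eval_basis_add_neg hZ hyc hy hc hz hz', nodeKernel, eval_mul, eval_C,
    eval_pairKernel (Finset.mem_image_of_mem (· ^ 2) hz) (Finset.mem_image_of_mem (· ^ 2) hz')
      (hsq hc) (hsq hy) (by rw [← mul_pow, hcy, one_pow])]
  simp only [mul_comm (y ^ 2 - _) (c ^ 2 - _)]
  ring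

theorem eval_mul_eval_eq_sum_nodeKernel {Z : Finset K} (hZ : ∀ z ∈ Z, -z ∈ Z) {f : K[X]}
    (hdeg : f.degree < Z.card) {c y : K} (hcy : c * y = 1) (hc : c ∉ Z) (hy : y ∉ Z)
    (hf : f.eval (-c) * f.eval (-y) = f.eval c * f.eval y) :
    f.eval c * f.eval y = ∑ z ∈ Z, ∑ z' ∈ Z, f.eval z * f.eval z' *
      (Lagrange.nodalWeight Z id z * Lagrange.nodalWeight Z id z' *
        (nodeKernel Z z z').eval (2 - c ^ 2 - y ^ 2)) := by
  have hinterp (a b : K) : f.eval a * f.eval b = ∑ z ∈ Z, ∑ z' ∈ Z, f.eval z * f.eval z' *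
      ((Lagrange.basis Z id z).eval a * (Lagrange.basis Z id z').eval b) := by
    have h (a : K) : f.eval a = ∑ z ∈ Z, f.eval z * (Lagrange.basis Z id z).eval a := by
      conv_lhs => rw [Lagrange.eq_interpolate (Function.injective_id.injOn) hdeg]
      simp [Lagrange.interpolate_apply, eval_finsetSum]
    rw [h a, h b, Finset.sum_mul_sum]
    exact Finset.sum_congr rfl fun z _ => Finset.sum_congr rfl fun z' _ => by ring
  refine mul_left_cancel₀ (OfNat.ofNat_ne_zero 4) ?_
  calc 4 * (f.eval c * f.eval y)
      = f.eval c * f.eval y + f.eval (-c) * f.eval (-y) +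
        (f.eval y * f.eval c + f.eval (-y) * f.eval (-c)) := by linear_combination -2 * hf
    _ = _ := by
      rw [hinterp c y, hinterp (-c), hinterp y, hinterp (-y)]
      simp only [← Finset.sum_add_distrib, ← mul_add, Finset.mul_sum]
      refine Finset.sum_congr rfl fun z hz => Finset.sum_congr rfl fun z' hz' => ?_
      rw [sum_eval_basis_mul_eval_basis hZ hcy hc hy hz hz']
      ring

theorem X_pow_eq_sum_nodeKernel {Z : Finset K} (hZ : ∀ z ∈ Z, -z ∈ Z) {i h : ℕ}
    (hdeg : i + 2 * h < Z.card) :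
    (X ^ h : K[X]) = ∑ z ∈ Z, ∑ z' ∈ Z, C ((z * z') ^ i * ((1 - z ^ 2) * (1 - z' ^ 2)) ^ h *
      (Lagrange.nodalWeight Z id z * Lagrange.nodalWeight Z id z')) * nodeKernel Z z z' := by
  refine eq_of_eval_two_sub_sq_sub_sq_eq Z fun c y hcy hc hy => ?_
  set f : K[X] := X ^ i * (1 - X ^ 2) ^ h with hf
  have hf_eval (a : K) : f.eval a = a ^ i * (1 - a ^ 2) ^ h := by simp [hf]
  have hf_mul (a b : K) : f.eval a * f.eval b = (a * b) ^ i * ((1 - a ^ 2) * (1 - b ^ 2)) ^ h := by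
    rw [hf_eval, hf_eval, mul_pow, mul_pow]
    ring
  have hf_deg : f.natDegree ≤ i + 2 * h := by
    rw [hf]
    compute_degree
    omega
  have hrepr := eval_mul_eval_eq_sum_nodeKernel hZ
    (degree_le_natDegree.trans_lt (Nat.cast_lt.2 (hf_deg.trans_lt hdeg))) hcy hc hy
    (by rw [hf_mul, hf_mul, neg_mul_neg, neg_sq, neg_sq])
  have hρ : (1 - c ^ 2) * (1 - y ^ 2) = 2 - c ^ 2 - y ^ 2 := by
    linear_combination (c * y + 1) * hcy
  simp only [hf_mul, hcy, hρ, one_pow, one_mul] at hrepr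
  simp only [eval_pow, eval_X, hrepr, eval_finsetSum, eval_mul, eval_C, mul_assoc]

end Kernel

section Nonneg

theorem coeff_nonneg_iff_mem_lifts (p : ℝ[X]) :
    p ∈ lifts (Subsemiring.nonneg ℝ).subtype ↔ ∀ k, 0 ≤ p.coeff k := by
  simp [lifts_iff_coeff_lifts]

theorem C_mem_lifts_nonneg {a : ℝ} (ha : 0 ≤ a) : C a ∈ lifts (Subsemiring.nonneg ℝ).subtype :=
  C'_mem_lifts ⟨⟨a, ha⟩, rfl⟩

theorem pairFactor_mem_lifts_nonneg {s : ℝ} (hs : 0 ≤ s) :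
    pairFactor s ∈ lifts (Subsemiring.nonneg ℝ).subtype :=
  add_mem (C_mem_lifts_nonneg (sq_nonneg _)) (mul_mem (C_mem_lifts_nonneg hs) (X_mem_lifts _))

theorem pairKernel_mem_lifts_nonneg {S : Finset ℝ} (hS : ∀ r ∈ S, 0 ≤ r) {s s' : ℝ}
    (hs : s ∈ Set.Icc 0 1) (hs' : s' ∈ Set.Icc 0 1) :
    pairKernel S s s' ∈ lifts (Subsemiring.nonneg ℝ).subtype := by
  have hfactor : ∀ r ∈ S, pairFactor r ∈ lifts (Subsemiring.nonneg ℝ).subtype := fun r hr =>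
    pairFactor_mem_lifts_nonneg (hS r hr)
  rw [pairKernel]
  split_ifs
  · exact mul_mem (ofNat_mem _ 2) (prod_mem fun r hr => hfactor r (Finset.mem_of_mem_erase hr))
  · refine mul_mem (add_mem (C_mem_lifts_nonneg ?_) (mul_mem (C_mem_lifts_nonneg ?_)
      (X_mem_lifts _))) (prod_mem fun r hr =>
        hfactor r (Finset.mem_of_mem_erase (Finset.mem_of_mem_erase hr)))
    · exact mul_nonneg (mul_nonneg zero_le_two (sub_nonneg.2 hs.2)) (sub_nonneg.2 hs'.2)
    · exact add_nonneg hs.1 hs'.1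

theorem coeff_nodeKernel_nonneg (Z : Finset ℝ) {z z' : ℝ} (hz : |z| ≤ 1) (hz' : |z'| ≤ 1)
    (m : ℕ) : 0 ≤ (nodeKernel Z z z').coeff m := by
  refine (coeff_nonneg_iff_mem_lifts _).1 (mul_mem (C_mem_lifts_nonneg ?_)
    (pairKernel_mem_lifts_nonneg ?_ ⟨sq_nonneg z, (sq_le_one_iff_abs_le_one z).2 hz⟩
      ⟨sq_nonneg z', (sq_le_one_iff_abs_le_one z').2 hz'⟩)) m
  · have hzz' : |z * z'| ≤ 1 := by
      rw [abs_mul]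
      exact mul_le_one₀ hz (abs_nonneg _) hz'
    linarith [(abs_le.1 hzz').1]
  · exact Finset.forall_mem_image.2 fun t _ => sq_nonneg t

end Nonneg

section Quadrature

theorem map_eq_map_of_monomial {σ R M : Type*} [CommSemiring R] [AddCommMonoid M] [Module R M]
    {f g : MvPolynomial σ R →ₗ[R] M} {F : MvPolynomial σ R}
    (h : ∀ d ∈ F.support, f (MvPolynomial.monomial d 1) = g (MvPolynomial.monomial d 1)) :
    f F = g F := by
  rw [F.as_sum, map_sum, map_sum]
  refine Finset.sum_congr rfl fun d hd => ?_
  rw [← mul_one (F.coeff d), ← smul_eq_mul, ← MvPolynomial.smul_monomial, map_smul, map_smul,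
    h d hd]

/-- The functional `F ↦ F (t, u) + (-1) ^ k * F (t, -u)`: twice the part of `F` that has the parity
of `k` in the second variable. -/
noncomputable def parityPart (k : ℕ) (t u : ℝ) : MvPolynomial (Fin 2) ℝ →ₗ[ℝ] ℝ :=
  (MvPolynomial.aeval ![t, u]).toLinearMap +
    (-1 : ℝ) ^ k • (MvPolynomial.aeval ![t, -u]).toLinearMap

theorem parityPart_apply (k : ℕ) (t u : ℝ) (F : MvPolynomial (Fin 2) ℝ) :
    parityPart k t u F =
      MvPolynomial.eval ![t, u] F + (-1) ^ k * MvPolynomial.eval ![t, -u] F := by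
  simp [parityPart, MvPolynomial.aeval_eq_eval]

theorem parityPart_monomial (k : ℕ) (t u : ℝ) (d : Fin 2 →₀ ℕ) :
    parityPart k t u (MvPolynomial.monomial d 1) =
      (1 + (-1) ^ (k + d 1)) * (t ^ d 0 * u ^ d 1) := by
  simp only [parityPart_apply, MvPolynomial.eval_monomial, Finsupp.prod_fintype, pow_zero,
    implies_true, Fin.prod_univ_two, Matrix.cons_val_zero, Matrix.cons_val_one, neg_pow u, pow_add]
  ring

/-- The functional taking `F` to the coefficient of `u ^ k` in `F (1, u)`. -/
noncomputable def coeffAtOne (k : ℕ) : MvPolynomial (Fin 2) ℝ →ₗ[ℝ] ℝ :=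
  lcoeff ℝ k ∘ₗ (MvPolynomial.aeval ![1, X]).toLinearMap

theorem coeffAtOne_apply (k : ℕ) (F : MvPolynomial (Fin 2) ℝ) :
    coeffAtOne k F = (MvPolynomial.aeval ![1, (X : ℝ[X])] F).coeff k := rfl

theorem eval_aeval_one_X (r : ℝ) (F : MvPolynomial (Fin 2) ℝ) :
    (MvPolynomial.aeval ![1, (X : ℝ[X])] F).eval r = MvPolynomial.eval ![1, r] F := by
  have hpoint : (fun i => aeval r (![1, (X : ℝ[X])] i)) = ![1, r] := by
    ext i
    fin_cases i <;> simp
  rw [← coe_aeval_eq_eval, MvPolynomial.comp_aeval_apply, hpoint, MvPolynomial.aeval_eq_eval]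

theorem coeffAtOne_monomial (k : ℕ) (d : Fin 2 →₀ ℕ) :
    coeffAtOne k (MvPolynomial.monomial d 1) = if k = d 1 then 1 else 0 := by
  simp [coeffAtOne_apply, MvPolynomial.aeval_monomial, Finsupp.prod_fintype, coeff_X_pow]

/-- `parityPart k` at the point built from two nodes `z = cos α` and `z' = cos β` with
`α, β ∈ [0, π]`, namely `(cos α * cos β, sin α * sin β)`. -/
noncomputable def nodePart (k : ℕ) (z z' : ℝ) : MvPolynomial (Fin 2) ℝ →ₗ[ℝ] ℝ :=
  parityPart k (z * z') √((1 - z ^ 2) * (1 - z' ^ 2))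

/-- The coefficient of `nodePart k z z'` in the formula recovering `coeffAtOne k` from the values
of these functionals. -/
noncomputable def quadratureWeight (Z : Finset ℝ) (k : ℕ) (z z' : ℝ) : ℝ :=
  Lagrange.nodalWeight Z id z * Lagrange.nodalWeight Z id z' *
    ((nodeKernel Z z z').coeff (k / 2) / (2 * √((1 - z ^ 2) * (1 - z' ^ 2)) ^ (k % 2)))

/-- The quadrature formula for `coeffAtOne k` with nodes `Z`. -/
noncomputable def quadrature (Z : Finset ℝ) (k : ℕ) : MvPolynomial (Fin 2) ℝ →ₗ[ℝ] ℝ :=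
  ∑ z ∈ Z, ∑ z' ∈ Z, quadratureWeight Z k z z' • nodePart k z z'

theorem quadrature_apply (Z : Finset ℝ) (k : ℕ) (F : MvPolynomial (Fin 2) ℝ) :
    quadrature Z k F = ∑ z ∈ Z, ∑ z' ∈ Z, quadratureWeight Z k z z' * nodePart k z z' F := by
  simp [quadrature, LinearMap.sum_apply]

theorem one_sub_sq_mul_one_sub_sq_nonneg {z z' : ℝ} (hz : |z| ≤ 1) (hz' : |z'| ≤ 1) :
    0 ≤ (1 - z ^ 2) * (1 - z' ^ 2) :=
  mul_nonneg (sub_nonneg.2 ((sq_le_one_iff_abs_le_one z).2 hz))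
    (sub_nonneg.2 ((sq_le_one_iff_abs_le_one z').2 hz'))

theorem quadrature_monomial_of_even {Z : Finset ℝ} (hZ : ∀ z ∈ Z, -z ∈ Z) {k : ℕ}
    (hle : ∀ z ∈ Z, |z| ≤ 1) (hlt : Odd k → ∀ z ∈ Z, |z| < 1) {d : Fin 2 →₀ ℕ}
    (hd : d 0 + d 1 < Z.card + k % 2) (heven : Even (k + d 1)) :
    quadrature Z k (MvPolynomial.monomial d 1) = if k = d 1 then 1 else 0 := by
  obtain ⟨h, hh⟩ : ∃ h, d 1 = 2 * h + k % 2 := ⟨d 1 / 2, by grind⟩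
  have hX := congrArg (coeff · (k / 2))
    (X_pow_eq_sum_nodeKernel hZ (i := d 0) (h := h) (by omega))
  have hk : k / 2 = h ↔ k = d 1 := by omega
  simp only [finsetSum_coeff, coeff_C_mul, coeff_X_pow, hk] at hX
  rw [quadrature_apply, hX]
  refine Finset.sum_congr rfl fun z hz => Finset.sum_congr rfl fun z' hz' => ?_
  set ρ := (1 - z ^ 2) * (1 - z' ^ 2) with hρ
  have hρ_nonneg : 0 ≤ ρ := one_sub_sq_mul_one_sub_sq_nonneg (hle z hz) (hle z' hz')
  have hne : √ρ ^ (k % 2) ≠ 0 := by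
    rcases Nat.even_or_odd k with hk | hk
    · simp [Nat.even_iff.1 hk]
    · have hz := (sq_lt_one_iff_abs_lt_one z).2 (hlt hk z hz)
      have hz' := (sq_lt_one_iff_abs_lt_one z').2 (hlt hk z' hz')
      exact pow_ne_zero _ (Real.sqrt_pos.2 (mul_pos (sub_pos.2 hz) (sub_pos.2 hz'))).ne'
  rw [quadratureWeight, nodePart, ← hρ, parityPart_monomial, heven.neg_one_pow, hh, pow_add,
    pow_mul, Real.sq_sqrt hρ_nonneg]
  field

theorem coeffAtOne_eq_quadrature {Z : Finset ℝ} (hZ : ∀ z ∈ Z, -z ∈ Z) {k : ℕ}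
    (hle : ∀ z ∈ Z, |z| ≤ 1) (hlt : Odd k → ∀ z ∈ Z, |z| < 1) {F : MvPolynomial (Fin 2) ℝ}
    (hF : F.totalDegree < Z.card + k % 2) : coeffAtOne k F = quadrature Z k F := by
  refine map_eq_map_of_monomial fun d hd => ?_
  rw [coeffAtOne_monomial]
  rcases Nat.even_or_odd (k + d 1) with heven | hodd
  · have hdeg := MvPolynomial.le_totalDegree hd
    rw [Finsupp.sum_fintype _ _ fun _ => rfl, Fin.sum_univ_two] at hdeg
    exact (quadrature_monomial_of_even hZ hle hlt (hdeg.trans_lt hF) heven).symm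
  · have hne : k ≠ d 1 := by grind
    simp [quadrature_apply, nodePart, parityPart_monomial, hodd.neg_one_pow, hne]

theorem abs_coeffAtOne_le_of_forall_nodePart {Z : Finset ℝ} (hZ : ∀ z ∈ Z, -z ∈ Z) {k : ℕ}
    (hle : ∀ z ∈ Z, |z| ≤ 1) (hlt : Odd k → ∀ z ∈ Z, |z| < 1) {F G : MvPolynomial (Fin 2) ℝ}
    (hF : F.totalDegree < Z.card + k % 2) (hG : G.totalDegree < Z.card + k % 2)
    (habs : ∀ z ∈ Z, ∀ z' ∈ Z, |nodePart k z z' F| ≤ |nodePart k z z' G|)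
    (hsign : ∀ z ∈ Z, ∀ z' ∈ Z, 0 ≤ Lagrange.nodalWeight Z id z * Lagrange.nodalWeight Z id z' *
      nodePart k z z' G) :
    |coeffAtOne k F| ≤ coeffAtOne k G := by
  rw [coeffAtOne_eq_quadrature hZ hle hlt hF, coeffAtOne_eq_quadrature hZ hle hlt hG,
    quadrature_apply, quadrature_apply]
  refine (Finset.abs_sum_le_sum_abs _ _).trans (Finset.sum_le_sum fun z hz => ?_)
  refine (Finset.abs_sum_le_sum_abs _ _).trans (Finset.sum_le_sum fun z' hz' => ?_)
  have hweight : 0 ≤ quadratureWeight Z k z z' * nodePart k z z' G := by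
    rw [quadratureWeight, mul_right_comm]
    exact mul_nonneg (hsign z hz z' hz')
      (div_nonneg (coeff_nodeKernel_nonneg Z (hle z hz) (hle z' hz') _) (by positivity))
  rw [← abs_of_nonneg hweight, abs_mul, abs_mul]
  exact mul_le_mul_of_nonneg_left (habs z hz z' hz') (abs_nonneg _)

end Quadrature

section Chebyshev

theorem neg_one_pow_mul_nodalWeight_pos {N i : ℕ} {v : ℕ → ℝ}
    (hv : StrictAntiOn v (Finset.range N : Set ℕ)) (hi : i ∈ Finset.range N) :
    0 < (-1) ^ i * Lagrange.nodalWeight (Finset.range N) v i := by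
  have hpow : (-1 : ℝ) ^ i = ∏ j ∈ (Finset.range N).erase i, if j < i then -1 else 1 := by
    have hcount : {j ∈ (Finset.range N).erase i | j < i} = Finset.range i := by
      ext j
      simp only [Finset.mem_filter, Finset.mem_erase, Finset.mem_range] at hi ⊢
      omega
    rw [Finset.prod_ite, Finset.prod_const, Finset.prod_const_one, mul_one, hcount,
      Finset.card_range]
  rw [hpow, Lagrange.nodalWeight, ← Finset.prod_mul_distrib]
  refine Finset.prod_pos fun j hj => ?_
  obtain ⟨hji, hj⟩ := Finset.mem_erase.1 hj
  split_ifs with hlt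
  · rw [neg_one_mul, neg_pos, inv_lt_zero, sub_neg]
    exact hv hj hi hlt
  · rw [one_mul, inv_pos, sub_pos]
    exact hv hi hj (by omega)

theorem nodalWeight_image {ι K : Type*} [DecidableEq ι] [Field K] [DecidableEq K] {s : Finset ι}
    {v : ι → K} (hv : Set.InjOn v s) {i : ι} (hi : i ∈ s) :
    Lagrange.nodalWeight (s.image v) id (v i) = Lagrange.nodalWeight s v i := by
  rw [Lagrange.nodalWeight, Lagrange.nodalWeight, Finset.erase_eq, ← Finset.image_singleton,
    ← Finset.image_sdiff_of_injOn hv (Finset.singleton_subset_iff.2 hi),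
    Finset.sdiff_singleton_eq_erase,
    Finset.prod_image (hv.mono (Finset.coe_subset.2 (Finset.erase_subset _ _)))]
  rfl

/-- For even `k` the angles `i * π / n`, whose cosines are the extremal points of `T_n`; for odd
`k` the angles `(i + 1 / 2) * π / n`, whose cosines are the zeros of `T_n`. -/
noncomputable def nodeAngle (n k i : ℕ) : ℝ := (i + (k % 2 : ℕ) / 2) * π / n

/-- The indices `i` for which `nodeAngle n k i` lies in `[0, π]`. -/
def nodeIndices (n k : ℕ) : Finset ℕ := Finset.range (n + 1 - k % 2)

/-- The interpolation nodes: the cosines of the angles `nodeAngle n k i` in `[0, π]`. -/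
noncomputable def chebyshevNodes (n k : ℕ) : Finset ℝ :=
  (nodeIndices n k).image fun i => cos (nodeAngle n k i)

variable {n k i j : ℕ}

theorem natCast_mul_nodeAngle (hn : n ≠ 0) :
    n * nodeAngle n k i = i * π + (k % 2 : ℕ) * (π / 2) := by
  have : (n : ℝ) ≠ 0 := Nat.cast_ne_zero.2 hn
  rw [nodeAngle]
  field

theorem strictMono_nodeAngle (hn : n ≠ 0) : StrictMono (nodeAngle n k) := fun i j hij => by
  have hn_pos : (0 : ℝ) < n := Nat.cast_pos.2 (Nat.pos_of_ne_zero hn)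
  have hij : (i : ℝ) < j := Nat.cast_lt.2 hij
  exact div_lt_div_of_pos_right (mul_lt_mul_of_pos_right (by gcongr) Real.pi_pos) hn_pos

theorem nodeAngle_reflect (hn : n ≠ 0) (hi : i ∈ nodeIndices n k) :
    nodeAngle n k (n - k % 2 - i) = π - nodeAngle n k i := by
  have hn' : (n : ℝ) ≠ 0 := Nat.cast_ne_zero.2 hn
  have hcast : ((n - k % 2 - i : ℕ) : ℝ) + i + (k % 2 : ℕ) = n := by
    rw [nodeIndices, Finset.mem_range] at hi
    exact_mod_cast (by omega : n - k % 2 - i + i + k % 2 = n)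
  refine mul_left_cancel₀ hn' ?_
  rw [mul_sub, natCast_mul_nodeAngle hn, natCast_mul_nodeAngle hn]
  linear_combination π * hcast

theorem reflect_mem_nodeIndices (hi : i ∈ nodeIndices n k) :
    n - k % 2 - i ∈ nodeIndices n k := by
  rw [nodeIndices, Finset.mem_range] at hi ⊢
  omega

theorem nodeAngle_mem_Icc (hn : n ≠ 0) (hi : i ∈ nodeIndices n k) :
    nodeAngle n k i ∈ Set.Icc 0 π := by
  have hnonneg (l : ℕ) : 0 ≤ nodeAngle n k l := by unfold nodeAngle; positivity
  exact ⟨hnonneg i, sub_nonneg.1 (nodeAngle_reflect hn hi ▸ hnonneg _)⟩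

theorem strictAntiOn_cos_nodeAngle (hn : n ≠ 0) :
    StrictAntiOn (fun i => cos (nodeAngle n k i)) (nodeIndices n k) := fun _ hi _ hj hij =>
  Real.strictAntiOn_cos (nodeAngle_mem_Icc hn hi) (nodeAngle_mem_Icc hn hj)
    (strictMono_nodeAngle hn hij)

theorem card_chebyshevNodes (hn : n ≠ 0) : (chebyshevNodes n k).card = n + 1 - k % 2 := by
  rw [chebyshevNodes, Finset.card_image_of_injOn (strictAntiOn_cos_nodeAngle hn).injOn, nodeIndices,
    Finset.card_range]

theorem neg_mem_chebyshevNodes (hn : n ≠ 0) : ∀ z ∈ chebyshevNodes n k, -z ∈ chebyshevNodes n k :=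
  Finset.forall_mem_image.2 fun i hi => Finset.mem_image.2
    ⟨_, reflect_mem_nodeIndices hi, by rw [nodeAngle_reflect hn hi, Real.cos_pi_sub]⟩

theorem abs_le_one_of_mem_chebyshevNodes : ∀ z ∈ chebyshevNodes n k, |z| ≤ 1 :=
  Finset.forall_mem_image.2 fun _ _ => Real.abs_cos_le_one _

theorem abs_lt_one_of_mem_chebyshevNodes (hn : n ≠ 0) (hk : Odd k) :
    ∀ z ∈ chebyshevNodes n k, |z| < 1 := by
  refine Finset.forall_mem_image.2 fun i hi => ?_
  have hpos (l : ℕ) : 0 < nodeAngle n k l := by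
    rw [nodeAngle, Nat.odd_iff.1 hk]
    positivity
  have hlt := sub_pos.1 (nodeAngle_reflect hn hi ▸ hpos _)
  have hsin := Real.sin_pos_of_pos_of_lt_pi (hpos i) hlt
  rw [← sq_lt_one_iff_abs_lt_one, Real.cos_sq']
  linarith [pow_pos hsin 2]

theorem sqrt_one_sub_cos_sq_mul {a b : ℝ} (ha : a ∈ Set.Icc 0 π) (hb : b ∈ Set.Icc 0 π) :
    √((1 - cos a ^ 2) * (1 - cos b ^ 2)) = sin a * sin b := by
  rw [← Real.sin_sq, ← Real.sin_sq, ← mul_pow, Real.sqrt_sq]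
  exact mul_nonneg (Real.sin_nonneg_of_mem_Icc ha) (Real.sin_nonneg_of_mem_Icc hb)

theorem abs_mul_add_sqrt_le_one {z z' : ℝ} (hz : |z| ≤ 1) (hz' : |z'| ≤ 1) :
    |z * z'| + √((1 - z ^ 2) * (1 - z' ^ 2)) ≤ 1 := by
  have hmul : |z * z'| ≤ 1 := by
    rw [abs_mul]
    exact mul_le_one₀ hz (abs_nonneg _) hz'
  rw [← le_sub_iff_add_le', Real.sqrt_le_left (sub_nonneg.2 hmul), abs_mul, ← sq_abs z,
    ← sq_abs z']
  linarith [sq_nonneg (|z| - |z'|)]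

theorem abs_nodePart_le_two {F : MvPolynomial (Fin 2) ℝ}
    (hF : ∀ t u : ℝ, |t| + |u| ≤ 1 → |MvPolynomial.eval ![t, u] F| ≤ 1) {z z' : ℝ}
    (hz : |z| ≤ 1) (hz' : |z'| ≤ 1) : |nodePart k z z' F| ≤ 2 := by
  have hmem := abs_mul_add_sqrt_le_one hz hz'
  rw [← abs_of_nonneg (Real.sqrt_nonneg _)] at hmem
  rw [nodePart, parityPart_apply]
  refine (abs_add_le _ _).trans ((add_le_add (hF _ _ hmem) ?_).trans_eq one_add_one_eq_two)
  rw [abs_mul, abs_neg_one_pow, one_mul]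
  exact hF _ _ (by rwa [abs_neg])

/-- The bivariate polynomial `T_n (t + u)`, the extremal one for the norm `|t| + |u|`. -/
noncomputable def chebyshevSum (n : ℕ) : MvPolynomial (Fin 2) ℝ :=
  aeval (MvPolynomial.X 0 + MvPolynomial.X 1) (Chebyshev.T ℝ n)

theorem totalDegree_chebyshevSum_le (n : ℕ) : (chebyshevSum n).totalDegree ≤ n := by
  rw [chebyshevSum, aeval_eq_sum_range, Chebyshev.natDegree_T, Int.natAbs_natCast]
  refine MvPolynomial.totalDegree_finsetSum_le fun i hi =>
    (MvPolynomial.totalDegree_smul_le _ _).trans ?_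
  have hX : (MvPolynomial.X 0 + MvPolynomial.X 1 : MvPolynomial (Fin 2) ℝ).totalDegree ≤ 1 :=
    (MvPolynomial.totalDegree_add _ _).trans (by simp)
  calc ((MvPolynomial.X 0 + MvPolynomial.X 1 : MvPolynomial (Fin 2) ℝ) ^ i).totalDegree
      ≤ i * _ := MvPolynomial.totalDegree_pow _ _
    _ ≤ i * 1 := by gcongr
    _ ≤ n := by simpa using Finset.mem_range_succ_iff.1 hi

theorem eval_chebyshevSum (n : ℕ) (t u : ℝ) :
    MvPolynomial.eval ![t, u] (chebyshevSum n) = (Chebyshev.T ℝ n).eval (t + u) := by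
  rw [chebyshevSum, ← MvPolynomial.aeval_eq_eval, ← aeval_algHom_apply]
  simp

theorem factorial_mul_coeffAtOne_chebyshevSum (n k : ℕ) :
    k.factorial * coeffAtOne k (chebyshevSum n) = chebTDerivOne n k := by
  have htaylor : MvPolynomial.aeval ![1, (X : ℝ[X])] (chebyshevSum n) =
      taylor 1 (Chebyshev.T ℝ n) := by
    rw [chebyshevSum, ← aeval_algHom_apply, taylor_apply, comp_eq_aeval]
    simp [add_comm]
  rw [coeffAtOne_apply, htaylor, taylor_coeff, ← nsmul_eq_mul, ← eval_smul, chebTDerivOne,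
    ← factorial_smul_hasseDeriv]
  rfl

theorem nodePart_chebyshevSum (hn : n ≠ 0) (hi : i ∈ nodeIndices n k) (hj : j ∈ nodeIndices n k) :
    nodePart k (cos (nodeAngle n k i)) (cos (nodeAngle n k j)) (chebyshevSum n) =
      2 * (-1) ^ (i + j) := by
  have hsub : n * (nodeAngle n k i - nodeAngle n k j) = i * π - j * π := by
    rw [mul_sub, natCast_mul_nodeAngle hn, natCast_mul_nodeAngle hn]
    ring
  have hadd : n * (nodeAngle n k i + nodeAngle n k j) = (i + j + k % 2 : ℕ) * π := by
    rw [mul_add, natCast_mul_nodeAngle hn, natCast_mul_nodeAngle hn]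
    push_cast
    ring
  rw [nodePart, sqrt_one_sub_cos_sq_mul (nodeAngle_mem_Icc hn hi) (nodeAngle_mem_Icc hn hj),
    parityPart_apply, eval_chebyshevSum, eval_chebyshevSum, ← Real.cos_sub, ← sub_eq_add_neg,
    ← Real.cos_add, Chebyshev.T_real_cos, Chebyshev.T_real_cos, Int.cast_natCast, hsub, hadd]
  have hparity : (-1 : ℝ) ^ k * (-1) ^ (k % 2) = 1 := by
    rw [← pow_add, Even.neg_one_pow (by grind)]
  rw [Real.cos_sub, Real.sin_nat_mul_pi, Real.cos_nat_mul_pi, Real.cos_nat_mul_pi,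
    Real.cos_nat_mul_pi, pow_add, pow_add]
  linear_combination (-1) ^ i * (-1) ^ j * hparity

theorem nodalWeight_chebyshevNodes_mul_nodePart_nonneg (hn : n ≠ 0) :
    ∀ z ∈ chebyshevNodes n k, ∀ z' ∈ chebyshevNodes n k,
      0 ≤ Lagrange.nodalWeight (chebyshevNodes n k) id z *
        Lagrange.nodalWeight (chebyshevNodes n k) id z' * nodePart k z z' (chebyshevSum n) := by
  refine Finset.forall_mem_image.2 fun i hi => Finset.forall_mem_image.2 fun j hj => ?_
  have hanti := strictAntiOn_cos_nodeAngle (k := k) hn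
  rw [nodePart_chebyshevSum hn hi hj, chebyshevNodes, nodalWeight_image hanti.injOn hi,
    nodalWeight_image hanti.injOn hj, pow_add]
  calc (0 : ℝ)
      ≤ 2 * (((-1) ^ i * Lagrange.nodalWeight (nodeIndices n k) _ i) *
          ((-1) ^ j * Lagrange.nodalWeight (nodeIndices n k) _ j)) :=
        mul_nonneg zero_le_two (mul_nonneg (neg_one_pow_mul_nodalWeight_pos hanti hi).le
          (neg_one_pow_mul_nodalWeight_pos hanti hj).le)
    _ = _ := by ring

theorem abs_coeffAtOne_le_coeffAtOne_chebyshevSum {F : MvPolynomial (Fin 2) ℝ}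
    (hdeg : F.totalDegree ≤ n)
    (hF : ∀ t u : ℝ, |t| + |u| ≤ 1 → |MvPolynomial.eval ![t, u] F| ≤ 1) :
    |coeffAtOne k F| ≤ coeffAtOne k (chebyshevSum n) := by
  rcases eq_or_ne n 0 with rfl | hn
  · obtain ⟨a, rfl⟩ : ∃ a, F = MvPolynomial.C a :=
      ⟨_, MvPolynomial.totalDegree_eq_zero_iff_eq_C.1 (Nat.le_zero.1 hdeg)⟩
    have ha : |a| ≤ 1 := by simpa using hF 0 0
    rcases eq_or_ne k 0 with rfl | hk
    · simpa [coeffAtOne_apply, chebyshevSum] using ha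
    · simp [coeffAtOne_apply, chebyshevSum, coeff_C, coeff_one, hk]
  · have hcard : n < (chebyshevNodes n k).card + k % 2 := by
      rw [card_chebyshevNodes hn]
      omega
    refine abs_coeffAtOne_le_of_forall_nodePart (neg_mem_chebyshevNodes hn)
      abs_le_one_of_mem_chebyshevNodes (abs_lt_one_of_mem_chebyshevNodes hn)
      (hdeg.trans_lt hcard) ((totalDegree_chebyshevSum_le n).trans_lt hcard) ?_
      (nodalWeight_chebyshevNodes_mul_nodePart_nonneg hn)
    refine Finset.forall_mem_image.2 fun i hi => Finset.forall_mem_image.2 fun j hj => ?_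
    rw [nodePart_chebyshevSum hn hi hj, abs_mul, abs_neg_one_pow, abs_two, mul_one]
    exact abs_nodePart_le_two hF (Real.abs_cos_le_one _) (Real.abs_cos_le_one _)

end Chebyshev

section Derivative

theorem iteratedDeriv_eval {𝕜 : Type*} [NontriviallyNormedField 𝕜] (p : 𝕜[X]) (k : ℕ) :
    iteratedDeriv k (fun r => p.eval r) = fun r => (derivative^[k] p).eval r := by
  induction k with
  | zero => exact iteratedDeriv_zero
  | succ k ih =>
    rw [iteratedDeriv_succ, ih, Function.iterate_succ_apply']
    exact funext fun _ => Polynomial.deriv _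

theorem iteratedDeriv_eval_zero {𝕜 : Type*} [NontriviallyNormedField 𝕜] (p : 𝕜[X]) (k : ℕ) :
    iteratedDeriv k (fun r => p.eval r) 0 = k.factorial * p.coeff k := by
  rw [iteratedDeriv_eval]
  simp [← coeff_zero_eq_eval_zero, coeff_iterate_derivative, Nat.descFactorial_self]

theorem iteratedFDeriv_apply_eq_iteratedDeriv {𝕜 E F : Type*} [NontriviallyNormedField 𝕜]
    [NormedAddCommGroup E] [NormedSpace 𝕜 E] [NormedAddCommGroup F] [NormedSpace 𝕜 F] {k : ℕ}
    {f : E → F} (hf : ContDiff 𝕜 k f) (x y : E) :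
    iteratedFDeriv 𝕜 k f x (fun _ => y) = iteratedDeriv k (fun r : 𝕜 => f (x + r • y)) 0 := by
  have hcomp : (fun r : 𝕜 => f (x + r • y)) =
      (fun z => f (x + z)) ∘ ContinuousLinearMap.toSpanSingleton 𝕜 y :=
    funext fun _ => rfl
  have hshift : ContDiff 𝕜 k fun z => f (x + z) := hf.comp (contDiff_const.add contDiff_id)
  rw [iteratedDeriv_eq_iteratedFDeriv, hcomp,
    ContinuousLinearMap.iteratedFDeriv_comp_right _ hshift _ le_rfl, iteratedFDeriv_comp_add_left]
  simp

end Derivative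

section Multilinear

theorem exists_isHomogeneous_eval_eq_apply_sum_smul {R M σ : Type*} [CommSemiring R]
    [AddCommMonoid M] [Module R M] [Fintype σ] {m : ℕ}
    (L : MultilinearMap R (fun _ : Fin m => M) R) (v : σ → M) :
    ∃ F : MvPolynomial σ R, F.IsHomogeneous m ∧
      ∀ t, MvPolynomial.eval t F = L fun _ => ∑ i, t i • v i := by
  classical
  refine ⟨∑ r : Fin m → σ, MvPolynomial.C (L fun j => v (r j)) * ∏ j, MvPolynomial.X (r j),
    MvPolynomial.IsHomogeneous.sum _ _ _ fun r _ => ?_, fun t => ?_⟩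
  · simpa using MvPolynomial.IsHomogeneous.prod Finset.univ (fun j => MvPolynomial.X (r j))
      (fun _ => 1) (fun j _ => MvPolynomial.isHomogeneous_X R (r j)) |>.C_mul
        (L fun j => v (r j))
  · rw [L.map_sum]
    simp [L.map_smul_univ, mul_comm]

variable {X : Type*} [NormedAddCommGroup X] [NormedSpace ℝ X] {n : ℕ}
  (L : (j : Fin (n + 1)) → ContinuousMultilinearMap ℝ (fun _ : Fin (j : ℕ) => X) ℝ)

theorem exists_totalDegree_le_eval_eq_sum (x y : X) :
    ∃ F : MvPolynomial (Fin 2) ℝ, F.totalDegree ≤ n ∧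
      ∀ t u, MvPolynomial.eval ![t, u] F = ∑ j, L j fun _ => t • x + u • y := by
  choose F hF hF_eval using fun j =>
    exists_isHomogeneous_eval_eq_apply_sum_smul (L j).toMultilinearMap ![x, y]
  refine ⟨∑ j, F j, MvPolynomial.totalDegree_finsetSum_le fun j _ =>
    (hF j).totalDegree_le.trans (Nat.lt_succ_iff.1 j.2), fun t u => ?_⟩
  simp [hF_eval]

theorem contDiff_sum_apply_diagonal (k : ℕ) : ContDiff ℝ k fun x => ∑ j, L j fun _ => x :=
  ContDiff.sum fun j _ => (L j).contDiff.comp (contDiff_pi.2 fun _ => contDiff_id)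

theorem norm_iteratedFDeriv_sum_apply_diagonal_le {k : ℕ}
    (hL : ∀ x, ‖x‖ ≤ 1 → |∑ j, L j fun _ => x| ≤ 1) {x y : X} (hx : ‖x‖ ≤ 1) (hy : ‖y‖ ≤ 1) :
    ‖iteratedFDeriv ℝ k (fun x => ∑ j, L j fun _ => x) x fun _ => y‖ ≤ chebTDerivOne n k := by
  obtain ⟨F, hF_deg, hF_eval⟩ := exists_totalDegree_le_eval_eq_sum L x y
  have hF_le (t u : ℝ) (htu : |t| + |u| ≤ 1) : |MvPolynomial.eval ![t, u] F| ≤ 1 := by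
    rw [hF_eval]
    refine hL _ ?_
    calc ‖t • x + u • y‖ ≤ |t| * ‖x‖ + |u| * ‖y‖ := by
          simpa only [norm_smul, Real.norm_eq_abs] using norm_add_le (t • x) (u • y)
      _ ≤ |t| * 1 + |u| * 1 := by gcongr
      _ ≤ 1 := by rwa [mul_one, mul_one]
  have hline : (fun r : ℝ => ∑ j, L j fun _ => x + r • y) =
      fun r => (MvPolynomial.aeval ![1, (Polynomial.X : ℝ[X])] F).eval r := by
    funext r
    rw [eval_aeval_one_X, hF_eval, one_smul]
  rw [iteratedFDeriv_apply_eq_iteratedDeriv (contDiff_sum_apply_diagonal L k), hline,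
    iteratedDeriv_eval_zero, ← coeffAtOne_apply, ← factorial_mul_coeffAtOne_chebyshevSum,
    Real.norm_eq_abs, abs_mul, Nat.abs_cast]
  gcongr
  exact abs_coeffAtOne_le_coeffAtOne_chebyshevSum hF_deg hF_le

end Multilinear

theorem chebTDerivOne_eq_prod_div_prod (n k : ℕ) :
    chebTDerivOne n k = (∏ i ∈ Finset.range k, ((n : ℝ) ^ 2 - (i : ℝ) ^ 2)) /
      ∏ i ∈ Finset.range k, (2 * (i : ℝ) + 1) := by
  rw [chebTDerivOne, Chebyshev.iterate_derivative_T_eval_one_eq_div]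
  push_cast
  rfl

end MarkovBanach

theorem markov_banach_general
    {X : Type*} [NormedAddCommGroup X] [NormedSpace ℝ X] (n k : ℕ) (P : X → ℝ)
    (hP : ∃ L : (j : Fin (n + 1)) → ContinuousMultilinearMap ℝ (fun _ : Fin (j : ℕ) => X) ℝ,
      ∀ x, P x = ∑ j, L j (fun _ => x))
    (hPnorm : ∀ x : X, ‖x‖ ≤ 1 → |P x| ≤ 1)
    (x : X) (hx : ‖x‖ ≤ 1) :
    sSup ((fun y => ‖iteratedFDeriv ℝ k P x (fun _ => y)‖) '' closedBall (0 : X) 1)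
        ≤ chebTDerivOne n k ∧
      chebTDerivOne n k
        = (∏ i ∈ Finset.range k, ((n : ℝ) ^ 2 - (i : ℝ) ^ 2)) /
            (∏ i ∈ Finset.range k, (2 * (i : ℝ) + 1)) := by
  obtain ⟨L, hL⟩ := hP
  obtain rfl : P = fun x => ∑ j, L j fun _ => x := funext hL
  refine ⟨csSup_le ((nonempty_closedBall.2 zero_le_one).image _) ?_,
    MarkovBanach.chebTDerivOne_eq_prod_div_prod n k⟩
  rintro _ ⟨y, hy, rfl⟩
  exact MarkovBanach.norm_iteratedFDeriv_sum_apply_diagonal_le L hPnorm hx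
    (mem_closedBall_zero_iff.1 hy)

/-- V. A. Markov's theorem on a real Banach space: if `P` is a continuous polynomial of
degree at most `n` with `‖P‖ ≤ 1` and `1 ≤ k ≤ n`, then for every `‖x‖ ≤ 1`,
`‖D̂^k P(x)‖ ≤ T_n^{(k)}(1) = n²(n²-1²)⋯(n²-(k-1)²)/(1·3⋯(2k-1))`. -/
theorem markov_banach
    {X : Type*} [NormedAddCommGroup X] [NormedSpace ℝ X] [CompleteSpace X]
    (n k : ℕ) (hk1 : 1 ≤ k) (hkn : k ≤ n) (P : X → ℝ)
    (hP : ∃ L : (j : Fin (n + 1)) → ContinuousMultilinearMap ℝ (fun _ : Fin (j : ℕ) => X) ℝ,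
      ∀ x, P x = ∑ j, L j (fun _ => x))
    (hPnorm : ∀ x : X, ‖x‖ ≤ 1 → |P x| ≤ 1)
    (x : X) (hx : ‖x‖ ≤ 1) :
    sSup ((fun y => ‖iteratedFDeriv ℝ k P x (fun _ => y)‖) '' closedBall (0 : X) 1)
        ≤ chebTDerivOne n k ∧
      chebTDerivOne n k
        = (∏ i ∈ Finset.range k, ((n : ℝ) ^ 2 - (i : ℝ) ^ 2)) /
            (∏ i ∈ Finset.range k, (2 * (i : ℝ) + 1)) :=
  markov_banach_general n k P hP hPnorm x hx
end

section
/- Let X be a real Banach space, let P be a continuous polynomial of degree at most n on X with ‖P‖ ≤ 1, and let x ∈ X with ‖x‖ < 1. Then the first Fréchet derivative of P satisfies ‖DP(x)‖ ≤ min{ n·√(1−P(x)²)/√(1−‖x‖²), n² }. -/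
open Metric

/-!
Weighting the values of a complex polynomial `q` of degree at most `N` at `z u ζʲ`, with `ζ` a
primitive `N`-th root of unity and `uᴺ = ω`, by the Fejér kernel gives
`N (N q(z) + (ω - 1) z q'(z))`. The weights are nonnegative with total mass `N²`, so
`|N q(z) + (ω - 1) z q'(z)| ≤ N max |q|` on the unit circle. For `q(eⁱᵗ) = eⁱⁿᵗ f(t)` with `f` a
real trigonometric polynomial of degree at most `n`, `N = 2n` and `ω = e²ⁱᵅ`, this says
`|n f cos α + f' sin α| ≤ n max |f|`, and the best `α` gives the Bernstein–Szegő inequality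
`n² f² + f'² ≤ n² max f²`.

When `‖x‖² + ‖z‖² ≤ 1`, the ellipse `cos t • x + sin t • z` stays in the unit ball and `P` restricts
to a trigonometric polynomial on it. At `t = 0` Bernstein–Szegő bounds `DP(x) z`, and
`z = √(1 - ‖x‖²) • y` gives the first bound. In particular `|DP(cos t • x)(sin t • y)| ≤ n` for all
`t`; this too is a trigonometric polynomial of degree at most `n` in `t`, and its derivative at
`t = 0` is `DP(x) y`, so a second application of the inequality gives `n²`.
-/

section TrigonometricPolynomials

open Finset Polynomial

lemma sum_mul_pow_zpow {K : Type*} [Field K] {N : ℕ} {ζ : K} (hζ : IsPrimitiveRoot ζ N) (u : K)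
    (r : ℤ) :
    ∑ j ∈ range N, (u * ζ ^ j) ^ r = if (N : ℤ) ∣ r then N * u ^ r else 0 := by
  have hterm (j : ℕ) : (u * ζ ^ j) ^ r = u ^ r * (ζ ^ r) ^ j := by
    rw [mul_zpow, ← zpow_natCast ζ, ← zpow_natCast (ζ ^ r), zpow_comm]
  simp only [hterm, ← mul_sum]
  split_ifs with h
  · rw [(hζ.zpow_eq_one_iff_dvd r).mpr h]
    simp [mul_comm]
  · have hne : ζ ^ r ≠ 1 := mt (hζ.zpow_eq_one_iff_dvd r).mp h
    have hpow : (ζ ^ r) ^ N = 1 := by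
      rw [← zpow_natCast, zpow_comm, zpow_natCast, hζ.pow_eq_one, one_zpow]
    rw [geom_sum_eq hne, hpow, sub_self, zero_div, mul_zero]

lemma sum_sum_mul_pow_zpow_sub {K : Type*} [Field K] {N : ℕ} {ζ : K} (hζ : IsPrimitiveRoot ζ N)
    (u : K) (k : ℕ) :
    ∑ j ∈ range N, ∑ b ∈ range N, (u * ζ ^ j) ^ ((k : ℤ) - b) = N * (u ^ N) ^ (k / N) := by
  obtain rfl | hN := N.eq_zero_or_pos
  · simp
  have hdvd {b : ℕ} (hb : b < N) : (N : ℤ) ∣ k - b ↔ b = k % N := by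
    rw [← Nat.modEq_iff_dvd, Nat.ModEq, Nat.mod_eq_of_lt hb]
  have hexp : (k : ℤ) - (k % N : ℕ) = (N * (k / N) : ℕ) := by
    have := Nat.mod_add_div k N
    omega
  rw [sum_comm]
  calc ∑ b ∈ range N, ∑ j ∈ range N, (u * ζ ^ j) ^ ((k : ℤ) - b)
      = ∑ b ∈ range N, if b = k % N then N * u ^ ((k : ℤ) - b) else 0 :=
        sum_congr rfl fun b hb => by
          simp only [sum_mul_pow_zpow hζ, hdvd (mem_range.mp hb)]
    _ = N * (u ^ N) ^ (k / N) := by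
        rw [sum_ite_eq', if_pos (mem_range.mpr (Nat.mod_lt k hN)), hexp, zpow_natCast, pow_mul]

lemma sum_pow_add_div {R : Type*} [CommRing R] {N p : ℕ} (hp : p ≤ N) (c : R) :
    ∑ a ∈ range N, c ^ ((a + p) / N) = (N - p) + p * c := by
  obtain ⟨m, rfl⟩ := Nat.exists_eq_add_of_le' hp
  have hlow : ∀ a ∈ range m, c ^ ((a + p) / (m + p)) = 1 := fun a ha => by
    rw [Nat.div_eq_of_lt (by simpa using ha), pow_zero]
  have hhigh : ∀ a ∈ range p, c ^ ((m + a + p) / (m + p)) = c := fun a ha => by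
    have ha := mem_range.mp ha
    rw [Nat.div_eq_of_lt_le (k := 1) (by omega) (by omega), pow_one]
  rw [sum_range_add, sum_congr rfl hlow, sum_congr rfl hhigh]
  simp

/-- The values on the unit circle of the Fejér kernel of order `N`, normalised to be
`|1 + z + ⋯ + z ^ (N - 1)|²`. They are the nonnegative weights of the interpolation formula
`sum_fejerWeight_mul_eval`. -/
noncomputable def fejerWeight (N : ℕ) (z : ℂ) : ℝ := ‖∑ a ∈ range N, z ^ a‖ ^ 2

lemma fejerWeight_nonneg (N : ℕ) (z : ℂ) : 0 ≤ fejerWeight N z := sq_nonneg _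

lemma ofReal_fejerWeight {z : ℂ} (hz : ‖z‖ = 1) (N : ℕ) :
    (fejerWeight N z : ℂ) = ∑ a ∈ range N, ∑ b ∈ range N, z ^ ((a : ℤ) - b) := by
  have hz0 : z ≠ 0 := ne_zero_of_norm_ne_zero (hz.trans_ne one_ne_zero)
  rw [fejerWeight, Complex.ofReal_pow, ← Complex.mul_conj', map_sum, sum_mul_sum]
  refine sum_congr rfl fun a _ => sum_congr rfl fun b _ => ?_
  rw [map_pow, ← Complex.inv_eq_conj hz, zpow_sub₀ hz0, zpow_natCast, zpow_natCast, inv_pow,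
    div_eq_mul_inv]

section Interpolation

variable {N : ℕ} {ζ u : ℂ}

lemma norm_mul_pow_of_isPrimitiveRoot (hζ : IsPrimitiveRoot ζ N) (hN : N ≠ 0) (hu : ‖u‖ = 1)
    (j : ℕ) : ‖u * ζ ^ j‖ = 1 := by
  rw [norm_mul, norm_pow, hζ.norm'_eq_one hN, one_pow, hu, one_mul]

lemma sum_fejerWeight_mul_pow (hζ : IsPrimitiveRoot ζ N) (hu : ‖u‖ = 1) {p : ℕ} (hp : p ≤ N) :
    ∑ j ∈ range N, (fejerWeight N (u * ζ ^ j) : ℂ) * (u * ζ ^ j) ^ p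
      = N * ((N - p) + p * u ^ N) := by
  obtain rfl | hN := eq_or_ne N 0
  · simp
  have hterm (j : ℕ) : (fejerWeight N (u * ζ ^ j) : ℂ) * (u * ζ ^ j) ^ p
      = ∑ a ∈ range N, ∑ b ∈ range N, (u * ζ ^ j) ^ (((a + p : ℕ) : ℤ) - b) := by
    have hv := norm_mul_pow_of_isPrimitiveRoot hζ hN hu j
    have hv0 : u * ζ ^ j ≠ 0 := ne_zero_of_norm_ne_zero (hv.trans_ne one_ne_zero)
    simp only [ofReal_fejerWeight hv, sum_mul]
    refine sum_congr rfl fun a _ => sum_congr rfl fun b _ => ?_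
    rw [← zpow_natCast _ p, ← zpow_add₀ hv0]
    push_cast
    ring_nf
  simp only [hterm]
  rw [sum_comm]
  simp only [sum_sum_mul_pow_zpow_sub hζ, ← mul_sum, sum_pow_add_div hp]

lemma sum_fejerWeight (hζ : IsPrimitiveRoot ζ N) (hu : ‖u‖ = 1) :
    ∑ j ∈ range N, fejerWeight N (u * ζ ^ j) = N * N := by
  have h := sum_fejerWeight_mul_pow hζ hu N.zero_le
  simp only [pow_zero, mul_one, Nat.cast_zero, sub_zero, zero_mul, add_zero] at h
  exact_mod_cast h

lemma sum_fejerWeight_mul_eval (hζ : IsPrimitiveRoot ζ N) (hu : ‖u‖ = 1) {q : ℂ[X]}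
    (hq : q.natDegree ≤ N) (z : ℂ) :
    ∑ j ∈ range N, (fejerWeight N (u * ζ ^ j) : ℂ) * q.eval (z * (u * ζ ^ j))
      = N * (N * q.eval z + (u ^ N - 1) * (z * q.derivative.eval z)) := by
  refine induction_with_natDegree_le
    (fun q => ∑ j ∈ range N, (fejerWeight N (u * ζ ^ j) : ℂ) * q.eval (z * (u * ζ ^ j))
      = N * (N * q.eval z + (u ^ N - 1) * (z * q.derivative.eval z)))
    N (by simp) (fun p c _ hp => ?_) (fun f g _ _ hf hg => ?_) q hq
  · have hderiv : z * (C c * X ^ p).derivative.eval z = p * (c * z ^ p) := by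
      cases p with
      | zero => simp
      | succ p => simp [derivative_X_pow_succ]; ring
    calc ∑ j ∈ range N, (fejerWeight N (u * ζ ^ j) : ℂ) * (C c * X ^ p).eval (z * (u * ζ ^ j))
        = c * z ^ p * ∑ j ∈ range N, (fejerWeight N (u * ζ ^ j) : ℂ) * (u * ζ ^ j) ^ p := by
          rw [mul_sum]
          refine sum_congr rfl fun j _ => ?_
          simp only [eval_mul, eval_C, eval_pow, eval_X]
          ring
      _ = _ := by
          rw [sum_fejerWeight_mul_pow hζ hu hp, hderiv]
          simp only [eval_mul, eval_C, eval_pow, eval_X]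
          ring
  · simp only [eval_add, derivative_add, mul_add, sum_add_distrib, hf, hg]
    ring

end Interpolation

theorem norm_mul_eval_add_mul_eval_derivative_le {N : ℕ} {q : ℂ[X]} (hq : q.natDegree ≤ N) {M : ℝ}
    (hM : ∀ z : ℂ, ‖z‖ = 1 → ‖q.eval z‖ ≤ M) {z ω : ℂ} (hz : ‖z‖ = 1) (hω : ‖ω‖ = 1) :
    ‖N * q.eval z + (ω - 1) * (z * q.derivative.eval z)‖ ≤ N * M := by
  obtain rfl | hN := eq_or_ne N 0
  · simp [derivative_of_natDegree_zero (Nat.le_zero.mp hq)]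
  have hN' : (0 : ℝ) < N := by positivity
  obtain ⟨u, rfl⟩ := IsAlgClosed.exists_pow_nat_eq ω hN.bot_lt
  have hu : ‖u‖ = 1 := by rwa [norm_pow, pow_eq_one_iff_of_nonneg (norm_nonneg u) hN] at hω
  have hζ := Complex.isPrimitiveRoot_exp N hN
  refine le_of_mul_le_mul_left ?_ hN'
  rw [← Complex.norm_natCast N, ← norm_mul, Complex.norm_natCast,
    ← sum_fejerWeight_mul_eval hζ hu hq z, ← mul_assoc, ← sum_fejerWeight hζ hu, sum_mul]
  refine norm_sum_le_of_le _ fun j _ => ?_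
  rw [norm_mul, Complex.norm_of_nonneg (fejerWeight_nonneg _ _)]
  refine mul_le_mul_of_nonneg_left (hM _ ?_) (fejerWeight_nonneg _ _)
  rw [norm_mul, hz, norm_mul_pow_of_isPrimitiveRoot hζ hN hu, one_mul]

lemma two_mul_exp_mul_cos (t : ℂ) :
    2 * Complex.exp (t * Complex.I) * Complex.cos t = Complex.exp (t * Complex.I) ^ 2 + 1 := by
  rw [Complex.exp_mul_I]
  linear_combination Complex.sin_sq_add_cos_sq t - Complex.sin t ^ 2 * Complex.I_sq

lemma two_mul_exp_mul_sin (t : ℂ) :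
    2 * Complex.exp (t * Complex.I) * Complex.sin t
      = Complex.I * (1 - Complex.exp (t * Complex.I) ^ 2) := by
  rw [Complex.exp_mul_I]
  linear_combination Complex.I * Complex.sin_sq_add_cos_sq t +
    (2 * Complex.cos t + Complex.sin t * Complex.I) * Complex.sin t * Complex.I_sq

/-- The real trigonometric polynomials `f` of degree at most `n`. They are encoded by
`f t = e⁻ⁱⁿᵗ q(eⁱᵗ)` with `q` a complex polynomial of degree at most `2 * n`, to which
`norm_mul_eval_add_mul_eval_derivative_le` applies. -/
def trigPolynomial (n : ℕ) : Submodule ℝ (ℝ → ℝ) where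
  carrier := {f | ∃ q : ℂ[X], q.natDegree ≤ 2 * n ∧
    ∀ t : ℝ, Complex.exp (t * Complex.I) ^ n * f t = q.eval (Complex.exp (t * Complex.I))}
  zero_mem' := ⟨0, by simp, by simp⟩
  add_mem' := by
    rintro f g ⟨p, hp, hfp⟩ ⟨q, hq, hgq⟩
    refine ⟨p + q, natDegree_add_le_of_degree_le hp hq, fun t => ?_⟩
    simp only [Pi.add_apply, Complex.ofReal_add, mul_add, eval_add, hfp, hgq]
  smul_mem' := by
    rintro c f ⟨q, hq, hfq⟩
    refine ⟨C (c : ℂ) * q, (natDegree_C_mul_le _ q).trans hq, fun t => ?_⟩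
    simp only [Pi.smul_apply, smul_eq_mul, Complex.ofReal_mul, mul_left_comm, eval_mul, eval_C, hfq]

namespace trigPolynomial

lemma one_mem (n : ℕ) : 1 ∈ trigPolynomial n :=
  ⟨X ^ n, by rw [natDegree_X_pow]; omega, by simp⟩

lemma mul_mem {m n : ℕ} {f g : ℝ → ℝ} (hf : f ∈ trigPolynomial m) (hg : g ∈ trigPolynomial n) :
    f * g ∈ trigPolynomial (m + n) := by
  obtain ⟨p, hp, hfp⟩ := hf
  obtain ⟨q, hq, hgq⟩ := hg
  refine ⟨p * q, (natDegree_mul_le_of_le hp hq).trans_eq (by ring), fun t => ?_⟩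
  rw [eval_mul, ← hfp, ← hgq, Pi.mul_apply, Complex.ofReal_mul]
  ring

lemma mono {m n : ℕ} (h : m ≤ n) : trigPolynomial m ≤ trigPolynomial n := fun f hf => by
  simpa [Nat.sub_add_cancel h] using mul_mem (one_mem (n - m)) hf

lemma prod_mem {ι : Type*} (s : Finset ι) {d : ι → ℕ} {f : ι → ℝ → ℝ}
    (hf : ∀ i ∈ s, f i ∈ trigPolynomial (d i)) :
    ∏ i ∈ s, f i ∈ trigPolynomial (∑ i ∈ s, d i) := by
  classical
  induction s using Finset.induction_on with
  | empty => exact one_mem _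
  | insert i s hi ih =>
    rw [prod_insert hi, sum_insert hi]
    exact mul_mem (hf i (mem_insert_self i s)) (ih fun k hk => hf k (mem_insert_of_mem hk))

lemma cos_mem : Real.cos ∈ trigPolynomial 1 := by
  refine ⟨C (1 / 2) * (X ^ 2 + 1), by compute_degree, fun t => ?_⟩
  simp only [Complex.ofReal_cos, eval_mul, eval_C, eval_add, eval_pow, eval_X, eval_one]
  linear_combination (1 / 2) * two_mul_exp_mul_cos t

lemma sin_mem : Real.sin ∈ trigPolynomial 1 := by
  refine ⟨C (Complex.I / 2) * (1 - X ^ 2), by compute_degree, fun t => ?_⟩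
  simp only [Complex.ofReal_sin, eval_mul, eval_C, eval_sub, eval_pow, eval_X, eval_one]
  linear_combination (1 / 2) * two_mul_exp_mul_sin t

lemma multilinearMap_apply_cos_smul_add_sin_smul_mem {ι : Type*} [Fintype ι] {E : ι → Type*}
    [∀ i, AddCommMonoid (E i)] [∀ i, Module ℝ (E i)] (L : MultilinearMap ℝ E ℝ) (a b : ∀ i, E i) :
    (fun t => L fun i => Real.cos t • a i + Real.sin t • b i)
      ∈ trigPolynomial (Fintype.card ι) := by
  classical
  have hexpand : (fun t => L fun i => Real.cos t • a i + Real.sin t • b i)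
      = ∑ s : Finset ι, L (s.piecewise a b) • ∏ i, if i ∈ s then Real.cos else Real.sin := by
    funext t
    have hpiecewise (s : Finset ι) :
        s.piecewise (fun i => Real.cos t • a i) (fun i => Real.sin t • b i)
          = fun i => (if i ∈ s then Real.cos else Real.sin) t • s.piecewise a b i := by
      funext i
      by_cases hi : i ∈ s <;> simp [hi]
    rw [← Pi.add_def, L.map_add_univ]
    simp only [hpiecewise, L.map_smul_univ, Finset.sum_apply, Pi.smul_apply, Finset.prod_apply,
      smul_eq_mul, mul_comm]
  rw [hexpand]
  refine Submodule.sum_mem _ fun s _ => Submodule.smul_mem _ _ ?_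
  have hprod := prod_mem (d := fun _ => 1) (f := fun i => if i ∈ s then Real.cos else Real.sin)
    univ fun i _ => by split_ifs; exacts [cos_mem, sin_mem]
  simpa using hprod

lemma exp_mul_eval_derivative {n : ℕ} {f : ℝ → ℝ} {q : ℂ[X]}
    (hfq : ∀ t : ℝ, Complex.exp (t * Complex.I) ^ n * f t = q.eval (Complex.exp (t * Complex.I)))
    {t d : ℝ} (hd : HasDerivAt f d t) :
    Complex.exp (t * Complex.I) * q.derivative.eval (Complex.exp (t * Complex.I))
      = Complex.exp (t * Complex.I) ^ n * (n * f t - Complex.I * d) := by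
  set z := Complex.exp (t * Complex.I) with hz
  have hexp : HasDerivAt (fun s : ℝ => Complex.exp (s * Complex.I)) (z * Complex.I) t := by
    simpa using (((hasDerivAt_id t).ofReal_comp).mul_const Complex.I).cexp
  have hleft := (hexp.fun_pow n).fun_mul hd.ofReal_comp
  have hright := (q.hasDerivAt z).comp t hexp
  have heq := (hleft.congr_of_eventuallyEq (.of_forall fun s => (hfq s).symm)).unique hright
  have hpow : (n : ℂ) * z ^ (n - 1) * z = n * z ^ n := by
    cases n <;> simp [pow_succ, mul_assoc]
  rw [← hz] at heq
  linear_combination Complex.I * heq + f t * hpow +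
    (z * q.derivative.eval z - n * z ^ (n - 1) * z * f t) * Complex.I_sq

theorem abs_mul_cos_add_mul_sin_le {n : ℕ} {f : ℝ → ℝ} (hf : f ∈ trigPolynomial n) {M : ℝ}
    (hM : ∀ t, |f t| ≤ M) {t d : ℝ} (hd : HasDerivAt f d t) (α : ℝ) :
    |n * f t * Real.cos α + d * Real.sin α| ≤ n * M := by
  obtain ⟨q, hq, hfq⟩ := hf
  have hqM (z : ℂ) (hz : ‖z‖ = 1) : ‖q.eval z‖ ≤ M := by
    obtain ⟨s, rfl⟩ := (Complex.norm_eq_one_iff z).mp hz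
    rw [← hfq, norm_mul, norm_pow, hz, one_pow, one_mul, Complex.norm_real]
    exact hM s
  set z := Complex.exp (t * Complex.I)
  set e := Complex.exp (α * Complex.I)
  have hz : ‖z‖ = 1 := Complex.norm_exp_ofReal_mul_I t
  have he1 : ‖e‖ = 1 := Complex.norm_exp_ofReal_mul_I α
  have hfactor : ((2 * n : ℕ) : ℂ) * q.eval z + (e ^ 2 - 1) * (z * q.derivative.eval z)
      = z ^ n * (2 * e) * ((n * f t * Real.cos α + d * Real.sin α : ℝ) : ℂ) := by
    rw [exp_mul_eval_derivative hfq hd, ← hfq]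
    push_cast
    linear_combination -z ^ n * (n * f t * two_mul_exp_mul_cos α + d * two_mul_exp_mul_sin α)
  have h := norm_mul_eval_add_mul_eval_derivative_le hq hqM hz (ω := e ^ 2) (by simp [he1])
  rw [hfactor, norm_mul, norm_mul, norm_mul, norm_pow, hz, he1, Complex.norm_real,
    Real.norm_eq_abs, Complex.norm_two, one_pow, one_mul, mul_one] at h
  push_cast at h
  linarith

theorem sq_mul_add_sq_deriv_le {n : ℕ} {f : ℝ → ℝ} (hf : f ∈ trigPolynomial n) {M : ℝ}
    (hM : ∀ t, |f t| ≤ M) {t d : ℝ} (hd : HasDerivAt f d t) :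
    (n * f t) ^ 2 + d ^ 2 ≤ (n * M) ^ 2 := by
  set w : ℂ := ⟨n * f t, d⟩
  have hnorm : ‖w‖ ^ 2 = (n * f t) ^ 2 + d ^ 2 := by
    rw [Complex.sq_norm, Complex.normSq_apply, sq, sq]
  have hrot : n * f t * Real.cos w.arg + d * Real.sin w.arg = ‖w‖ := by
    have hre : ‖w‖ * Real.cos w.arg = n * f t := Complex.norm_mul_cos_arg w
    have him : ‖w‖ * Real.sin w.arg = d := Complex.norm_mul_sin_arg w
    rw [← hre, ← him]
    linear_combination ‖w‖ * Real.cos_sq_add_sin_sq w.arg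
  have h := abs_mul_cos_add_mul_sin_le hf hM hd w.arg
  rw [hrot, abs_norm] at h
  rw [← hnorm]
  gcongr

end trigPolynomial

end TrigonometricPolynomials

/-- The continuous polynomials of degree at most `n` on a real normed space. The form `L j` of the
homogeneous component of degree `j` need not be symmetric. -/
def IsContinuousPolynomialOfDegreeLE {X : Type*} [NormedAddCommGroup X] [NormedSpace ℝ X] (n : ℕ)
    (P : X → ℝ) : Prop :=
  ∃ L : (j : Fin (n + 1)) → ContinuousMultilinearMap ℝ (fun _ : Fin (j : ℕ) => X) ℝ,
    ∀ x, P x = ∑ j, L j (fun _ => x)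

lemma norm_cos_smul_add_sin_smul_le {E : Type*} [SeminormedAddCommGroup E] [NormedSpace ℝ E]
    (x z : E) (t : ℝ) :
    ‖Real.cos t • x + Real.sin t • z‖ ≤ √(‖x‖ ^ 2 + ‖z‖ ^ 2) := by
  calc ‖Real.cos t • x + Real.sin t • z‖ ≤ |Real.cos t| * ‖x‖ + |Real.sin t| * ‖z‖ := by
        simpa only [norm_smul, Real.norm_eq_abs] using
          norm_add_le (Real.cos t • x) (Real.sin t • z)
    _ ≤ √(‖x‖ ^ 2 + ‖z‖ ^ 2) := by
        refine Real.le_sqrt_of_sq_le ?_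
        have hsq : |Real.cos t| ^ 2 + |Real.sin t| ^ 2 = 1 := by
          rw [sq_abs, sq_abs, Real.cos_sq_add_sin_sq]
        linear_combination sq_nonneg (|Real.cos t| * ‖z‖ - |Real.sin t| * ‖x‖) +
          (‖x‖ ^ 2 + ‖z‖ ^ 2) * hsq

namespace IsContinuousPolynomialOfDegreeLE

variable {X : Type*} [NormedAddCommGroup X] [NormedSpace ℝ X] {n : ℕ} {P : X → ℝ}

lemma contDiff (hP : IsContinuousPolynomialOfDegreeLE n P) {k : WithTop ℕ∞} : ContDiff ℝ k P := by
  obtain ⟨L, hL⟩ := hP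
  rw [funext hL]
  exact ContDiff.sum fun j _ => (L j).contDiff.comp (contDiff_pi.mpr fun _ => contDiff_id)

lemma comp_cos_smul_add_sin_smul_mem (hP : IsContinuousPolynomialOfDegreeLE n P) (x z : X) :
    (fun t => P (Real.cos t • x + Real.sin t • z)) ∈ trigPolynomial n := by
  obtain ⟨L, hL⟩ := hP
  simp only [hL, ← Finset.sum_fn]
  refine Submodule.sum_mem _ fun j _ => trigPolynomial.mono (Nat.lt_succ_iff.mp j.isLt) ?_
  simpa using trigPolynomial.multilinearMap_apply_cos_smul_add_sin_smul_mem
    (L j).toMultilinearMap (fun _ => x) fun _ => z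

lemma fderiv_cos_smul_sin_smul_mem (hP : IsContinuousPolynomialOfDegreeLE n P) (x y : X) :
    (fun t => fderiv ℝ P (Real.cos t • x) (Real.sin t • y)) ∈ trigPolynomial n := by
  obtain ⟨L, hL⟩ := hP
  have hderiv (a b : X) : fderiv ℝ P a b = ∑ j, ∑ i, L j (Function.update (fun _ => a) i b) := by
    have hsum : HasFDerivAt P (∑ j, ((L j).linearDeriv fun _ => a).comp
        (ContinuousLinearMap.pi fun _ => ContinuousLinearMap.id ℝ X)) a := by
      rw [funext hL]
      exact HasFDerivAt.fun_sum fun j _ => ((L j).hasFDerivAt fun _ => a).comp a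
        (ContinuousLinearMap.pi fun _ : Fin j => ContinuousLinearMap.id ℝ X).hasFDerivAt
    simp [hsum.fderiv]
  have hslot {m : ℕ} (i : Fin m) (t : ℝ) :
      Function.update (fun _ => Real.cos t • x) i (Real.sin t • y)
        = fun k => Real.cos t • Function.update (fun _ => x) i 0 k
          + Real.sin t • Pi.single (M := fun _ => X) i y k := by
    funext k
    obtain rfl | hk := eq_or_ne k i
    · simp
    · simp [hk]
  simp only [hderiv, hslot, ← Finset.sum_fn]
  refine Submodule.sum_mem _ fun j _ => Submodule.sum_mem _ fun i _ =>
    trigPolynomial.mono (Nat.lt_succ_iff.mp j.isLt) ?_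
  simpa using trigPolynomial.multilinearMap_apply_cos_smul_add_sin_smul_mem
    (L j).toMultilinearMap (Function.update (fun _ => x) i 0) (Pi.single i y)

theorem abs_fderiv_apply_le_mul_sqrt (hP : IsContinuousPolynomialOfDegreeLE n P)
    (hbound : ∀ x, ‖x‖ ≤ 1 → |P x| ≤ 1) {x z : X} (hxz : ‖x‖ ^ 2 + ‖z‖ ^ 2 ≤ 1) :
    |fderiv ℝ P x z| ≤ n * √(1 - P x ^ 2) := by
  have hellipse (t : ℝ) : |P (Real.cos t • x + Real.sin t • z)| ≤ 1 :=
    hbound _ ((norm_cos_smul_add_sin_smul_le x z t).trans (Real.sqrt_le_one.mpr hxz))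
  have hcurve : HasDerivAt (fun t => Real.cos t • x + Real.sin t • z) z 0 := by
    simpa using
      ((Real.hasDerivAt_cos 0).smul_const x).fun_add ((Real.hasDerivAt_sin 0).smul_const z)
  have hderiv : HasDerivAt (fun t => P (Real.cos t • x + Real.sin t • z)) (fderiv ℝ P x z) 0 :=
    HasFDerivAt.comp_hasDerivAt_of_eq 0
      (hP.contDiff.differentiable one_ne_zero x).hasFDerivAt hcurve (by simp)
  have hsq := trigPolynomial.sq_mul_add_sq_deriv_le (hP.comp_cos_smul_add_sin_smul_mem x z)
    hellipse hderiv
  simp only [Real.cos_zero, Real.sin_zero, one_smul, zero_smul, add_zero] at hsq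
  rw [← Real.sqrt_sq n.cast_nonneg, ← Real.sqrt_mul (sq_nonneg _)]
  exact Real.abs_le_sqrt (by linarith)

theorem abs_fderiv_apply_le_sq (hP : IsContinuousPolynomialOfDegreeLE n P)
    (hbound : ∀ x, ‖x‖ ≤ 1 → |P x| ≤ 1) {x y : X} (hx : ‖x‖ ≤ 1) (hy : ‖y‖ ≤ 1) :
    |fderiv ℝ P x y| ≤ n ^ 2 := by
  have hle (t : ℝ) : |fderiv ℝ P (Real.cos t • x) (Real.sin t • y)| ≤ n := by
    have hnorm : ‖Real.cos t • x‖ ^ 2 + ‖Real.sin t • y‖ ^ 2 ≤ 1 := by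
      rw [norm_smul, norm_smul, mul_pow, mul_pow, Real.norm_eq_abs, Real.norm_eq_abs, sq_abs,
        sq_abs, ← Real.cos_sq_add_sin_sq t]
      gcongr <;> exact mul_le_of_le_one_right (sq_nonneg _) (pow_le_one₀ (norm_nonneg _) ‹_›)
    refine (hP.abs_fderiv_apply_le_mul_sqrt hbound hnorm).trans
      (mul_le_of_le_one_right n.cast_nonneg (Real.sqrt_le_one.mpr ?_))
    linarith [sq_nonneg (P (Real.cos t • x))]
  have hcos : HasDerivAt (fun t => Real.cos t • x) 0 0 := by
    simpa using (Real.hasDerivAt_cos 0).smul_const x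
  have hsin : HasDerivAt (fun t => Real.sin t • y) y 0 := by
    simpa using (Real.hasDerivAt_sin 0).smul_const y
  have hfderiv := (hP.contDiff.fderiv_right (m := 1) le_rfl).differentiable one_ne_zero
  have hderiv : HasDerivAt (fun t => fderiv ℝ P (Real.cos t • x) (Real.sin t • y))
      (fderiv ℝ P x y) 0 := by
    simpa using (HasFDerivAt.comp_hasDerivAt 0 (hfderiv _).hasFDerivAt hcos).clm_apply hsin
  have hsq := trigPolynomial.sq_mul_add_sq_deriv_le (hP.fderiv_cos_smul_sin_smul_mem x y) hle hderiv
  refine abs_le_of_sq_le_sq ?_ (sq_nonneg _)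
  rw [sq (n : ℝ)]
  linarith [sq_nonneg (n * fderiv ℝ P (Real.cos 0 • x) (Real.sin 0 • y))]

end IsContinuousPolynomialOfDegreeLE

theorem bernstein_first_derivative_banach_general
    {X : Type*} [NormedAddCommGroup X] [NormedSpace ℝ X] {n : ℕ} {P : X → ℝ}
    (hP : IsContinuousPolynomialOfDegreeLE n P) (hPnorm : ∀ x : X, ‖x‖ ≤ 1 → |P x| ≤ 1)
    {x : X} (hx : ‖x‖ < 1) :
    ‖fderiv ℝ P x‖ ≤ min (n * √(1 - P x ^ 2) / √(1 - ‖x‖ ^ 2)) (n ^ 2) := by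
  have hpos : 0 < 1 - ‖x‖ ^ 2 := by
    linarith [pow_lt_one₀ (norm_nonneg x) hx two_ne_zero]
  refine ContinuousLinearMap.opNorm_le_of_unit_norm (by positivity) fun y hy => le_min ?_ ?_
  · have hz : ‖x‖ ^ 2 + ‖√(1 - ‖x‖ ^ 2) • y‖ ^ 2 ≤ 1 := by
      rw [norm_smul, hy, mul_one, Real.norm_eq_abs, sq_abs, Real.sq_sqrt hpos.le]
      linarith
    have hszego := hP.abs_fderiv_apply_le_mul_sqrt hPnorm hz
    rw [map_smul, smul_eq_mul, abs_mul, abs_of_nonneg (Real.sqrt_nonneg _), mul_comm] at hszego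
    exact (le_div_iff₀ (Real.sqrt_pos.mpr hpos)).mpr hszego
  · exact hP.abs_fderiv_apply_le_sq hPnorm hx.le hy.le

/-- Bernstein-type inequality for the first Fréchet derivative of a polynomial of degree
at most `n` on a real Banach space: if `‖P‖ ≤ 1` and `‖x‖ < 1`, then
`‖DP(x)‖ ≤ min (n √(1 - P(x)²)/√(1 - ‖x‖²)) n²`. -/
theorem bernstein_first_derivative_banach
    {X : Type*} [NormedAddCommGroup X] [NormedSpace ℝ X] [CompleteSpace X]
    (n : ℕ) (P : X → ℝ)
    (hP : ∃ L : (j : Fin (n + 1)) → ContinuousMultilinearMap ℝ (fun _ : Fin (j : ℕ) => X) ℝ,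
      ∀ x, P x = ∑ j, L j (fun _ => x))
    (hPnorm : ∀ x : X, ‖x‖ ≤ 1 → |P x| ≤ 1)
    (x : X) (hx : ‖x‖ < 1) :
    ‖fderiv ℝ P x‖
      ≤ min ((n : ℝ) * Real.sqrt (1 - P x ^ 2) / Real.sqrt (1 - ‖x‖ ^ 2)) ((n : ℝ) ^ 2) :=
  bernstein_first_derivative_banach_general hP hPnorm hx
end

section
/- Let X be a real Banach space and let L̂ : X → ℝ be a continuous m-homogeneous polynomial. Then for every k ≤ m and every x ∈ X with ‖x‖ < 1, ‖D̂^k L̂(x)‖ ≤ C(m,k) · k! · (1−‖x‖²)^{−k/2} · ‖L̂‖, where C(m,k) is the binomial coefficient m choose k. -/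
open Metric

/-!
By Banach's theorem a symmetric multilinear map on a real inner product space has the same norm as
the homogeneous polynomial it induces: among the unit families at which the norm is attained, one
with the longest sum must be constant, since otherwise two of its entries could be replaced by
their normalized sum, which keeps the norm attained and lengthens the sum.

For `‖x‖ ^ 2 + ‖y‖ ^ 2 ≤ 1` the map `a + b i ↦ a x + b y` from `ℂ` to `X` has norm at most one, so
pulling the symmetric map `L` back along it shows that `L` at any mixture of `x`s and `y`s is
bounded by the norm of the polynomial. Replacing `y` by `√(1 - ‖x‖ ^ 2) y` gives the factor
`(1 - ‖x‖ ^ 2) ^ (-k / 2)` for a mixture with `k` entries `y`, and the `k`-th derivative is a sum of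
`m (m - 1) ⋯ (m - k + 1)` such mixtures.
-/

open Function (update)

theorem sum_update_eq_sum_add_sub {ι M : Type*} [Fintype ι] [DecidableEq ι] [AddCommGroup M]
    (v : ι → M) (i : ι) (a : M) :
    ∑ l, update v i a l = ∑ l, v l + (a - v i) := by
  rw [Finset.sum_update_of_mem (Finset.mem_univ i),
    ← Finset.add_sum_erase _ v (Finset.mem_univ i), Finset.sdiff_singleton_eq_erase]
  abel

section BilinearInSlots

variable {R ι M N : Type*} [CommSemiring R] [AddCommMonoid M] [Module R M] [AddCommMonoid N]
  [Module R N] [DecidableEq ι]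

/-- The bilinear map given by two slots of the multilinear map `L`, the other arguments being fixed
to those of `v`. -/
def bilinearInSlots (L : MultilinearMap R (fun _ : ι => M) N) (v : ι → M) {i j : ι} (hij : i ≠ j) :
    M →ₗ[R] M →ₗ[R] N :=
  LinearMap.mk₂ R (fun a b => L (update (update v i a) j b))
    (fun a a' b => by simp only [Function.update_comm hij, L.map_update_add])
    (fun c a b => by simp only [Function.update_comm hij, L.map_update_smul])
    (fun a b b' => L.map_update_add _ _ _ _)
    (fun c a b => L.map_update_smul _ _ _ _)

theorem bilinearInSlots_symm {L : MultilinearMap R (fun _ : ι => M) N}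
    (hL : ∀ (σ : Equiv.Perm ι) v, L (v ∘ σ) = L v) (v : ι → M) {i j : ι} (hij : i ≠ j) (a b : M) :
    bilinearInSlots L v hij a b = bilinearInSlots L v hij b a := by
  have swap_slots : update (update v i a) j b ∘ Equiv.swap i j = update (update v i b) j a := by
    ext l
    grind [Function.update_apply]
  simp only [bilinearInSlots, LinearMap.mk₂_apply]
  rw [← swap_slots, hL]

end BilinearInSlots

section NormingFamilies

variable {𝕜 ι E F : Type*} [NontriviallyNormedField 𝕜] [Fintype ι] [NormedAddCommGroup E]
  [NormedSpace 𝕜 E] [NormedAddCommGroup F] [NormedSpace 𝕜 F]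
  {L : ContinuousMultilinearMap 𝕜 (fun _ : ι => E) F} {v : ι → E}

theorem norm_bilinearInSlots_le [DecidableEq ι] (hv : ∀ i, ‖v i‖ = 1) {i j : ι} (hij : i ≠ j)
    (a b : E) :
    ‖bilinearInSlots L.toMultilinearMap v hij a b‖ ≤ ‖L‖ * (‖a‖ * ‖b‖) := by
  have prod_norm : ∏ l, ‖update (update v i a) j b l‖ = ‖a‖ * ‖b‖ := by
    have (l : ι) : ‖update (update v i a) j b l‖ =
        (if l = i then ‖a‖ else 1) * (if l = j then ‖b‖ else 1) := by
      grind [Function.update_apply]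
    simp only [this, Finset.prod_mul_distrib, Finset.prod_ite_eq', Finset.mem_univ, if_true]
  simpa only [bilinearInSlots, LinearMap.mk₂_apply, L.coe_coe, prod_norm]
    using L.le_opNorm (update (update v i a) j b)

/-- The families of unit vectors at which the multilinear map `L` attains its norm. -/
def normingFamilies (L : ContinuousMultilinearMap 𝕜 (fun _ : ι => E) F) : Set (ι → E) :=
  {v | (∀ i, ‖v i‖ = 1) ∧ ‖L v‖ = ‖L‖}

theorem update_neg_mem_normingFamilies [DecidableEq ι] (hv : v ∈ normingFamilies L) (i : ι) :
    update v i (-v i) ∈ normingFamilies L := by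
  refine ⟨fun l => ?_, ?_⟩
  · rcases eq_or_ne l i with rfl | hl <;> simp [*, hv.1]
  · rw [← L.coe_coe, L.toMultilinearMap.map_update_neg, Function.update_eq_self, norm_neg,
      L.coe_coe, hv.2]

theorem isCompact_normingFamilies [ProperSpace E]
    (L : ContinuousMultilinearMap 𝕜 (fun _ : ι => E) F) : IsCompact (normingFamilies L) := by
  have : normingFamilies L =
      (Set.univ.pi fun _ => sphere (0 : E) 1) ∩ {v | ‖L v‖ = ‖L‖} := by
    ext v
    simp [normingFamilies]
  rw [this]
  exact (isCompact_univ_pi fun _ => isCompact_sphere _ _).inter_right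
    (isClosed_eq L.cont.norm continuous_const)

end NormingFamilies

theorem nonempty_normingFamilies {ι E F : Type*} [Fintype ι] [NormedAddCommGroup E]
    [NormedSpace ℝ E] [NormedAddCommGroup F] [NormedSpace ℝ F] [ProperSpace E] [Nontrivial E]
    (L : ContinuousMultilinearMap ℝ (fun _ : ι => E) F) : (normingFamilies L).Nonempty := by
  obtain ⟨v, hv, hmax⟩ := (isCompact_univ_pi fun _ : ι => isCompact_sphere (0 : E) 1).exists_isMaxOn
    (Set.univ_pi_nonempty_iff.2 fun _ => NormedSpace.sphere_nonempty.2 zero_le_one)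
    L.cont.norm.continuousOn
  refine ⟨v, by simpa using hv, le_antisymm ?_ (L.opNorm_le_bound (norm_nonneg _) fun w => ?_)⟩
  · simpa [show ∀ i, ‖v i‖ = 1 by simpa using hv] using L.le_opNorm v
  by_cases hw : ∀ i, w i ≠ 0
  · have normalize_le : ‖L fun i => NormedSpace.normalize (w i)‖ ≤ ‖L v‖ :=
      hmax (by simpa [NormedSpace.norm_normalize_eq_one_iff] using hw)
    calc ‖L w‖ = ‖L fun i => ‖w i‖ • NormedSpace.normalize (w i)‖ := by
          simp only [NormedSpace.norm_smul_normalize]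
      _ = (∏ i, ‖w i‖) * ‖L fun i => NormedSpace.normalize (w i)‖ := by
          rw [L.map_smul_univ, norm_smul, Real.norm_of_nonneg (by positivity)]
      _ ≤ ‖L v‖ * ∏ i, ‖w i‖ := by rw [mul_comm]; gcongr
  · obtain ⟨i, hi⟩ := not_forall_not.1 hw
    rw [L.map_coord_zero i hi, norm_zero]
    positivity

section BanachTheorem

variable {ι E F : Type*} [NormedAddCommGroup E] [InnerProductSpace ℝ E]
  [NormedAddCommGroup F] [NormedSpace ℝ F]

theorem mul_sq_norm_add_le_norm_apply_self (B : E →ₗ[ℝ] E →ₗ[ℝ] F) (hB : ∀ a b, B a b = B b a)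
    {M : ℝ} (hM : ∀ a, ‖B a a‖ ≤ M * ‖a‖ ^ 2) {u v : E} (hu : ‖u‖ = 1) (hv : ‖v‖ = 1)
    (huv : M ≤ ‖B u v‖) : M * ‖u + v‖ ^ 2 ≤ ‖B (u + v) (u + v)‖ := by
  have polarization : B (u + v) (u + v) - B (u - v) (u - v) = (4 : ℝ) • B u v := by
    simp only [map_add, map_sub, LinearMap.add_apply, LinearMap.sub_apply, hB v u]
    module
  have parallelogram : ‖u + v‖ ^ 2 + ‖u - v‖ ^ 2 = 4 := by
    have := parallelogram_law_with_norm ℝ u v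
    rw [hu, hv] at this
    linarith
  have upper : 4 * M ≤ ‖B (u + v) (u + v)‖ + M * ‖u - v‖ ^ 2 := calc
    4 * M ≤ 4 * ‖B u v‖ := by gcongr
    _ = ‖B (u + v) (u + v) - B (u - v) (u - v)‖ := by rw [polarization, norm_smul]; norm_num
    _ ≤ ‖B (u + v) (u + v)‖ + ‖B (u - v) (u - v)‖ := norm_sub_le _ _
    _ ≤ ‖B (u + v) (u + v)‖ + M * ‖u - v‖ ^ 2 := by gcongr; exact hM _
  have : M * ‖u + v‖ ^ 2 + M * ‖u - v‖ ^ 2 = 4 * M := by rw [← mul_add, parallelogram, mul_comm]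
  linarith

variable [Fintype ι] {L : ContinuousMultilinearMap ℝ (fun _ : ι => E) F} {v : ι → E}

theorem update_normalize_add_mem_normingFamilies [DecidableEq ι]
    (hL : ∀ (σ : Equiv.Perm ι) v, L (v ∘ σ) = L v) (hv : v ∈ normingFamilies L)
    {i j : ι} (hij : i ≠ j) (hne : v i + v j ≠ 0) :
    update (update v i (NormedSpace.normalize (v i + v j))) j
      (NormedSpace.normalize (v i + v j)) ∈ normingFamilies L := by
  set w := NormedSpace.normalize (v i + v j) with hw
  have norm_w : ‖w‖ = 1 := NormedSpace.norm_normalize_eq_one_iff.2 hne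
  set B := bilinearInSlots L.toMultilinearMap v hij with hB
  have norm_B_self_le (a : E) : ‖B a a‖ ≤ ‖L‖ * ‖a‖ ^ 2 := by
    simpa only [sq] using norm_bilinearInSlots_le hv.1 hij a a
  have norm_B_entries : ‖L‖ ≤ ‖B (v i) (v j)‖ := by
    simp [hB, bilinearInSlots, hv.2]
  have norm_B_add : ‖L‖ * ‖v i + v j‖ ^ 2 ≤ ‖v i + v j‖ ^ 2 * ‖B w w‖ := calc
    ‖L‖ * ‖v i + v j‖ ^ 2 ≤ ‖B (v i + v j) (v i + v j)‖ :=
      mul_sq_norm_add_le_norm_apply_self B (bilinearInSlots_symm hL v hij) norm_B_self_le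
        (hv.1 i) (hv.1 j) norm_B_entries
    _ = ‖B (‖v i + v j‖ • w) (‖v i + v j‖ • w)‖ := by rw [hw, NormedSpace.norm_smul_normalize]
    _ = ‖v i + v j‖ ^ 2 * ‖B w w‖ := by
      simp only [map_smul, LinearMap.smul_apply, norm_smul, norm_norm]
      ring
  refine ⟨fun l => by grind [Function.update_apply, hv.1 l], ?_⟩
  change ‖B w w‖ = ‖L‖
  refine le_antisymm (by simpa [norm_w] using norm_B_self_le w) ?_
  rw [mul_comm] at norm_B_add
  exact le_of_mul_le_mul_left norm_B_add (by positivity)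

theorem one_le_inner_sum_of_isMaxOn (hv : v ∈ normingFamilies L)
    (hmax : IsMaxOn (fun w => ‖∑ i, w i‖) (normingFamilies L) v) (i : ι) :
    1 ≤ inner ℝ (∑ l, v l) (v i) := by
  classical
  have flip_le : ‖∑ l, v l + (-v i - v i)‖ ≤ ‖∑ l, v l‖ := by
    rw [← sum_update_eq_sum_add_sub]
    exact hmax (update_neg_mem_normingFamilies hv i)
  have flip_sq_le : ‖∑ l, v l - (2 : ℝ) • v i‖ ^ 2 ≤ ‖∑ l, v l‖ ^ 2 := by
    rw [show ∑ l, v l - (2 : ℝ) • v i = ∑ l, v l + (-v i - v i) by module]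
    gcongr
  rw [norm_sub_sq_real, inner_smul_right, norm_smul, hv.1 i] at flip_sq_le
  norm_num at flip_sq_le
  linarith

theorem apply_eq_apply_of_isMaxOn (hL : ∀ (σ : Equiv.Perm ι) v, L (v ∘ σ) = L v)
    (hv : v ∈ normingFamilies L)
    (hmax : IsMaxOn (fun w => ‖∑ i, w i‖) (normingFamilies L) v) (i j : ι) : v i = v j := by
  classical
  by_contra hne
  have hij : i ≠ j := fun h => hne (congrArg v h)
  set s := ∑ l, v l
  set u := v i + v j with hu
  have inner_pos : 0 < inner ℝ s u := by
    rw [inner_add_right]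
    linarith [one_le_inner_sum_of_isMaxOn hv hmax i, one_le_inner_sum_of_isMaxOn hv hmax j]
  have u_ne : u ≠ 0 := fun h => by simp [h] at inner_pos
  have norm_u_lt : ‖u‖ < 2 := by
    have not_sameRay : ¬SameRay ℝ (v i) (v j) :=
      mt (sameRay_iff_of_norm_eq ((hv.1 i).trans (hv.1 j).symm)).1 hne
    linarith [not_sameRay_iff_norm_add_lt.1 not_sameRay, hv.1 i, hv.1 j]
  set t := 2 * ‖u‖⁻¹ - 1 with ht
  have t_pos : 0 < t := by
    have : 1 < 2 * ‖u‖⁻¹ := by rwa [← div_eq_mul_inv, one_lt_div (norm_pos_iff.2 u_ne)]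
    linarith
  set w := NormedSpace.normalize u with hw
  have sum_replaced : ∑ l, update (update v i w) j w l = s + t • u := calc
    ∑ l, update (update v i w) j w l = s + (w - v i) + (w - v j) := by
      rw [sum_update_eq_sum_add_sub, sum_update_eq_sum_add_sub, Function.update_of_ne hij.symm]
    _ = s + ((2 : ℝ) • w - (v i + v j)) := by module
    _ = s + t • u := by rw [← hu, hw, NormedSpace.normalize, smul_smul, ht, sub_smul, one_smul]
  have replace_le : ‖s + t • u‖ ≤ ‖s‖ := by
    rw [← sum_replaced]
    exact hmax (update_normalize_add_mem_normingFamilies hL hv hij u_ne)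
  have replace_gt : ‖s‖ ^ 2 < ‖s + t • u‖ ^ 2 := by
    rw [norm_add_sq_real, inner_smul_right]
    have := mul_pos t_pos inner_pos
    nlinarith [sq_nonneg ‖t • u‖]
  exact absurd (pow_le_pow_left₀ (norm_nonneg _) replace_le 2) replace_gt.not_ge

theorem exists_norm_eq_one_norm_diagonal_eq_opNorm [ProperSpace E] [Nontrivial E]
    (hL : ∀ (σ : Equiv.Perm ι) v, L (v ∘ σ) = L v) :
    ∃ e : E, ‖e‖ = 1 ∧ ‖L fun _ => e‖ = ‖L‖ := by
  obtain ⟨v, hv, hmax⟩ := (isCompact_normingFamilies L).exists_isMaxOn (nonempty_normingFamilies L)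
    (f := fun v => ‖∑ i, v i‖) (by fun_prop)
  rcases isEmpty_or_nonempty ι with _ | ⟨⟨i⟩⟩
  · obtain ⟨e, he⟩ := exists_norm_eq E zero_le_one
    exact ⟨e, he, by rw [← hv.2, Subsingleton.elim v fun _ => e]⟩
  · refine ⟨v i, hv.1 i, ?_⟩
    rw [← hv.2, ← funext fun j => apply_eq_apply_of_isMaxOn hL hv hmax j i]

theorem opNorm_le_of_forall_diagonal_le (hL : ∀ (σ : Equiv.Perm ι) v, L (v ∘ σ) = L v) {N : ℝ}
    (hN : ∀ u, ‖u‖ ≤ 1 → ‖L fun _ => u‖ ≤ N) : ‖L‖ ≤ N := by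
  have N_nonneg : 0 ≤ N := (norm_nonneg _).trans (hN 0 (by simp))
  refine L.opNorm_le_bound N_nonneg fun v => ?_
  let K := Submodule.span ℝ (Set.range v)
  have : FiniteDimensional ℝ K := FiniteDimensional.span_of_finite ℝ (Set.finite_range v)
  let v' : ι → K := fun i => ⟨v i, Submodule.subset_span ⟨i, rfl⟩⟩
  let L' := L.compContinuousLinearMap fun _ => K.subtypeL
  have norm_L'_le : ‖L'‖ ≤ N := by
    rcases subsingleton_or_nontrivial K with _ | _
    · refine L'.opNorm_le_bound N_nonneg fun w => ?_
      rw [Subsingleton.elim w 0]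
      rcases isEmpty_or_nonempty ι with _ | ⟨⟨i⟩⟩
      · rw [Finset.univ_eq_empty, Finset.prod_empty, mul_one]
        exact hN 0 (by simp)
      · rw [L'.map_coord_zero i rfl, norm_zero]
        positivity
    · obtain ⟨e, he, hLe⟩ := exists_norm_eq_one_norm_diagonal_eq_opNorm (L := L')
        fun σ w => hL σ (K.subtype ∘ w)
      exact hLe ▸ hN e he.le
  calc ‖L v‖ = ‖L' v'‖ := rfl
    _ ≤ N * ∏ i, ‖v i‖ := L'.le_of_opNorm_le norm_L'_le v'

end BanachTheorem

section EllipseMap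

variable {X Y ι : Type*} [NormedAddCommGroup X] [NormedSpace ℝ X]
  [NormedAddCommGroup Y] [NormedSpace ℝ Y]

/-- The real linear map `a + b i ↦ a x + b y`, which parametrizes the plane through `x` and `y` and
sends the unit circle to an ellipse. -/
noncomputable def ellipseMap (x y : X) : ℂ →L[ℝ] X :=
  Complex.reCLM.smulRight x + Complex.imCLM.smulRight y

theorem norm_ellipseMap_apply_le {x y : X} (hxy : ‖x‖ ^ 2 + ‖y‖ ^ 2 ≤ 1) (z : ℂ) :
    ‖ellipseMap x y z‖ ≤ ‖z‖ := by
  have norm_sq : ‖z‖ ^ 2 = |z.re| ^ 2 + |z.im| ^ 2 := by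
    rw [Complex.sq_norm, Complex.normSq_apply, sq_abs, sq_abs, sq, sq]
  refine le_of_sq_le_sq ?_ (norm_nonneg z)
  calc ‖ellipseMap x y z‖ ^ 2 ≤ (|z.re| * ‖x‖ + |z.im| * ‖y‖) ^ 2 := by
        gcongr
        simpa [ellipseMap, norm_smul] using norm_add_le (z.re • x) (z.im • y)
    _ ≤ (|z.re| ^ 2 + |z.im| ^ 2) * (‖x‖ ^ 2 + ‖y‖ ^ 2) := by
        linarith [sq_nonneg (|z.re| * ‖y‖ - |z.im| * ‖x‖)]
    _ ≤ ‖z‖ ^ 2 := norm_sq ▸ mul_le_of_le_one_right (sq_nonneg _) hxy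

variable {L : ContinuousMultilinearMap ℝ (fun _ : ι => X) Y} {N : ℝ} {x y : X}

theorem norm_piecewise_le_of_sq_add_sq_le [Finite ι] [DecidableEq ι]
    (hL : ∀ (σ : Equiv.Perm ι) v, L (v ∘ σ) = L v) (hN : ∀ u, ‖u‖ ≤ 1 → ‖L fun _ => u‖ ≤ N)
    (hxy : ‖x‖ ^ 2 + ‖y‖ ^ 2 ≤ 1) (s : Finset ι) :
    ‖L (s.piecewise (fun _ => y) fun _ => x)‖ ≤ N := by
  cases nonempty_fintype ι
  let L' := L.compContinuousLinearMap fun _ => ellipseMap x y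
  let mixture : ι → ℂ := s.piecewise (fun _ => Complex.I) fun _ => 1
  have norm_L'_le : ‖L'‖ ≤ N := opNorm_le_of_forall_diagonal_le
    (fun σ v => hL σ (ellipseMap x y ∘ v))
    fun u hu => hN _ ((norm_ellipseMap_apply_le hxy u).trans hu)
  have ellipseMap_mixture :
      (fun i => ellipseMap x y (mixture i)) = s.piecewise (fun _ => y) fun _ => x := by
    ext i
    by_cases hi : i ∈ s <;> simp [mixture, ellipseMap, hi]
  have norm_mixture (i : ι) : ‖mixture i‖ = 1 := by
    by_cases hi : i ∈ s <;> simp [mixture, hi]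
  calc ‖L (s.piecewise (fun _ => y) fun _ => x)‖ = ‖L' mixture‖ := by
        rw [← ellipseMap_mixture]; rfl
    _ ≤ N * ∏ i, ‖mixture i‖ := L'.le_of_opNorm_le norm_L'_le mixture
    _ = N := by simp [norm_mixture]

theorem norm_piecewise_le_rpow_mul [Finite ι] [DecidableEq ι]
    (hL : ∀ (σ : Equiv.Perm ι) v, L (v ∘ σ) = L v) (hN : ∀ u, ‖u‖ ≤ 1 → ‖L fun _ => u‖ ≤ N)
    (hx : ‖x‖ < 1) (hy : ‖y‖ ≤ 1) (s : Finset ι) :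
    ‖L (s.piecewise (fun _ => y) fun _ => x)‖ ≤ (1 - ‖x‖ ^ 2) ^ (-(s.card : ℝ) / 2) * N := by
  have pos : 0 < 1 - ‖x‖ ^ 2 := by nlinarith [norm_nonneg x]
  set c := √(1 - ‖x‖ ^ 2) with hc
  have c_pos : 0 < c := Real.sqrt_pos.2 pos
  have on_ellipse : ‖x‖ ^ 2 + ‖c • y‖ ^ 2 ≤ 1 := by
    rw [norm_smul, mul_pow, Real.norm_of_nonneg c_pos.le, Real.sq_sqrt pos.le]
    nlinarith [pow_le_one₀ (n := 2) (norm_nonneg y) hy]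
  have scaled : c ^ s.card * ‖L (s.piecewise (fun _ => y) fun _ => x)‖ ≤ N := by
    set mixture : ι → X := s.piecewise (fun _ => y) fun _ => x with h_mixture
    calc c ^ s.card * ‖L mixture‖ = ‖L (s.piecewise (fun i => c • mixture i) mixture)‖ := by
          rw [← L.coe_coe, L.toMultilinearMap.map_piecewise_smul (fun _ => c), Finset.prod_const,
            norm_smul, Real.norm_of_nonneg (by positivity)]
      _ = ‖L (s.piecewise (fun _ => c • y) fun _ => x)‖ := by
          congr 2
          ext i
          by_cases hi : i ∈ s <;> simp [h_mixture, hi]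
      _ ≤ N := norm_piecewise_le_of_sq_add_sq_le hL hN on_ellipse s
  have rpow_eq : (1 - ‖x‖ ^ 2) ^ (-(s.card : ℝ) / 2) = (c ^ s.card)⁻¹ := by
    rw [neg_div, Real.rpow_neg pos.le, hc, Real.sqrt_eq_rpow, ← Real.rpow_mul_natCast pos.le]
    congr 2
    ring
  rwa [rpow_eq, le_inv_mul_iff₀ (pow_pos c_pos _)]

end EllipseMap

theorem iteratedFDeriv_diagonal_apply {𝕜 E F ι : Type*} [NontriviallyNormedField 𝕜]
    [NormedAddCommGroup E] [NormedSpace 𝕜 E] [NormedAddCommGroup F] [NormedSpace 𝕜 F]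
    [Fintype ι] [DecidableEq ι]
    (L : ContinuousMultilinearMap 𝕜 (fun _ : ι => E) F) (k : ℕ) (x y : E) :
    iteratedFDeriv 𝕜 k (fun u => L fun _ => u) x (fun _ => y) =
      ∑ e : Fin k ↪ ι, L ((Finset.univ.map e).piecewise (fun _ => y) fun _ => x) := by
  let diagonal : E →L[𝕜] ι → E := ContinuousLinearMap.pi fun _ => ContinuousLinearMap.id 𝕜 E
  change iteratedFDeriv 𝕜 k (L ∘ diagonal) x (fun _ => y) = _
  rw [diagonal.iteratedFDeriv_comp_right L.contDiff _ le_rfl, L.iteratedFDeriv_eq]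
  simp only [ContinuousMultilinearMap.iteratedFDeriv,
    ContinuousMultilinearMap.compContinuousLinearMap_apply, sum_apply,
    ContinuousMultilinearMap.iteratedFDerivComponent_apply, Set.mem_range, Pi.compRightL_apply]
  refine Finset.sum_congr rfl fun e _ => congrArg L (funext fun j => ?_)
  simp [diagonal, Finset.piecewise]

section Bernstein

variable {X Y : Type*} [NormedAddCommGroup X] [NormedSpace ℝ X] [NormedAddCommGroup Y]
  [NormedSpace ℝ Y]

theorem norm_iteratedFDeriv_diagonal_le {ι : Type*} [Fintype ι]
    {L : ContinuousMultilinearMap ℝ (fun _ : ι => X) Y} {N : ℝ}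
    (hL : ∀ (σ : Equiv.Perm ι) v, L (v ∘ σ) = L v) (hN : ∀ u, ‖u‖ ≤ 1 → ‖L fun _ => u‖ ≤ N)
    (k : ℕ) {x y : X} (hx : ‖x‖ < 1) (hy : ‖y‖ ≤ 1) :
    ‖iteratedFDeriv ℝ k (fun u => L fun _ => u) x (fun _ => y)‖ ≤
      (Fintype.card ι).choose k * k.factorial * (1 - ‖x‖ ^ 2) ^ (-(k : ℝ) / 2) * N := by
  classical
  rw [iteratedFDeriv_diagonal_apply]
  calc ‖∑ e : Fin k ↪ ι, L ((Finset.univ.map e).piecewise (fun _ => y) fun _ => x)‖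
      ≤ ∑ _e : Fin k ↪ ι, (1 - ‖x‖ ^ 2) ^ (-(k : ℝ) / 2) * N :=
        norm_sum_le_of_le _ fun e _ => by
          simpa using norm_piecewise_le_rpow_mul hL hN hx hy (Finset.univ.map e)
    _ = (Fintype.card ι).choose k * k.factorial * (1 - ‖x‖ ^ 2) ^ (-(k : ℝ) / 2) * N := by
        rw [Finset.sum_const, Finset.card_univ, Fintype.card_embedding_eq, Fintype.card_fin,
          Nat.descFactorial_eq_factorial_mul_choose, nsmul_eq_mul]
        push_cast
        ring

theorem bddAbove_norm_diagonal_image_closedBall {ι : Type*} [Finite ι]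
    (L : ContinuousMultilinearMap ℝ (fun _ : ι => X) Y) :
    BddAbove ((fun u => ‖L fun _ => u‖) '' closedBall (0 : X) 1) := by
  cases nonempty_fintype ι
  refine ⟨‖L‖, ?_⟩
  rintro _ ⟨u, hu, rfl⟩
  exact L.unit_le_opNorm ((pi_norm_const_le u).trans (mem_closedBall_zero_iff.1 hu))

theorem bernstein_homogeneous_hat_banach_general (m k : ℕ) (F : X → Y)
    (hF : ∃ L : ContinuousMultilinearMap ℝ (fun _ : Fin m => X) Y,
      (∀ (σ : Equiv.Perm (Fin m)) (v : Fin m → X), L (v ∘ σ) = L v) ∧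
      ∀ u, F u = L (fun _ => u))
    (x : X) (hx : ‖x‖ < 1) :
    sSup ((fun y => ‖iteratedFDeriv ℝ k F x (fun _ => y)‖) '' closedBall (0 : X) 1)
      ≤ (m.choose k : ℝ) * (k.factorial : ℝ) * (1 - ‖x‖ ^ 2) ^ (-(k : ℝ) / 2)
          * sSup ((fun y => ‖F y‖) '' closedBall (0 : X) 1) := by
  obtain ⟨L, hL, hFL⟩ := hF
  obtain rfl : F = fun u => L fun _ => u := funext hFL
  have norm_le_sSup (u : X) (hu : ‖u‖ ≤ 1) :
      ‖L fun _ => u‖ ≤ sSup ((fun u => ‖L fun _ => u‖) '' closedBall (0 : X) 1) :=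
    le_csSup (bddAbove_norm_diagonal_image_closedBall L)
      (Set.mem_image_of_mem _ (mem_closedBall_zero_iff.2 hu))
  refine csSup_le ((nonempty_closedBall.2 zero_le_one).image _) ?_
  rintro _ ⟨y, hy, rfl⟩
  simpa using norm_iteratedFDeriv_diagonal_le hL norm_le_sSup k hx (mem_closedBall_zero_iff.1 hy)

end Bernstein

/-- Bernstein-type inequality for an `m`-homogeneous polynomial `L̂` on a real Banach
space: for `k ≤ m` and `‖x‖ < 1`, `‖D̂^k L̂(x)‖ ≤ (m choose k) k! (1-‖x‖²)^(-k/2) ‖L̂‖`. -/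
theorem bernstein_homogeneous_hat_banach
    {X : Type*} [NormedAddCommGroup X] [NormedSpace ℝ X] [CompleteSpace X]
    (m k : ℕ) (hk : k ≤ m) (F : X → ℝ)
    (hF : ∃ L : ContinuousMultilinearMap ℝ (fun _ : Fin m => X) ℝ,
      (∀ (σ : Equiv.Perm (Fin m)) (v : Fin m → X), L (v ∘ σ) = L v) ∧
      ∀ u, F u = L (fun _ => u))
    (x : X) (hx : ‖x‖ < 1) :
    sSup ((fun y => ‖iteratedFDeriv ℝ k F x (fun _ => y)‖) '' closedBall (0 : X) 1)
      ≤ (m.choose k : ℝ) * (k.factorial : ℝ) * (1 - ‖x‖ ^ 2) ^ (-(k : ℝ) / 2)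
          * sSup ((fun y => ‖F y‖) '' closedBall (0 : X) 1) :=
  bernstein_homogeneous_hat_banach_general m k F hF x hx
end

section
/- Let X be a real Banach space and let L̂ : X → ℝ be a continuous m-homogeneous polynomial. Then for every k ≤ m and every x ∈ X with ‖x‖ < 1, the k-th Fréchet derivative satisfies ‖D^k L̂(x)‖ ≤ C(m,k) · k^k · (1−‖x‖²)^{−k/2} · ‖L̂‖, where C(m,k) is the binomial coefficient m choose k. -/
open Metric

open Finset Function
open scoped Nat ContDiff

/-! A polarization formula reduces the bound on `D^k L̂(x)` to its diagonal values, and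
`D^k L̂(x)(z, …, z)` is a sum over the injections `Fin k → Fin m` of values of `L` with `k`
arguments equal to `z` and `m - k` equal to `x`. Put `ρ = √(1 - ‖x‖²)`. For `‖z‖ ≤ 1`, the map
`(a, b) ↦ a x + b ρ z` is a contraction from the Euclidean plane, and pulling `L` back along it
makes `ρ^k L(z, …, z, x, …, x)` a value of a symmetric form on a Hilbert space at unit vectors. By
Banach's theorem the norm of such a form is attained on the diagonal, hence is at most `‖L̂‖`.

Banach's theorem: if `L` attains its norm at a tuple `v` of unit vectors, then the parallelogram law
shows that it still does after `v i` and `v j` are both replaced by the normalization of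
`v i + v j`. Choose `v` to maximize `‖∑ i, v i‖` among all such tuples. Comparing with the tuples
where the sign of one entry is flipped gives `⟪∑ l, v l, v i⟫ > 0` for all `i`, and then merging two
distinct entries would lengthen the sum. Hence the entries of `v` coincide.
-/

/-- Symmetry of a map of several variables: its value does not change when its arguments are
permuted. It is stated for plain functions so that it applies to multilinear maps through their
coercion. -/
def IsSymmetricMap {ι E G : Type*} (f : (ι → E) → G) : Prop :=
  ∀ (σ : Equiv.Perm ι) (v : ι → E), f (v ∘ σ) = f v

section BoundsOnUnitVectors

variable {ι E G : Type*} [Fintype ι] [NormedAddCommGroup E] [NormedSpace ℝ E]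
  [SeminormedAddCommGroup G] [NormedSpace ℝ G]

theorem opNorm_le_of_forall_norm_eq_one (L : ContinuousMultilinearMap ℝ (fun _ : ι => E) G)
    {C : ℝ} (hC : 0 ≤ C) (hL : ∀ v : ι → E, (∀ i, ‖v i‖ = 1) → ‖L v‖ ≤ C) : ‖L‖ ≤ C := by
  refine L.opNorm_le_bound hC fun v => ?_
  by_cases hv : ∃ i, v i = 0
  · obtain ⟨i, hi⟩ := hv
    rw [L.map_coord_zero i hi, norm_zero]
    positivity
  · push Not at hv
    calc ‖L v‖ = (∏ i, ‖v i‖) * ‖L fun i => NormedSpace.normalize (v i)‖ := by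
          simpa [norm_smul] using congrArg norm
            (L.map_smul_univ (fun i => ‖v i‖) fun i => NormedSpace.normalize (v i))
      _ ≤ (∏ i, ‖v i‖) * C := by
          gcongr
          exact hL _ fun i => NormedSpace.norm_normalize (hv i)
      _ = C * ∏ i, ‖v i‖ := mul_comm _ _

theorem norm_map_diag_le_mul_pow (L : ContinuousMultilinearMap ℝ (fun _ : ι => E) G)
    {K : ℝ} (hK : ∀ u : E, ‖u‖ ≤ 1 → ‖L fun _ => u‖ ≤ K) (u : E) :
    ‖L fun _ => u‖ ≤ K * ‖u‖ ^ Fintype.card ι := by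
  have hu_le : ‖NormedSpace.normalize u‖ ≤ 1 := by
    rw [NormedSpace.normalize, norm_smul, norm_inv, norm_norm]
    exact inv_mul_le_one
  calc ‖L fun _ => u‖ = ‖u‖ ^ Fintype.card ι * ‖L fun _ => NormedSpace.normalize u‖ := by
        simpa [norm_smul] using congrArg norm
          (L.map_smul_univ (fun _ => ‖u‖) fun _ => NormedSpace.normalize u)
    _ ≤ ‖u‖ ^ Fintype.card ι * K := by gcongr; exact hK _ hu_le
    _ = K * ‖u‖ ^ Fintype.card ι := mul_comm _ _

theorem bddAbove_norm_map_diag_closedBall {𝕜 ι E G : Type*} [NontriviallyNormedField 𝕜] [Finite ι]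
    [SeminormedAddCommGroup E] [NormedSpace 𝕜 E] [SeminormedAddCommGroup G] [NormedSpace 𝕜 G]
    (L : ContinuousMultilinearMap 𝕜 (fun _ : ι => E) G) :
    BddAbove ((fun u => ‖L fun _ => u‖) '' closedBall (0 : E) 1) := by
  have := Fintype.ofFinite ι
  refine ⟨‖L‖, ?_⟩
  rintro _ ⟨u, hu, rfl⟩
  have hu_le : ‖fun _ : ι => u‖ ≤ 1 :=
    (pi_norm_le_iff_of_nonneg zero_le_one).2 fun _ => mem_closedBall_zero_iff.1 hu
  exact L.unit_le_opNorm hu_le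

end BoundsOnUnitVectors

section Polarization

variable {ι : Type*} [Fintype ι]

theorem sum_signs_prod_mul_prod_perm [DecidableEq ι] (σ : Equiv.Perm ι) :
    ∑ s : ι → ℤˣ, (((∏ i, s i) * ∏ i, s (σ i) : ℤˣ) : ℤ) = 2 ^ Fintype.card ι := by
  have hsq (s : ι → ℤˣ) : (∏ i, s i) * ∏ i, s (σ i) = 1 := by
    rw [Equiv.prod_comp σ s, Int.units_mul_self]
  simp [hsq]

theorem sum_signs_prod_mul_prod_of_not_surjective [DecidableEq ι] {r : ι → ι}
    (hr : ¬ Surjective r) :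
    ∑ s : ι → ℤˣ, (((∏ i, s i) * ∏ i, s (r i) : ℤˣ) : ℤ) = 0 := by
  obtain ⟨j, hj⟩ := not_forall.1 hr
  have hj_ne (i : ι) : r i ≠ j := fun h => hj ⟨i, h⟩
  -- Flipping the sign of `s j` changes the first product but not the second.
  let flip : ι → ℤˣ := Pi.mulSingle j (-1)
  have hflip (s : ι → ℤˣ) :
      (∏ i, (s * flip) i) * ∏ i, (s * flip) (r i) = -((∏ i, s i) * ∏ i, s (r i)) := by
    simp [flip, prod_mul_distrib, Pi.mulSingle_eq_of_ne (hj_ne _)]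
  have hneg := Equiv.sum_comp (Equiv.mulRight flip)
    fun s : ι → ℤˣ => (((∏ i, s i) * ∏ i, s (r i) : ℤˣ) : ℤ)
  simp only [Equiv.coe_mulRight, hflip, Units.val_neg, sum_neg_distrib] at hneg
  lia

theorem polarization_identity {R M N : Type*} [Ring R] [AddCommGroup M] [AddCommGroup N]
    [Module R M] [Module R N] [DecidableEq ι] (D : MultilinearMap R (fun _ : ι => M) N)
    (hD : IsSymmetricMap D) (y : ι → M) :
    ∑ s : ι → ℤˣ, (∏ i, s i) • D (fun _ => ∑ j, s j • y j)
      = (2 ^ Fintype.card ι * (Fintype.card ι)! : ℤ) • D y := by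
  have hexpand (s : ι → ℤˣ) :
      D (fun _ => ∑ j, s j • y j) = ∑ r : ι → ι, (∏ i, s (r i)) • D (y ∘ r) := by
    rw [D.map_sum fun _ j => s j • y j]
    refine sum_congr rfl fun r _ => ?_
    have h := (D.restrictScalars ℤ).map_smul_univ (fun i => (s (r i) : ℤ)) (y ∘ r)
    rwa [← Units.coe_prod] at h
  calc ∑ s : ι → ℤˣ, (∏ i, s i) • D (fun _ => ∑ j, s j • y j)
      = ∑ r : ι → ι, (∑ s : ι → ℤˣ, (((∏ i, s i) * ∏ i, s (r i) : ℤˣ) : ℤ)) • D (y ∘ r) := by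
        simp only [hexpand, smul_sum, smul_smul, sum_smul]
        exact sum_comm
    _ = ∑ _σ : Equiv.Perm ι, (2 ^ Fintype.card ι : ℤ) • D y := by
        refine (sum_of_injOn (fun σ : Equiv.Perm ι => ⇑σ) DFunLike.coe_injective.injOn
          (fun _ _ => mem_coe.2 (mem_univ _)) (fun r _ hr => ?_) fun σ _ => ?_).symm
        · rw [sum_signs_prod_mul_prod_of_not_surjective, zero_smul]
          exact fun h => hr ⟨Equiv.ofBijective r (Finite.surjective_iff_bijective.1 h), by simp⟩
        · rw [sum_signs_prod_mul_prod_perm, hD]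
    _ = (2 ^ Fintype.card ι * (Fintype.card ι)! : ℤ) • D y := by
        rw [sum_const, card_univ, Fintype.card_perm, ← natCast_zsmul, smul_smul, mul_comm]

theorem opNorm_le_of_norm_map_diag_le {E G : Type*} [NormedAddCommGroup E] [NormedSpace ℝ E]
    [SeminormedAddCommGroup G] [NormedSpace ℝ G]
    (D : ContinuousMultilinearMap ℝ (fun _ : ι => E) G) (hD : IsSymmetricMap D) {c : ℝ}
    (hc : ∀ z : E, ‖z‖ ≤ 1 → ‖D fun _ => z‖ ≤ c) :
    ‖D‖ ≤ (Fintype.card ι : ℝ) ^ Fintype.card ι / (Fintype.card ι)! * c := by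
  classical
  set n := Fintype.card ι
  have hc₀ : 0 ≤ c := (norm_nonneg _).trans (hc 0 (by simp))
  refine opNorm_le_of_forall_norm_eq_one D (by positivity) fun y hy => ?_
  have hsum (s : ι → ℤˣ) : ‖∑ j, s j • y j‖ ≤ n := by
    simpa [hy, n] using norm_sum_le univ fun j => s j • y j
  have hterm (s : ι → ℤˣ) : ‖(∏ i, s i) • D (fun _ => ∑ j, s j • y j)‖ ≤ c * n ^ n := by
    rw [norm_units_zsmul]
    refine (norm_map_diag_le_mul_pow D hc _).trans ?_
    gcongr
    exact hsum s
  have hle : 2 ^ n * n ! * ‖D y‖ ≤ 2 ^ n * (c * n ^ n) :=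
    calc (2 ^ n * n ! * ‖D y‖ : ℝ)
        = ‖∑ s : ι → ℤˣ, (∏ i, s i) • D (fun _ => ∑ j, s j • y j)‖ := by
          have h := polarization_identity D.toMultilinearMap hD y
          simp only [ContinuousMultilinearMap.coe_coe] at h
          rw [h, ← Int.cast_smul_eq_zsmul ℝ, norm_smul]
          simp [n]
      _ ≤ ∑ _s : ι → ℤˣ, c * (n : ℝ) ^ n := norm_sum_le_of_le _ fun s _ => hterm s
      _ = 2 ^ n * (c * n ^ n) := by simp [n]
  rw [mul_assoc] at hle
  rw [div_mul_eq_mul_div, le_div_iff₀ (by positivity)]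
  linarith [le_of_mul_le_mul_left hle (by positivity)]

end Polarization

section InnerProductSpace

theorem map_update_add_sub_map_update_sub {ι R M N : Type*} [DecidableEq ι] [Ring R]
    [AddCommGroup M] [AddCommGroup N] [Module R M] [Module R N]
    (L : MultilinearMap R (fun _ : ι => M) N) (hL : IsSymmetricMap L) (v : ι → M) {i j : ι}
    (hij : i ≠ j) :
    L (update (update v i (v i + v j)) j (v i + v j))
      - L (update (update v i (v i - v j)) j (v i - v j)) = (4 : ℤ) • L v := by
  have hleft_add (b : M) : L (update (update v i (v i + v j)) j b)
      = L (update v j b) + L (update (update v i (v j)) j b) := by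
    rw [update_comm hij, L.map_update_add, update_comm hij.symm, update_comm hij.symm,
      update_eq_self]
  have hleft_sub (b : M) : L (update (update v i (v i - v j)) j b)
      = L (update v j b) - L (update (update v i (v j)) j b) := by
    rw [update_comm hij, L.map_update_sub, update_comm hij.symm, update_comm hij.symm,
      update_eq_self]
  have hself : L (update v j (v j)) = L v := by rw [update_eq_self]
  have hswap : L (update (update v i (v j)) j (v i)) = L v := by
    rw [← hL (Equiv.swap i j) v, Equiv.comp_swap_eq_update, update_comm hij]
  simp only [L.map_update_add, L.map_update_sub, hleft_add, hleft_sub, hself, hswap]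
  abel

/-- The tuple `v` with its `i`-th and `j`-th entries both replaced by the unit vector in the
direction of `v i + v j` (by `0` if `v i + v j = 0`). This is the move that makes the entries of a
norming tuple coincide. -/
noncomputable def mergeEntries {ι E : Type*} [DecidableEq ι] [NormedAddCommGroup E]
    [NormedSpace ℝ E] (v : ι → E) (i j : ι) : ι → E :=
  update (update v i (NormedSpace.normalize (v i + v j))) j (NormedSpace.normalize (v i + v j))

theorem norm_mergeEntries_eq_one {ι E : Type*} [DecidableEq ι] [NormedAddCommGroup E]
    [NormedSpace ℝ E] {v : ι → E} (hv : ∀ l, ‖v l‖ = 1) {i j : ι} (hne : v i + v j ≠ 0) (l : ι) :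
    ‖mergeEntries v i j l‖ = 1 := by
  simp only [mergeEntries, update_apply]
  split_ifs
  · exact NormedSpace.norm_normalize hne
  · exact NormedSpace.norm_normalize hne
  · exact hv l

variable {ι H G : Type*} [Fintype ι] [NormedAddCommGroup H] [InnerProductSpace ℝ H]
  [SeminormedAddCommGroup G] [NormedSpace ℝ G]

theorem opNorm_mul_norm_add_sq_le [DecidableEq ι]
    (L : ContinuousMultilinearMap ℝ (fun _ : ι => H) G) (hL : IsSymmetricMap L) {v : ι → H}
    (hv : ∀ i, ‖v i‖ = 1) (hLv : ‖L v‖ = ‖L‖) {i j : ι} (hij : i ≠ j) :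
    ‖L‖ * ‖v i + v j‖ ^ 2 ≤ ‖L (update (update v i (v i + v j)) j (v i + v j))‖ := by
  set sumValue := L (update (update v i (v i + v j)) j (v i + v j))
  set diffValue := L (update (update v i (v i - v j)) j (v i - v j)) with hdiff
  have hsub : ‖diffValue‖ ≤ ‖L‖ * ‖v i - v j‖ ^ 2 := by
    rw [hdiff]
    refine (L.le_opNorm _).trans_eq ?_
    rw [Fintype.prod_eq_mul i j hij]
    · simp [hij, sq]
    · rintro l ⟨hli, hlj⟩
      simp [hli, hlj, hv]
  have hfour : 4 * ‖L‖ = ‖sumValue - diffValue‖ := by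
    have h : sumValue - diffValue = (4 : ℤ) • L v :=
      map_update_add_sub_map_update_sub L.toMultilinearMap hL v hij
    rw [h, ← Int.cast_smul_eq_zsmul ℝ, norm_smul, hLv]
    norm_num
  have hpar := parallelogram_law_with_norm ℝ (v i) (v j)
  simp only [hv] at hpar
  linear_combination hfour + norm_sub_le sumValue diffValue + hsub + ‖L‖ * hpar

theorem norm_map_mergeEntries_eq_opNorm [DecidableEq ι]
    (L : ContinuousMultilinearMap ℝ (fun _ : ι => H) G) (hL : IsSymmetricMap L) {v : ι → H}
    (hv : ∀ i, ‖v i‖ = 1) (hLv : ‖L v‖ = ‖L‖) {i j : ι} (hij : i ≠ j) (hne : v i + v j ≠ 0) :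
    ‖L (mergeEntries v i j)‖ = ‖L‖ := by
  refine le_antisymm ?_ ?_
  · simpa [norm_mergeEntries_eq_one hv hne] using L.le_opNorm (mergeEntries v i j)
  · have hpos : 0 < ‖v i + v j‖ := norm_pos_iff.2 hne
    rw [mergeEntries, NormedSpace.normalize, L.map_update_smul, update_comm hij, L.map_update_smul,
      update_comm hij.symm, norm_smul, norm_smul, norm_inv, norm_norm, ← mul_assoc, ← sq, inv_pow,
      inv_mul_eq_div, le_div_iff₀ (pow_pos hpos 2)]
    exact opNorm_mul_norm_add_sq_le L hL hv hLv hij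

theorem sum_update_eq_add_sub {M : Type*} [AddCommGroup M] [DecidableEq ι] (v : ι → M) (i : ι)
    (b : M) : ∑ l, update v i b l = ∑ l, v l + (b - v i) := by
  rw [sum_update_of_mem (mem_univ i), ← sum_sdiff (subset_univ {i}), sum_singleton]
  abel

theorem norm_sq_le_inner_sum_of_norm_sum_update_neg_le [DecidableEq ι] {v : ι → H} {i : ι}
    (h : ‖∑ l, update v i (-v i) l‖ ≤ ‖∑ l, v l‖) : ‖v i‖ ^ 2 ≤ inner ℝ (∑ l, v l) (v i) := by
  have hflip : ∑ l, update v i (-v i) l = ∑ l, v l - (2 : ℝ) • v i := by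
    rw [sum_update_eq_add_sub]
    module
  have hsq := pow_le_pow_left₀ (norm_nonneg _) h 2
  rw [hflip, norm_sub_sq_real, inner_smul_right, norm_smul, Real.norm_ofNat] at hsq
  linarith

theorem eq_of_norm_sum_mergeEntries_le [DecidableEq ι] {v : ι → H} {i j : ι} (hij : i ≠ j)
    (hi : ‖v i‖ = 1) (hj : ‖v j‖ = 1) (hinner : 0 < inner ℝ (∑ l, v l) (v i + v j))
    (h : ‖∑ l, mergeEntries v i j l‖ ≤ ‖∑ l, v l‖) : v i = v j := by
  have hpos : 0 < ‖v i + v j‖ := norm_pos_iff.2 fun h₀ => by simp [h₀] at hinner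
  set c := 2 * ‖v i + v j‖⁻¹ - 1 with hc
  have hmerge : ∑ l, mergeEntries v i j l = ∑ l, v l + c • (v i + v j) := by
    rw [mergeEntries, sum_update_eq_add_sub, sum_update_eq_add_sub, update_of_ne hij.symm, hc,
      NormedSpace.normalize]
    module
  have hc_nonpos : c ≤ 0 := by
    have hsq := pow_le_pow_left₀ (norm_nonneg _) h 2
    rw [hmerge, norm_add_sq_real, inner_smul_right] at hsq
    by_contra! hc_pos
    linarith [mul_pos hc_pos hinner, sq_nonneg ‖c • (v i + v j)‖]
  have htwo : 2 ≤ ‖v i + v j‖ := by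
    rw [hc, sub_nonpos, ← div_eq_mul_inv, div_le_one hpos] at hc_nonpos
    exact hc_nonpos
  have hpar := parallelogram_law_with_norm ℝ (v i) (v j)
  rw [hi, hj] at hpar
  rw [← sub_eq_zero, ← norm_eq_zero]
  exact pow_eq_zero_iff two_ne_zero |>.1 (by nlinarith [sq_nonneg ‖v i - v j‖])

theorem exists_norm_eq_one_norm_map_eq_opNorm [FiniteDimensional ℝ H] [Nontrivial H]
    (L : ContinuousMultilinearMap ℝ (fun _ : ι => H) G) :
    ∃ v : ι → H, (∀ i, ‖v i‖ = 1) ∧ ‖L v‖ = ‖L‖ := by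
  obtain ⟨u, hu⟩ := exists_norm_eq H zero_le_one
  have hcompact : IsCompact (Set.univ.pi fun _ : ι => sphere (0 : H) 1) :=
    isCompact_univ_pi fun _ => isCompact_sphere 0 1
  obtain ⟨v, hv, hmax⟩ := hcompact.exists_isMaxOn ⟨fun _ => u, by simp [hu]⟩
    L.cont.norm.continuousOn
  have hv_norm : ∀ i, ‖v i‖ = 1 := by simpa using hv
  refine ⟨v, hv_norm, le_antisymm ?_ ?_⟩
  · simpa [hv_norm] using L.le_opNorm v
  · exact opNorm_le_of_forall_norm_eq_one L (norm_nonneg _) fun w hw => hmax (by simpa using hw)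

theorem exists_norm_eq_one_norm_map_eq_opNorm_forall_norm_sum_le [FiniteDimensional ℝ H]
    [Nontrivial H] (L : ContinuousMultilinearMap ℝ (fun _ : ι => H) G) :
    ∃ v : ι → H, (∀ i, ‖v i‖ = 1) ∧ ‖L v‖ = ‖L‖ ∧
      ∀ w : ι → H, (∀ i, ‖w i‖ = 1) → ‖L w‖ = ‖L‖ → ‖∑ i, w i‖ ≤ ‖∑ i, v i‖ := by
  obtain ⟨v₀, hv₀, hLv₀⟩ := exists_norm_eq_one_norm_map_eq_opNorm L
  have hcompact :
      IsCompact ((Set.univ.pi fun _ : ι => sphere (0 : H) 1) ∩ {w | ‖L w‖ = ‖L‖}) :=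
    (isCompact_univ_pi fun _ => isCompact_sphere 0 1).inter_right
      (isClosed_eq L.cont.norm continuous_const)
  obtain ⟨v, ⟨hv, hLv⟩, hmax⟩ := hcompact.exists_isMaxOn ⟨v₀, by simpa using hv₀, hLv₀⟩
    (f := fun w => ‖∑ i, w i‖) (by fun_prop)
  exact ⟨v, by simpa using hv, hLv, fun w hw hLw => hmax ⟨by simpa using hw, hLw⟩⟩

theorem exists_norm_eq_one_norm_map_diag_eq_opNorm [FiniteDimensional ℝ H] [Nontrivial H]
    (L : ContinuousMultilinearMap ℝ (fun _ : ι => H) G) (hL : IsSymmetricMap L) :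
    ∃ u : H, ‖u‖ = 1 ∧ ‖L fun _ => u‖ = ‖L‖ := by
  classical
  obtain ⟨v, hv, hLv, hmax⟩ := exists_norm_eq_one_norm_map_eq_opNorm_forall_norm_sum_le L
  have hinner (i : ι) : 0 < inner ℝ (∑ l, v l) (v i) := by
    refine lt_of_lt_of_le (by simp [hv]) (norm_sq_le_inner_sum_of_norm_sum_update_neg_le ?_)
    refine hmax _ (fun l => ?_) ?_
    · rcases eq_or_ne l i with rfl | hl <;> simp [*]
    · rw [← neg_one_smul ℝ, L.map_update_smul, update_eq_self, norm_smul, hLv]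
      simp
  have hv_eq (i j : ι) : v i = v j := by
    by_contra hne
    have hij : i ≠ j := fun h => hne (congrArg v h)
    have hinner_add : 0 < inner ℝ (∑ l, v l) (v i + v j) := by
      rw [inner_add_right]
      exact add_pos (hinner i) (hinner j)
    have hadd_ne : v i + v j ≠ 0 := fun h => by simp [h] at hinner_add
    exact hne <| eq_of_norm_sum_mergeEntries_le hij (hv i) (hv j) hinner_add <|
      hmax _ (norm_mergeEntries_eq_one hv hadd_ne)
        (norm_map_mergeEntries_eq_opNorm L hL hv hLv hij hadd_ne)
  rcases isEmpty_or_nonempty ι with _ | ⟨⟨i⟩⟩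
  · obtain ⟨u, hu⟩ := exists_norm_eq H zero_le_one
    exact ⟨u, hu, by rw [← hLv, Subsingleton.elim v]⟩
  · exact ⟨v i, hv i, by rw [← hLv, ← funext fun j => hv_eq j i]⟩

theorem opNorm_le_of_norm_map_diag_le_of_innerProductSpace
    (L : ContinuousMultilinearMap ℝ (fun _ : ι => H) G) (hL : IsSymmetricMap L) {K : ℝ}
    (hK : ∀ u : H, ‖u‖ ≤ 1 → ‖L fun _ => u‖ ≤ K) : ‖L‖ ≤ K := by
  have hK₀ : 0 ≤ K := (norm_nonneg _).trans (hK 0 (by simp))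
  refine opNorm_le_of_forall_norm_eq_one L hK₀ fun v hv => ?_
  rcases isEmpty_or_nonempty ι with _ | ⟨⟨i⟩⟩
  · simpa [Subsingleton.elim v fun _ => 0] using hK 0 (by simp)
  let S := Submodule.span ℝ (Set.range v)
  let w (l : ι) : S := ⟨v l, Submodule.subset_span ⟨l, rfl⟩⟩
  have hw (l : ι) : ‖w l‖ = 1 := hv l
  have : FiniteDimensional ℝ S := FiniteDimensional.span_of_finite ℝ (Set.finite_range v)
  have : Nontrivial S := ⟨w i, 0, norm_ne_zero_iff.1 (by simp [hw])⟩
  let LS := L.compContinuousLinearMap fun _ => S.subtypeL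
  have hLS : IsSymmetricMap LS := fun σ u => hL σ fun l => u l
  obtain ⟨u, hu, hLSu⟩ := exists_norm_eq_one_norm_map_diag_eq_opNorm LS hLS
  calc ‖L v‖ = ‖LS w‖ := rfl
    _ ≤ ‖LS‖ := by simpa [hw] using LS.le_opNorm w
    _ = ‖LS fun _ => u‖ := hLSu.symm
    _ ≤ K := hK u hu.le

end InnerProductSpace

section MixedValues

variable {ι κ E G : Type*} [Finite ι] [Fintype κ] [NormedAddCommGroup E] [NormedSpace ℝ E]
  [SeminormedAddCommGroup G] [NormedSpace ℝ G]

theorem norm_sum_smul_sq_le (w : EuclideanSpace ℝ κ) (y : κ → E) :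
    ‖∑ i, w i • y i‖ ^ 2 ≤ ‖w‖ ^ 2 * ∑ i, ‖y i‖ ^ 2 :=
  calc ‖∑ i, w i • y i‖ ^ 2 ≤ (∑ i, ‖w i‖ * ‖y i‖) ^ 2 := by
        gcongr
        exact norm_sum_le_of_le _ fun i _ => norm_smul_le _ _
    _ ≤ (∑ i, ‖w i‖ ^ 2) * ∑ i, ‖y i‖ ^ 2 := sum_mul_sq_le_sq_mul_sq _ _ _
    _ = ‖w‖ ^ 2 * ∑ i, ‖y i‖ ^ 2 := by rw [EuclideanSpace.norm_sq_eq]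

theorem norm_map_comp_le_of_sum_norm_sq_le_one
    (L : ContinuousMultilinearMap ℝ (fun _ : ι => E) G) (hL : IsSymmetricMap L) {K : ℝ}
    (hK : ∀ u : E, ‖u‖ ≤ 1 → ‖L fun _ => u‖ ≤ K) {y : κ → E} (hy : ∑ i, ‖y i‖ ^ 2 ≤ 1)
    (r : ι → κ) : ‖L (y ∘ r)‖ ≤ K := by
  classical
  have := Fintype.ofFinite ι
  let T : EuclideanSpace ℝ κ →L[ℝ] E := ∑ i, (EuclideanSpace.proj i).smulRight (y i)
  have hT (w : EuclideanSpace ℝ κ) : T w = ∑ i, w i • y i := by simp [T]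
  let LT := L.compContinuousLinearMap fun _ => T
  have hLT : ‖LT‖ ≤ K := by
    refine opNorm_le_of_norm_map_diag_le_of_innerProductSpace LT (fun σ w => hL σ (T ∘ w))
      fun w hw => hK (T w) ?_
    rw [hT, ← sq_le_one_iff₀ (norm_nonneg _)]
    exact (norm_sum_smul_sq_le w y).trans
      (mul_le_one₀ (pow_le_one₀ (norm_nonneg _) hw) (by positivity) hy)
  let e : ι → EuclideanSpace ℝ κ := fun l => EuclideanSpace.single (r l) 1
  have hLe : L (y ∘ r) = LT e := congrArg L (funext fun l => by simp [hT, e])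
  calc ‖L (y ∘ r)‖ = ‖LT e‖ := by rw [hLe]
    _ ≤ ‖LT‖ := by simpa [e] using LT.le_opNorm e
    _ ≤ K := hLT

theorem pow_card_mul_norm_map_piecewise_le [DecidableEq ι]
    (L : ContinuousMultilinearMap ℝ (fun _ : ι => E) G) (hL : IsSymmetricMap L) {K : ℝ}
    (hK : ∀ u : E, ‖u‖ ≤ 1 → ‖L fun _ => u‖ ≤ K) {x z : E} {ρ : ℝ} (hρ : 0 ≤ ρ)
    (hx : ‖x‖ ^ 2 + ρ ^ 2 ≤ 1) (hz : ‖z‖ ≤ 1) (s : Finset ι) :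
    ρ ^ #s * ‖L (s.piecewise (fun _ => z) fun _ => x)‖ ≤ K := by
  have := Fintype.ofFinite ι
  have hy : ∑ i, ‖![x, ρ • z] i‖ ^ 2 ≤ 1 := by
    simp only [Fin.sum_univ_two, Matrix.cons_val_zero, Matrix.cons_val_one, norm_smul, mul_pow]
    rw [Real.norm_of_nonneg hρ]
    nlinarith [pow_le_one₀ (norm_nonneg z) hz (n := 2), sq_nonneg ρ]
  have hcomp : ![x, ρ • z] ∘ s.piecewise (fun _ => 1) (fun _ => 0)
      = s.piecewise (fun l => ρ • s.piecewise (fun _ => z) (fun _ => x) l)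
        (s.piecewise (fun _ => z) fun _ => x) := by
    funext l
    by_cases hl : l ∈ s <;> simp [hl]
  have hle := norm_map_comp_le_of_sum_norm_sq_le_one L hL hK hy
    (s.piecewise (fun _ => 1) fun _ => 0)
  rwa [hcomp, L.map_piecewise_smul, prod_const, norm_smul, norm_pow, Real.norm_of_nonneg hρ] at hle

end MixedValues

section Derivative

variable {𝕜 ι E G : Type*} [NontriviallyNormedField 𝕜] [NormedAddCommGroup E] [NormedSpace 𝕜 E]
  [NormedAddCommGroup G] [NormedSpace 𝕜 G]

theorem iteratedFDeriv_diag_apply_diag [Fintype ι] [DecidableEq ι]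
    (L : ContinuousMultilinearMap 𝕜 (fun _ : ι => E) G) (k : ℕ) (x z : E) :
    iteratedFDeriv 𝕜 k (fun u => L fun _ => u) x (fun _ => z)
      = ∑ e : Fin k ↪ ι, L ((univ.map e).piecewise (fun _ => z) fun _ => x) := by
  let diag : E →L[𝕜] ι → E := ContinuousLinearMap.pi fun _ => ContinuousLinearMap.id 𝕜 E
  change iteratedFDeriv 𝕜 k (L ∘ diag) x (fun _ => z) = _
  rw [diag.iteratedFDeriv_comp_right (n := k) L.contDiff x le_rfl, L.iteratedFDeriv_eq]
  simp only [ContinuousMultilinearMap.iteratedFDeriv,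
    ContinuousMultilinearMap.compContinuousLinearMap_apply, _root_.sum_apply,
    ContinuousMultilinearMap.iteratedFDerivComponent_apply, Pi.compRightL_apply]
  refine sum_congr rfl fun e _ => congrArg L (funext fun l => ?_)
  by_cases hl : l ∈ Set.range e
  · have hl' : l ∈ univ.map e := by simpa using hl
    simp [hl, hl', diag]
  · have hl' : l ∉ univ.map e := by simpa using hl
    simp [hl, hl', diag]

theorem isSymmetricMap_iteratedFDeriv_diag [Finite ι]
    (L : ContinuousMultilinearMap 𝕜 (fun _ : ι => E) G) (k : ℕ) (x : E) :
    IsSymmetricMap (iteratedFDeriv 𝕜 k (fun u => L fun _ => u) x) := fun σ v => by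
  have := Fintype.ofFinite ι
  have hsmooth : ContDiff 𝕜 ω fun u => L fun _ => u :=
    L.contDiff.comp (contDiff_pi.2 fun _ => contDiff_id)
  exact hsmooth.contDiffAt.iteratedFDeriv_comp_perm v σ

end Derivative

theorem norm_iteratedFDeriv_diag_le {ι E G : Type*} [Fintype ι] [NormedAddCommGroup E]
    [NormedSpace ℝ E] [NormedAddCommGroup G] [NormedSpace ℝ G]
    (L : ContinuousMultilinearMap ℝ (fun _ : ι => E) G) (hL : IsSymmetricMap L) {K : ℝ}
    (hK : ∀ u : E, ‖u‖ ≤ 1 → ‖L fun _ => u‖ ≤ K) (k : ℕ) {x : E} {ρ : ℝ} (hρ : 0 < ρ)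
    (hx : ‖x‖ ^ 2 + ρ ^ 2 ≤ 1) :
    ‖iteratedFDeriv ℝ k (fun u => L fun _ => u) x‖
      ≤ (Fintype.card ι).choose k * k ^ k * (ρ ^ k)⁻¹ * K := by
  classical
  set D := iteratedFDeriv ℝ k (fun u => L fun _ => u) x
  have hdiag (z : E) (hz : ‖z‖ ≤ 1) :
      ‖D fun _ => z‖ ≤ (Fintype.card ι).descFactorial k * ((ρ ^ k)⁻¹ * K) := by
    have hterm (e : Fin k ↪ ι) :
        ‖L ((univ.map e).piecewise (fun _ => z) fun _ => x)‖ ≤ (ρ ^ k)⁻¹ * K := by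
      rw [le_inv_mul_iff₀ (by positivity)]
      simpa using pow_card_mul_norm_map_piecewise_le L hL hK hρ.le hx hz (univ.map e)
    rw [iteratedFDeriv_diag_apply_diag]
    simpa using norm_sum_le_of_le univ fun e _ => hterm e
  refine (opNorm_le_of_norm_map_diag_le D (isSymmetricMap_iteratedFDeriv_diag L k x)
    hdiag).trans_eq ?_
  rw [Fintype.card_fin, Nat.descFactorial_eq_factorial_mul_choose]
  push_cast
  field_simp

theorem bernstein_homogeneous_multilinear_banach_general
    {E G : Type*} [NormedAddCommGroup E] [NormedSpace ℝ E] [NormedAddCommGroup G] [NormedSpace ℝ G]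
    (m k : ℕ) (F : E → G)
    (hF : ∃ L : ContinuousMultilinearMap ℝ (fun _ : Fin m => E) G,
      IsSymmetricMap L ∧ ∀ u, F u = L (fun _ => u))
    (x : E) (hx : ‖x‖ < 1) :
    ‖iteratedFDeriv ℝ k F x‖
      ≤ (m.choose k : ℝ) * (k : ℝ) ^ k * (1 - ‖x‖ ^ 2) ^ (-(k : ℝ) / 2)
          * sSup ((fun y => ‖F y‖) '' closedBall (0 : E) 1) := by
  obtain ⟨L, hL, hFL⟩ := hF
  obtain rfl : F = fun u => L fun _ => u := funext hFL
  have hpos : 0 < 1 - ‖x‖ ^ 2 := sub_pos.2 (pow_lt_one₀ (norm_nonneg x) hx two_ne_zero)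
  have hsqrt : ‖x‖ ^ 2 + √(1 - ‖x‖ ^ 2) ^ 2 ≤ 1 := by rw [Real.sq_sqrt hpos.le, add_sub_cancel]
  have hpow : (1 - ‖x‖ ^ 2) ^ (-(k : ℝ) / 2) = (√(1 - ‖x‖ ^ 2) ^ k)⁻¹ := by
    rw [neg_div, Real.rpow_neg hpos.le, Real.rpow_div_two_eq_sqrt _ hpos.le, Real.rpow_natCast]
  have hK (u : E) (hu : ‖u‖ ≤ 1) :
      ‖L fun _ => u‖ ≤ sSup ((fun y => ‖L fun _ => y‖) '' closedBall (0 : E) 1) :=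
    le_csSup (bddAbove_norm_map_diag_closedBall L) ⟨u, mem_closedBall_zero_iff.2 hu, rfl⟩
  rw [hpow]
  simpa using norm_iteratedFDeriv_diag_le L hL hK k (Real.sqrt_pos.2 hpos) hsqrt

/-- Bernstein-type inequality for the `k`-th Fréchet derivative of an `m`-homogeneous
polynomial `L̂` on a real Banach space: for `k ≤ m` and `‖x‖ < 1`,
`‖D^k L̂(x)‖ ≤ (m choose k) k^k (1-‖x‖²)^(-k/2) ‖L̂‖`. -/
theorem bernstein_homogeneous_multilinear_banach
    {X : Type*} [NormedAddCommGroup X] [NormedSpace ℝ X] [CompleteSpace X]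
    (m k : ℕ) (hk : k ≤ m) (F : X → ℝ)
    (hF : ∃ L : ContinuousMultilinearMap ℝ (fun _ : Fin m => X) ℝ,
      (∀ (σ : Equiv.Perm (Fin m)) (v : Fin m → X), L (v ∘ σ) = L v) ∧
      ∀ u, F u = L (fun _ => u))
    (x : X) (hx : ‖x‖ < 1) :
    ‖iteratedFDeriv ℝ k F x‖
      ≤ (m.choose k : ℝ) * (k : ℝ) ^ k * (1 - ‖x‖ ^ 2) ^ (-(k : ℝ) / 2)
          * sSup ((fun y => ‖F y‖) '' closedBall (0 : X) 1) :=
  bernstein_homogeneous_multilinear_banach_general m k F hF x hx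
end

section
/- Let X be a real Banach space and let L̂ : X → ℝ be a continuous m-homogeneous polynomial. Then for every k ≤ m and every x ∈ X with ‖x‖ ≤ 1: (a) ‖D̂^k L̂(x)‖ ≤ C(m,k) · k! · m^{m/2} / ((m−k)^{(m−k)/2} · k^{k/2}) · ‖L̂‖, and (b) ‖D^k L̂(x)‖ ≤ C(m,k) · m^{m/2} · k^{k/2} / (m−k)^{(m−k)/2} · ‖L̂‖, where C(m,k) is the binomial coefficient m choose k (and 0⁰ is read as 1 when k = m). -/
open Metric

open NormedSpace Function
open scoped Nat ContDiff RealInnerProductSpace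

/-!
Two estimates on a symmetric multilinear map `L` in terms of `C = sup ‖L(u, …, u)‖` over the unit
ball drive the proof. On an arbitrary normed space, averaging `(∏ εᵢ) L(∑ εᵢ yᵢ, …, ∑ εᵢ yᵢ)` over
all signs leaves only the terms indexed by permutations, so `k! ‖L‖ ≤ k ^ k C` for `k` variables.
On a Euclidean space, Banach's theorem says `‖L‖ ≤ C`: among the unit tuples maximizing `‖L‖`, take
one whose sum `S` is longest. Flipping the sign of an entry `xᵢ` preserves `‖L‖`, so it cannot
lengthen `S`, which forces `⟪S, xᵢ⟫ ≥ 1`. Replacing two entries by their normalized sum keeps `‖L‖`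
maximal by the parallelogram law, and would lengthen `S` unless the two entries were equal. Hence
all entries coincide.

The diagonal of `D^k L̂(x)` at `y` is a sum of `m! / (m - k)!` values of `L` at `m - k` copies of
`x` and `k` copies of `y`. Pulling `L` back to the Euclidean plane along the map
`(s, t) ↦ s √(m - k) x + t √k y`, of norm at most `√m`, and applying Banach's theorem there bounds
each value. Polarizing `D^k L̂(x)` then costs the factor `k ^ k / k!`.
-/

/-- Symmetry of a map of several variables, stated for plain functions so that it applies to
algebraic and to continuous multilinear maps alike. -/
def IsPermInvariant {ι M N : Type*} (f : (ι → M) → N) : Prop :=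
  ∀ (σ : Equiv.Perm ι) (v : ι → M), f (v ∘ σ) = f v

section Polarization

variable {ι M N : Type*} [Fintype ι] [AddCommGroup M] [AddCommGroup N]

/-- The coefficient `∏ i, ε i * ε (r i)` with which `L (y ∘ r)` occurs in the signed sum of the
polarization formula, as a character of the group of sign vectors `ε`. -/
def signCharacter (r : ι → ι) : (ι → ℤˣ) →* ℤˣ where
  toFun ε := ∏ i, ε i * ε (r i)
  map_one' := by simp
  map_mul' ε δ := by
    rw [← Finset.prod_mul_distrib]
    exact Finset.prod_congr rfl fun i _ => mul_mul_mul_comm _ _ _ _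

lemma signCharacter_eq_one_iff (r : ι → ι) : signCharacter r = 1 ↔ Injective r := by
  classical
  refine ⟨fun h => Finite.injective_iff_surjective.2 fun i => ?_, fun h => ?_⟩
  · by_contra! hi
    -- A sign that `r` never reads occurs exactly once in the product.
    have hflip := DFunLike.congr_fun h (Pi.mulSingle i (-1))
    simp [signCharacter, Finset.prod_mul_distrib, Pi.mulSingle_apply, hi] at hflip
  · refine MonoidHom.ext fun ε => ?_
    have hbij : Bijective r := Finite.injective_iff_bijective.1 h
    simp [signCharacter, Finset.prod_mul_distrib, hbij.prod_comp ε, Int.units_mul_self]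

lemma sum_signCharacter [DecidableEq ι] (r : ι → ι) [Decidable (Injective r)] :
    ∑ ε, (signCharacter r ε : ℤ) = if Injective r then 2 ^ Fintype.card ι else 0 := by
  classical
  have h := sum_hom_units ((Units.coeHom ℤ).comp (signCharacter r))
  have hone : (Units.coeHom ℤ).comp (signCharacter r) = 1 ↔ Injective r := by
    rw [← signCharacter_eq_one_iff]
    exact ⟨fun h => MonoidHom.ext fun ε => Units.ext (DFunLike.congr_fun h ε),
      fun h => by simp [h]⟩
  simpa [hone, Fintype.card_units_int] using h

lemma card_filter_injective [DecidableEq ι] :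
    (Finset.univ.filter fun r : ι → ι => Injective r).card = (Fintype.card ι)! := by
  rw [← Fintype.card_subtype, Fintype.card_congr (Equiv.subtypeInjectiveEquivEmbedding ι ι),
    Fintype.card_embedding_eq, Nat.descFactorial_self]

theorem polarization_formula [DecidableEq ι] (G : MultilinearMap ℤ (fun _ : ι => M) N)
    (hG : IsPermInvariant G) (y : ι → M) :
    ∑ ε : ι → ℤˣ, (∏ i, ε i) • G (fun _ => ∑ i, ε i • y i)
      = (2 ^ Fintype.card ι * (Fintype.card ι)!) • G y := by
  have hexpand (ε : ι → ℤˣ) : (∏ i, ε i) • G (fun _ => ∑ i, ε i • y i)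
      = ∑ r : ι → ι, (signCharacter r ε : ℤ) • G (y ∘ r) := by
    simp only [Units.smul_def, G.map_sum, Finset.smul_sum]
    refine Finset.sum_congr rfl fun r _ => ?_
    rw [G.map_smul_univ, smul_smul]
    simp [signCharacter, Finset.prod_mul_distrib, comp_def]
  have hsymm (r : ι → ι) (hr : Injective r) : G (y ∘ r) = G y :=
    hG (Equiv.ofBijective r (Finite.injective_iff_bijective.1 hr)) y
  calc ∑ ε : ι → ℤˣ, (∏ i, ε i) • G (fun _ => ∑ i, ε i • y i)
      = ∑ r : ι → ι, (∑ ε, (signCharacter r ε : ℤ)) • G (y ∘ r) := by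
        simp only [hexpand, Finset.sum_smul]
        exact Finset.sum_comm
    _ = ∑ r : ι → ι with Injective r, (2 ^ Fintype.card ι : ℕ) • G y := by
        rw [Finset.sum_filter]
        refine Finset.sum_congr rfl fun r _ => ?_
        rw [sum_signCharacter]
        split_ifs with hr
        · rw [hsymm r hr, ← natCast_zsmul]; push_cast; rfl
        · exact zero_smul _ _
    _ = (2 ^ Fintype.card ι * (Fintype.card ι)!) • G y := by
        rw [Finset.sum_const, card_filter_injective, smul_smul, mul_comm]

end Polarization

/-- The homogeneous polynomial `L̂ : u ↦ L (u, …, u)` of a multilinear map `L`. Since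
`iteratedFDeriv` takes values in continuous multilinear maps, `D̂^k L̂(x)` is
`homogeneousPolynomial (iteratedFDeriv 𝕜 k (homogeneousPolynomial L) x)`. -/
def homogeneousPolynomial {𝕜 ι X Y : Type*} [Semiring 𝕜] [AddCommMonoid X] [Module 𝕜 X]
    [TopologicalSpace X] [AddCommMonoid Y] [Module 𝕜 Y] [TopologicalSpace Y]
    (L : ContinuousMultilinearMap 𝕜 (fun _ : ι => X) Y) (u : X) : Y :=
  L fun _ => u

lemma norm_units_int_smul {V : Type*} [SeminormedAddCommGroup V] (ε : ℤˣ) (z : V) :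
    ‖ε • z‖ = ‖z‖ := by
  rcases Int.units_eq_one_or ε with rfl | rfl <;> simp

section Norms

variable {ι X Y : Type*} [NormedAddCommGroup X] [NormedSpace ℝ X]
  [NormedAddCommGroup Y] [NormedSpace ℝ Y]

lemma norm_normalize_le_one (u : X) : ‖normalize u‖ ≤ 1 := by
  by_cases hu : u = 0
  · simp [hu]
  · exact (norm_normalize hu).le

variable [Fintype ι]

lemma norm_map_eq_prod_norm_mul (L : MultilinearMap ℝ (fun _ : ι => X) Y) (v : ι → X) :
    ‖L v‖ = (∏ i, ‖v i‖) * ‖L fun i => normalize (v i)‖ := by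
  have h := L.map_smul_univ (fun i => ‖v i‖) fun i => normalize (v i)
  simp only [norm_smul_normalize] at h
  rw [h, norm_smul, Real.norm_of_nonneg (Finset.prod_nonneg fun i _ => norm_nonneg _)]

variable {L : ContinuousMultilinearMap ℝ (fun _ : ι => X) Y} {C : ℝ}

lemma norm_homogeneousPolynomial_le
    (hC : ∀ u, ‖u‖ ≤ 1 → ‖homogeneousPolynomial L u‖ ≤ C) (u : X) :
    ‖homogeneousPolynomial L u‖ ≤ C * ‖u‖ ^ Fintype.card ι := by
  refine (norm_map_eq_prod_norm_mul L.toMultilinearMap fun _ => u).trans_le ?_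
  rw [Finset.prod_const, Finset.card_univ, mul_comm]
  gcongr
  exact hC _ (norm_normalize_le_one u)

lemma factorial_mul_norm_map_le (hL : IsPermInvariant L)
    (hC : ∀ u, ‖u‖ ≤ 1 → ‖homogeneousPolynomial L u‖ ≤ C) {v : ι → X} (hv : ∀ i, ‖v i‖ ≤ 1) :
    (Fintype.card ι)! * ‖L v‖ ≤ Fintype.card ι ^ Fintype.card ι * C := by
  classical
  have hC0 : 0 ≤ C := (norm_nonneg _).trans (hC 0 (by simp))
  have hterm (ε : ι → ℤˣ) :
      ‖(∏ i, ε i) • L (fun _ => ∑ i, ε i • v i)‖ ≤ Fintype.card ι ^ Fintype.card ι * C := by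
    have hnorm : ‖∑ i, ε i • v i‖ ≤ Fintype.card ι := by
      refine (norm_sum_le _ _).trans ?_
      simpa [norm_units_int_smul] using Finset.sum_le_sum fun i (_ : i ∈ Finset.univ) => hv i
    rw [norm_units_int_smul, mul_comm]
    exact (norm_homogeneousPolynomial_le hC _).trans (by gcongr)
  have hpol := polarization_formula (L.toMultilinearMap.restrictScalars ℤ) hL v
  have hle : 2 ^ Fintype.card ι * ((Fintype.card ι)! * ‖L v‖)
      ≤ 2 ^ Fintype.card ι * (Fintype.card ι ^ Fintype.card ι * C) := by
    calc _ = ‖(2 ^ Fintype.card ι * (Fintype.card ι)!) • L v‖ := by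
          rw [← Nat.cast_smul_eq_nsmul ℝ, norm_smul, Real.norm_natCast, ← mul_assoc]
          push_cast
          rfl
      _ = ‖∑ ε : ι → ℤˣ, (∏ i, ε i) • L (fun _ => ∑ i, ε i • v i)‖ := congrArg norm hpol.symm
      _ ≤ _ := by
          refine (norm_sum_le_of_le _ fun ε _ => hterm ε).trans_eq ?_
          simp [Fintype.card_units_int]
  exact le_of_mul_le_mul_left hle (by positivity)

theorem factorial_mul_opNorm_le (hL : IsPermInvariant L)
    (hC : ∀ u, ‖u‖ ≤ 1 → ‖homogeneousPolynomial L u‖ ≤ C) :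
    (Fintype.card ι)! * ‖L‖ ≤ Fintype.card ι ^ Fintype.card ι * C := by
  have hC0 : 0 ≤ C := (norm_nonneg _).trans (hC 0 (by simp))
  have hfact : (0 : ℝ) < (Fintype.card ι)! := by positivity
  rw [← le_div_iff₀' hfact]
  refine L.opNorm_le_bound (by positivity) fun v => ?_
  refine (norm_map_eq_prod_norm_mul L.toMultilinearMap v).trans_le ?_
  rw [mul_comm]
  gcongr
  rw [le_div_iff₀' hfact]
  exact factorial_mul_norm_map_le hL hC fun i => norm_normalize_le_one (v i)

end Norms

lemma sum_update_eq {ι E : Type*} [AddCommGroup E] [Fintype ι] [DecidableEq ι] (x : ι → E)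
    (i : ι) (u : E) : ∑ l, update x i u l = ∑ l, x l - x i + u := by
  rw [Finset.sum_update_of_mem (Finset.mem_univ i), ← Finset.sum_sdiff (Finset.subset_univ {i}),
    Finset.sum_singleton]
  abel

section UnitTuples

variable {ι E Y : Type*} [SeminormedAddCommGroup E] [SeminormedAddCommGroup Y]

variable (ι E) in
/-- The `ι`-tuples of unit vectors of `E`. -/
def unitTuples : Set (ι → E) := Set.univ.pi fun _ => sphere 0 1

lemma mem_unitTuples {x : ι → E} : x ∈ unitTuples ι E ↔ ∀ i, ‖x i‖ = 1 := by
  simp [unitTuples]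

lemma update_mem_unitTuples [DecidableEq ι] {x : ι → E} (hx : x ∈ unitTuples ι E) (i : ι) {u : E}
    (hu : ‖u‖ = 1) : update x i u ∈ unitTuples ι E :=
  (Set.update_mem_pi_iff_of_mem hx).2 fun _ => by simpa using hu

lemma isCompact_unitTuples [ProperSpace E] : IsCompact (unitTuples ι E) :=
  isCompact_univ_pi fun _ => isCompact_sphere _ _

/-- The unit tuples at which `‖f‖` is largest; Banach's theorem is the search for a constant tuple
among them when `f` is symmetric and multilinear. -/
def normMaximizers (f : (ι → E) → Y) : Set (ι → E) :=
  {x ∈ unitTuples ι E | IsMaxOn (fun w => ‖f w‖) (unitTuples ι E) x}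

lemma isCompact_normMaximizers [ProperSpace E] {f : (ι → E) → Y} (hf : Continuous f) :
    IsCompact (normMaximizers f) := by
  have hclosed : IsClosed {x | IsMaxOn (fun w => ‖f w‖) (unitTuples ι E) x} := by
    simp only [isMaxOn_iff, Set.ofPred_forall]
    exact isClosed_biInter fun w _ => isClosed_le continuous_const hf.norm
  exact isCompact_unitTuples.inter_right hclosed

lemma mem_normMaximizers_of_norm_le {f : (ι → E) → Y} {x w : ι → E}
    (hx : x ∈ normMaximizers f) (hw : w ∈ unitTuples ι E) (h : ‖f x‖ ≤ ‖f w‖) :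
    w ∈ normMaximizers f :=
  ⟨hw, fun _ hv => (hx.2 hv).trans h⟩

end UnitTuples

section BilinearSlice

variable {R ι E Y : Type*} [CommSemiring R] [AddCommMonoid E] [Module R E] [AddCommMonoid Y]
  [Module R Y] [DecidableEq ι] (L : MultilinearMap R (fun _ : ι => E) Y) (x : ι → E) {i j : ι}

/-- The bilinear map obtained from `L` by freeing the distinct arguments `i` and `j` and freezing
the others at `x`. -/
def bilinearSlice (hij : i ≠ j) : E →ₗ[R] E →ₗ[R] Y :=
  LinearMap.mk₂ R (fun u w => L (update (update x i u) j w))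
    (fun u u' w => by simp only [update_comm hij, L.map_update_add])
    (fun c u w => by simp only [update_comm hij, L.map_update_smul])
    (fun u w w' => L.map_update_add _ _ _ _)
    (fun c u w => L.map_update_smul _ _ _ _)

lemma bilinearSlice_apply (hij : i ≠ j) (u w : E) :
    bilinearSlice L x hij u w = L (update (update x i u) j w) := rfl

variable {L} in
lemma bilinearSlice_comm (hL : IsPermInvariant L) (hij : i ≠ j) (u w : E) :
    bilinearSlice L x hij u w = bilinearSlice L x hij w u := by
  have hswap : update (update x i u) j w = update (update x i w) j u ∘ Equiv.swap i j := by
    ext l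
    simp only [comp_apply, update_apply, Equiv.swap_apply_def]
    split_ifs <;> simp_all
  rw [bilinearSlice_apply, hswap, hL, bilinearSlice_apply]

end BilinearSlice

section Banach

variable {ι E Y : Type*} [NormedAddCommGroup E] [InnerProductSpace ℝ E]
  [NormedAddCommGroup Y] [NormedSpace ℝ Y]

lemma norm_self_eq_sq_mul_norm_normalize (B : E →ₗ[ℝ] E →ₗ[ℝ] Y) (u : E) :
    ‖B u u‖ = ‖u‖ ^ 2 * ‖B (normalize u) (normalize u)‖ := by
  conv_lhs => rw [← norm_smul_normalize u]
  simp only [map_smul, LinearMap.smul_apply, norm_smul, norm_norm]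
  ring

lemma norm_le_norm_normalize_add {B : E →ₗ[ℝ] E →ₗ[ℝ] Y} {a b : E} (hB : B b a = B a b)
    (ha : ‖a‖ = 1) (hb : ‖b‖ = 1) (hab : a + b ≠ 0)
    (hmax : ∀ u, ‖u‖ = 1 → ‖B u u‖ ≤ ‖B a b‖) :
    ‖B a b‖ ≤ ‖B (normalize (a + b)) (normalize (a + b))‖ := by
  have hpol : B (a + b) (a + b) - B (a - b) (a - b) = (4 : ℝ) • B a b := by
    simp only [map_add, map_sub, LinearMap.add_apply, LinearMap.sub_apply, hB]
    module
  have hdiff : ‖B (a - b) (a - b)‖ ≤ ‖a - b‖ ^ 2 * ‖B a b‖ := by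
    by_cases h : a - b = 0
    · simp [h]
    · rw [norm_self_eq_sq_mul_norm_normalize]
      gcongr
      exact hmax _ (norm_normalize h)
  have hfour : 4 * ‖B a b‖ ≤ ‖B (a + b) (a + b)‖ + ‖B (a - b) (a - b)‖ := by
    calc 4 * ‖B a b‖ = ‖B (a + b) (a + b) - B (a - b) (a - b)‖ := by
          rw [hpol, norm_smul, Real.norm_of_nonneg (by norm_num)]
      _ ≤ _ := norm_sub_le _ _
  have hpar : ‖a + b‖ ^ 2 + ‖a - b‖ ^ 2 = 4 := by
    have := parallelogram_law_with_norm ℝ a b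
    rw [ha, hb] at this
    linarith
  have hpos : 0 < ‖a + b‖ ^ 2 := by have := norm_pos_iff.2 hab; positivity
  rw [norm_self_eq_sq_mul_norm_normalize B (a + b)] at hfour
  refine le_of_mul_le_mul_left ?_ hpos
  calc ‖a + b‖ ^ 2 * ‖B a b‖ = 4 * ‖B a b‖ - ‖a - b‖ ^ 2 * ‖B a b‖ := by rw [← hpar]; ring
    _ ≤ _ := by linarith

lemma one_le_inner_of_norm_sub_two_smul_le {s a : E} (ha : ‖a‖ = 1)
    (h : ‖s - (2 : ℝ) • a‖ ≤ ‖s‖) : 1 ≤ ⟪s, a⟫ := by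
  have hsq := pow_le_pow_left₀ (norm_nonneg _) h 2
  rw [norm_sub_sq_real, inner_smul_right, norm_smul, ha, Real.norm_ofNat] at hsq
  linarith

lemma eq_of_norm_add_normalize_le {s a b : E} (ha : ‖a‖ = 1) (hb : ‖b‖ = 1)
    (hpos : 0 < ⟪s, a + b⟫)
    (h : ‖s + (2 - ‖a + b‖) • normalize (a + b)‖ ≤ ‖s‖) : a = b := by
  have hab : a + b ≠ 0 := fun h0 => by simp [h0] at hpos
  have hinner : 0 < ⟪s, normalize (a + b)⟫ := by
    rw [NormedSpace.normalize, inner_smul_right]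
    have := norm_pos_iff.2 hab
    positivity
  have htri : ‖a + b‖ ≤ 2 := (norm_add_le _ _).trans_eq (by rw [ha, hb]; norm_num)
  have hsq := pow_le_pow_left₀ (norm_nonneg _) h 2
  rw [norm_add_sq_real, inner_smul_right, norm_smul, norm_normalize hab, mul_one,
    Real.norm_eq_abs, sq_abs] at hsq
  have hnorm : ‖a + b‖ = 2 := by
    by_contra hne
    have : 0 < 2 - ‖a + b‖ := sub_pos.2 (lt_of_le_of_ne htri hne)
    nlinarith [mul_pos this hinner]
  exact eq_of_norm_eq_of_norm_add_eq (ha.trans hb.symm) (by rw [hnorm, ha, hb]; norm_num)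

lemma update_neg_mem_normMaximizers [DecidableEq ι] {L : MultilinearMap ℝ (fun _ : ι => E) Y}
    {x : ι → E} (hx : x ∈ normMaximizers L) (i : ι) :
    update x i (-x i) ∈ normMaximizers L := by
  have hxi := mem_unitTuples.1 hx.1 i
  refine mem_normMaximizers_of_norm_le hx
    (update_mem_unitTuples hx.1 i (by rwa [norm_neg])) (le_of_eq ?_)
  rw [L.map_update_neg, update_eq_self, norm_neg]

lemma update_normalize_add_mem_normMaximizers [DecidableEq ι]
    {L : MultilinearMap ℝ (fun _ : ι => E) Y} {x : ι → E} {i j : ι} (hL : IsPermInvariant L)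
    (hx : x ∈ normMaximizers L) (hij : i ≠ j) (hadd : x i + x j ≠ 0) :
    update (update x i (normalize (x i + x j))) j (normalize (x i + x j)) ∈ normMaximizers L := by
  have hx1 := mem_unitTuples.1 hx.1
  have hunit {u : E} (hu : ‖u‖ = 1) : update (update x i u) j u ∈ unitTuples ι E :=
    update_mem_unitTuples (update_mem_unitTuples hx.1 i hu) j hu
  have hval : bilinearSlice L x hij (x i) (x j) = L x := by
    simp [bilinearSlice_apply]
  refine mem_normMaximizers_of_norm_le hx (hunit (norm_normalize hadd)) ?_
  rw [← hval, ← bilinearSlice_apply L x hij]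
  refine norm_le_norm_normalize_add (bilinearSlice_comm x hL hij _ _) (hx1 i) (hx1 j) hadd ?_
  intro u hu
  rw [hval]
  exact hx.2 (hunit hu)

lemma eq_of_isMaxOn_norm_sum [Fintype ι] {L : MultilinearMap ℝ (fun _ : ι => E) Y}
    (hL : IsPermInvariant L) {x : ι → E} (hx : x ∈ normMaximizers L)
    (hmax : IsMaxOn (fun w => ‖∑ l, w l‖) (normMaximizers L) x) (i j : ι) : x i = x j := by
  classical
  have hx1 := mem_unitTuples.1 hx.1
  set s := ∑ l, x l
  have hinner (l : ι) : 1 ≤ ⟪s, x l⟫ := by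
    refine one_le_inner_of_norm_sub_two_smul_le (hx1 l) ?_
    have hflip := isMaxOn_iff.1 hmax _ (update_neg_mem_normMaximizers hx l)
    rwa [sum_update_eq, show s - x l + -x l = s - (2 : ℝ) • x l by module] at hflip
  by_contra hne
  have hij : i ≠ j := fun h => hne (congrArg x h)
  have hpos : 0 < ⟪s, x i + x j⟫ := by
    rw [inner_add_right]; linarith [hinner i, hinner j]
  have hadd : x i + x j ≠ 0 := fun h0 => by simp [h0] at hpos
  refine hne (eq_of_norm_add_normalize_le (hx1 i) (hx1 j) hpos ?_)
  have hmerge := isMaxOn_iff.1 hmax _ (update_normalize_add_mem_normMaximizers hL hx hij hadd)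
  set z := normalize (x i + x j)
  have hz : ‖x i + x j‖ • z = x i + x j := norm_smul_normalize _
  have hsum : s - x i + z - x j + z = s + (2 - ‖x i + x j‖) • z := by
    rw [sub_smul, hz]; module
  rwa [sum_update_eq, sum_update_eq, update_of_ne hij.symm, hsum] at hmerge

theorem norm_map_le_of_norm_homogeneousPolynomial_le [Finite ι] [ProperSpace E]
    {L : ContinuousMultilinearMap ℝ (fun _ : ι => E) Y} (hL : IsPermInvariant L) {C : ℝ}
    (hC : ∀ u, ‖u‖ ≤ 1 → ‖homogeneousPolynomial L u‖ ≤ C) {v : ι → E} (hv : ∀ i, ‖v i‖ = 1) :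
    ‖L v‖ ≤ C := by
  cases nonempty_fintype ι
  obtain ⟨x₀, hx₀, hmax₀⟩ := (isCompact_unitTuples (E := E)).exists_isMaxOn
    ⟨v, mem_unitTuples.2 hv⟩ L.cont.norm.continuousOn
  obtain ⟨x, hx, hmax⟩ := (isCompact_normMaximizers L.cont).exists_isMaxOn ⟨x₀, hx₀, hmax₀⟩
    (f := fun w => ‖∑ l, w l‖) (by fun_prop)
  have hconst : ∃ u, ‖u‖ ≤ 1 ∧ x = fun _ => u := by
    rcases isEmpty_or_nonempty ι with _ | ⟨⟨i⟩⟩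
    · exact ⟨0, by simp, Subsingleton.elim _ _⟩
    · exact ⟨x i, (mem_unitTuples.1 hx.1 i).le,
        funext fun l => eq_of_isMaxOn_norm_sum (L := L.toMultilinearMap) hL hx hmax l i⟩
  obtain ⟨u, hu, rfl⟩ := hconst
  exact (hx.2 (mem_unitTuples.2 hv)).trans (hC u hu)

end Banach

lemma map_piecewise_smul_smul {R ι X Y : Type*} [CommSemiring R] [AddCommMonoid X] [Module R X]
    [AddCommMonoid Y] [Module R Y] [Fintype ι] [DecidableEq ι]
    (L : MultilinearMap R (fun _ : ι => X) Y) (s : Finset ι) (a b : R) (x y : X) :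
    L (s.piecewise (fun _ => b • y) fun _ => a • x)
      = (a ^ (Fintype.card ι - s.card) * b ^ s.card)
        • L (s.piecewise (fun _ => y) fun _ => x) := by
  have hsmul : s.piecewise (fun _ => b • y) (fun _ => a • x) = fun i =>
      s.piecewise (fun _ => b) (fun _ => a) i • s.piecewise (fun _ => y) (fun _ => x) i := by
    ext i
    by_cases hi : i ∈ s <;> simp [hi]
  rw [hsmul, L.map_smul_univ, Finset.prod_piecewise]
  simp [Finset.card_univ_sdiff, mul_comm]

section Mixed

variable {ι X Y : Type*} [Fintype ι] [NormedAddCommGroup X] [NormedSpace ℝ X]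
  [NormedAddCommGroup Y] [NormedSpace ℝ Y]

/-- The linear map `(s, t) ↦ s • p + t • q` on the Euclidean plane, for which `ℂ` serves as the
model with its Euclidean norm. -/
noncomputable def planeMap (p q : X) : ℂ →L[ℝ] X :=
  Complex.reCLM.smulRight p + Complex.imCLM.smulRight q

lemma planeMap_apply (p q : X) (z : ℂ) : planeMap p q z = z.re • p + z.im • q := rfl

lemma norm_planeMap_le (p q : X) (z : ℂ) : ‖planeMap p q z‖ ≤ √(‖p‖ ^ 2 + ‖q‖ ^ 2) * ‖z‖ := by
  have hcauchy : (|z.re| * ‖p‖ + |z.im| * ‖q‖) ^ 2 ≤ (‖p‖ ^ 2 + ‖q‖ ^ 2) * ‖z‖ ^ 2 := by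
    rw [Complex.sq_norm, Complex.normSq_apply, ← abs_mul_abs_self z.re, ← abs_mul_abs_self z.im]
    nlinarith [sq_nonneg (|z.re| * ‖q‖ - |z.im| * ‖p‖)]
  calc ‖planeMap p q z‖ ≤ |z.re| * ‖p‖ + |z.im| * ‖q‖ := by
        rw [planeMap_apply]
        simpa only [norm_smul, Real.norm_eq_abs] using norm_add_le (z.re • p) (z.im • q)
    _ ≤ √((‖p‖ ^ 2 + ‖q‖ ^ 2) * ‖z‖ ^ 2) := Real.le_sqrt_of_sq_le hcauchy
    _ = √(‖p‖ ^ 2 + ‖q‖ ^ 2) * ‖z‖ := by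
        rw [Real.sqrt_mul (by positivity), Real.sqrt_sq (norm_nonneg z)]

variable [DecidableEq ι] {L : ContinuousMultilinearMap ℝ (fun _ : ι => X) Y} {C : ℝ}

theorem norm_map_piecewise_le (hL : IsPermInvariant L)
    (hC : ∀ u, ‖u‖ ≤ 1 → ‖homogeneousPolynomial L u‖ ≤ C) (s : Finset ι) (p q : X) :
    ‖L (s.piecewise (fun _ => q) fun _ => p)‖ ≤ √(‖p‖ ^ 2 + ‖q‖ ^ 2) ^ Fintype.card ι * C := by
  have hC0 : 0 ≤ C := (norm_nonneg _).trans (hC 0 (by simp))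
  let Lplane : ContinuousMultilinearMap ℝ (fun _ : ι => ℂ) Y :=
    L.compContinuousLinearMap fun _ => planeMap p q
  have hball (z : ℂ) (hz : ‖z‖ ≤ 1) :
      ‖homogeneousPolynomial Lplane z‖ ≤ √(‖p‖ ^ 2 + ‖q‖ ^ 2) ^ Fintype.card ι * C := by
    refine (norm_homogeneousPolynomial_le hC (planeMap p q z)).trans ?_
    rw [mul_comm]
    gcongr
    exact (norm_planeMap_le p q z).trans (mul_le_of_le_one_right (Real.sqrt_nonneg _) hz)
  have hbasis : L (s.piecewise (fun _ => q) fun _ => p)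
      = Lplane (s.piecewise (fun _ => Complex.I) fun _ => 1) := by
    refine congrArg L (funext fun i => ?_)
    by_cases hi : i ∈ s <;> simp [hi, planeMap_apply]
  rw [hbasis]
  refine norm_map_le_of_norm_homogeneousPolynomial_le
    (fun σ v => hL σ fun i => planeMap p q (v i)) hball fun i => ?_
  by_cases hi : i ∈ s <;> simp [hi]

/-- The constant `m^(m/2) / ((m-k)^((m-k)/2) k^(k/2))` bounding `‖L(x, …, x, y, …, y)‖`, with `k`
entries `y`, in terms of `‖L̂‖`. Natural powers of square roots replace the real powers, and `m - k`
is truncated subtraction. -/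
noncomputable def mixedConst (m k : ℕ) : ℝ := √m ^ m / (√(m - k : ℕ) ^ (m - k) * √k ^ k)

lemma sqrt_natCast_pow_self_pos (n : ℕ) : 0 < √n ^ n := by
  rcases n.eq_zero_or_pos with rfl | hn
  · simp
  · positivity

lemma rpow_natCast_half_self (n : ℕ) : (n : ℝ) ^ ((n : ℝ) / 2) = √n ^ n := by
  rw [Real.rpow_div_two_eq_sqrt _ n.cast_nonneg, Real.rpow_natCast]

lemma mixedConst_eq_rpow {m k : ℕ} (hk : k ≤ m) :
    mixedConst m k = (m : ℝ) ^ ((m : ℝ) / 2)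
      / (((m : ℝ) - k) ^ (((m : ℝ) - k) / 2) * (k : ℝ) ^ ((k : ℝ) / 2)) := by
  simp only [mixedConst, ← Nat.cast_sub hk, rpow_natCast_half_self]

lemma sq_norm_sqrt_smul_le {x : X} (hx : ‖x‖ ≤ 1) (n : ℕ) : ‖√(n : ℝ) • x‖ ^ 2 ≤ n := by
  rw [norm_smul, mul_pow, Real.norm_of_nonneg (Real.sqrt_nonneg _), Real.sq_sqrt n.cast_nonneg]
  exact mul_le_of_le_one_right n.cast_nonneg (pow_le_one₀ (norm_nonneg x) hx)

theorem norm_map_piecewise_le_mixedConst_mul (hL : IsPermInvariant L)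
    (hC : ∀ u, ‖u‖ ≤ 1 → ‖homogeneousPolynomial L u‖ ≤ C) (s : Finset ι) {x y : X}
    (hx : ‖x‖ ≤ 1) (hy : ‖y‖ ≤ 1) :
    ‖L (s.piecewise (fun _ => y) fun _ => x)‖ ≤ mixedConst (Fintype.card ι) s.card * C := by
  have hC0 : 0 ≤ C := (norm_nonneg _).trans (hC 0 (by simp))
  let a : ℝ := √(Fintype.card ι - s.card : ℕ)
  let b : ℝ := √s.card
  have hpos : 0 < a ^ (Fintype.card ι - s.card) * b ^ s.card :=
    mul_pos (sqrt_natCast_pow_self_pos _) (sqrt_natCast_pow_self_pos _)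
  have hsq : ‖a • x‖ ^ 2 + ‖b • y‖ ^ 2 ≤ Fintype.card ι := by
    refine (add_le_add (sq_norm_sqrt_smul_le hx _) (sq_norm_sqrt_smul_le hy _)).trans_eq ?_
    rw [← Nat.cast_add, Nat.sub_add_cancel s.card_le_univ]
  have hmixed := norm_map_piecewise_le hL hC s (a • x) (b • y)
  rw [← L.coe_coe, map_piecewise_smul_smul, norm_smul, Real.norm_of_nonneg hpos.le] at hmixed
  rw [mixedConst, div_mul_eq_mul_div, le_div_iff₀' hpos]
  exact hmixed.trans (by gcongr)

end Mixed

section Derivatives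

variable {𝕜 ι X Y : Type*} [NontriviallyNormedField 𝕜] [NormedAddCommGroup X]
  [NormedSpace 𝕜 X] [NormedAddCommGroup Y] [NormedSpace 𝕜 Y]
  (L : ContinuousMultilinearMap 𝕜 (fun _ : ι => X) Y)

lemma homogeneousPolynomial_eq_comp :
    homogeneousPolynomial L = L ∘ ContinuousLinearMap.pi fun _ => ContinuousLinearMap.id 𝕜 X := rfl

lemma contDiff_homogeneousPolynomial [Finite ι] {n : WithTop ℕ∞} :
    ContDiff 𝕜 n (homogeneousPolynomial L) := by
  cases nonempty_fintype ι
  rw [homogeneousPolynomial_eq_comp]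
  exact L.contDiff.comp (ContinuousLinearMap.contDiff _)

lemma isPermInvariant_iteratedFDeriv [Finite ι] (k : ℕ) (x : X) :
    IsPermInvariant (iteratedFDeriv 𝕜 k (homogeneousPolynomial L) x) :=
  fun σ v => (contDiff_homogeneousPolynomial L).contDiffAt.iteratedFDeriv_comp_perm v σ

lemma homogeneousPolynomial_iteratedFDeriv [Fintype ι] [DecidableEq ι] (k : ℕ) (x y : X) :
    homogeneousPolynomial (iteratedFDeriv 𝕜 k (homogeneousPolynomial L) x) y
      = ∑ e : Fin k ↪ ι, L ((Finset.univ.map e).piecewise (fun _ => y) fun _ => x) := by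
  rw [homogeneousPolynomial_eq_comp L,
    ContinuousLinearMap.iteratedFDeriv_comp_right _ (L.contDiff (n := ω)) x le_top,
    L.iteratedFDeriv_eq]
  simp only [homogeneousPolynomial, ContinuousMultilinearMap.compContinuousLinearMap_apply,
    ContinuousMultilinearMap.iteratedFDeriv, sum_apply,
    ContinuousMultilinearMap.iteratedFDerivComponent_apply]
  refine Finset.sum_congr rfl fun e _ => congrArg L (funext fun i => ?_)
  by_cases hi : i ∈ Set.range e <;> simp_all [Finset.piecewise]

end Derivatives

/-- The norm `‖F‖ = sup {‖F y‖ : ‖y‖ ≤ 1}` of a polynomial `F`. As a real supremum it is `0` when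
`F` is unbounded on the unit ball. -/
noncomputable def unitBallSup {X Y : Type*} [SeminormedAddCommGroup X] [Norm Y] (F : X → Y) : ℝ :=
  sSup ((fun y => ‖F y‖) '' closedBall 0 1)

lemma unitBallSup_le {X Y : Type*} [SeminormedAddCommGroup X] [Norm Y] {F : X → Y} {C : ℝ}
    (hF : ∀ u, ‖u‖ ≤ 1 → ‖F u‖ ≤ C) : unitBallSup F ≤ C := by
  refine csSup_le ⟨_, 0, by simp, rfl⟩ ?_
  rintro _ ⟨y, hy, rfl⟩
  exact hF y (mem_closedBall_zero_iff.1 hy)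

section Markov

variable {ι X Y : Type*} [NormedAddCommGroup X] [NormedSpace ℝ X]
  [NormedAddCommGroup Y] [NormedSpace ℝ Y]
  {L : ContinuousMultilinearMap ℝ (fun _ : ι => X) Y} {C : ℝ}

lemma norm_homogeneousPolynomial_le_unitBallSup [Finite ι] {u : X} (hu : ‖u‖ ≤ 1) :
    ‖homogeneousPolynomial L u‖ ≤ unitBallSup (homogeneousPolynomial L) := by
  cases nonempty_fintype ι
  refine le_csSup ⟨‖L‖, ?_⟩ ⟨u, mem_closedBall_zero_iff.2 hu, rfl⟩
  rintro _ ⟨y, hy, rfl⟩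
  exact L.unit_le_opNorm <| (pi_norm_const_le y).trans (mem_closedBall_zero_iff.1 hy)

variable [Fintype ι]

theorem norm_homogeneousPolynomial_iteratedFDeriv_le (hL : IsPermInvariant L)
    (hC : ∀ u, ‖u‖ ≤ 1 → ‖homogeneousPolynomial L u‖ ≤ C) (k : ℕ) {x y : X}
    (hx : ‖x‖ ≤ 1) (hy : ‖y‖ ≤ 1) :
    ‖homogeneousPolynomial (iteratedFDeriv ℝ k (homogeneousPolynomial L) x) y‖
      ≤ (Fintype.card ι).descFactorial k * (mixedConst (Fintype.card ι) k * C) := by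
  classical
  have hterm (e : Fin k ↪ ι) : ‖L ((Finset.univ.map e).piecewise (fun _ => y) fun _ => x)‖
      ≤ mixedConst (Fintype.card ι) k * C := by
    simpa using norm_map_piecewise_le_mixedConst_mul hL hC (Finset.univ.map e) hx hy
  rw [homogeneousPolynomial_iteratedFDeriv]
  refine (norm_sum_le_of_le _ fun e _ => hterm e).trans_eq ?_
  simp [Fintype.card_embedding_eq]

theorem factorial_mul_norm_iteratedFDeriv_le (hL : IsPermInvariant L)
    (hC : ∀ u, ‖u‖ ≤ 1 → ‖homogeneousPolynomial L u‖ ≤ C) (k : ℕ) {x : X} (hx : ‖x‖ ≤ 1) :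
    k ! * ‖iteratedFDeriv ℝ k (homogeneousPolynomial L) x‖
      ≤ k ^ k * ((Fintype.card ι).descFactorial k * (mixedConst (Fintype.card ι) k * C)) := by
  simpa only [Fintype.card_fin] using
    factorial_mul_opNorm_le (isPermInvariant_iteratedFDeriv L k x) fun y hy =>
      norm_homogeneousPolynomial_iteratedFDeriv_le hL hC k hx hy

theorem markov_homogeneous_banach_general {m k : ℕ} (hk : k ≤ m)
    {L : ContinuousMultilinearMap ℝ (fun _ : Fin m => X) Y} (hL : IsPermInvariant L)
    {x : X} (hx : ‖x‖ ≤ 1) :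
    unitBallSup (homogeneousPolynomial (iteratedFDeriv ℝ k (homogeneousPolynomial L) x))
        ≤ (m.choose k : ℝ) * (k.factorial : ℝ) * (m : ℝ) ^ ((m : ℝ) / 2)
            / (((m : ℝ) - (k : ℝ)) ^ (((m : ℝ) - (k : ℝ)) / 2) * (k : ℝ) ^ ((k : ℝ) / 2))
            * unitBallSup (homogeneousPolynomial L) ∧
      ‖iteratedFDeriv ℝ k (homogeneousPolynomial L) x‖
        ≤ (m.choose k : ℝ) * (m : ℝ) ^ ((m : ℝ) / 2) * (k : ℝ) ^ ((k : ℝ) / 2)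
            / ((m : ℝ) - (k : ℝ)) ^ (((m : ℝ) - (k : ℝ)) / 2)
            * unitBallSup (homogeneousPolynomial L) := by
  set M := unitBallSup (homogeneousPolynomial L)
  have hM (u : X) (hu : ‖u‖ ≤ 1) : ‖homogeneousPolynomial L u‖ ≤ M :=
    norm_homogeneousPolynomial_le_unitBallSup hu
  have hdesc : (m.descFactorial k : ℝ) = m.choose k * k ! := by
    rw [Nat.descFactorial_eq_factorial_mul_choose, mul_comm]; push_cast; rfl
  have hself : (k : ℝ) ^ k = (k : ℝ) ^ ((k : ℝ) / 2) * (k : ℝ) ^ ((k : ℝ) / 2) := by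
    rw [rpow_natCast_half_self, ← mul_pow, Real.mul_self_sqrt k.cast_nonneg]
  constructor
  · refine unitBallSup_le fun y hy => ?_
    have h := norm_homogeneousPolynomial_iteratedFDeriv_le hL hM k hx hy
    rw [Fintype.card_fin, hdesc, mixedConst_eq_rpow hk] at h
    convert h using 1
    ring
  · have h := factorial_mul_norm_iteratedFDeriv_le hL hM k hx
    have hkk : (k : ℝ) ^ ((k : ℝ) / 2) ≠ 0 := by
      rw [rpow_natCast_half_self]; exact (sqrt_natCast_pow_self_pos k).ne'
    rw [Fintype.card_fin, hdesc, mixedConst_eq_rpow hk, hself] at h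
    refine le_of_mul_le_mul_left (h.trans_eq ?_) (by positivity : (0 : ℝ) < k !)
    field_simp

end Markov

/-- Markov-type inequalities for an `m`-homogeneous polynomial `L̂` on a real Banach
space: for `k ≤ m` and `‖x‖ ≤ 1`,
(a) `‖D̂^k L̂(x)‖ ≤ (m choose k) k! m^(m/2) / ((m-k)^((m-k)/2) k^(k/2)) ‖L̂‖` and
(b) `‖D^k L̂(x)‖ ≤ (m choose k) m^(m/2) k^(k/2) / (m-k)^((m-k)/2) ‖L̂‖`
(real powers, so `0⁰ = 1` when `k = m`). -/
theorem markov_homogeneous_banach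
    {X : Type*} [NormedAddCommGroup X] [NormedSpace ℝ X] [CompleteSpace X]
    (m k : ℕ) (hk : k ≤ m) (F : X → ℝ)
    (hF : ∃ L : ContinuousMultilinearMap ℝ (fun _ : Fin m => X) ℝ,
      (∀ (σ : Equiv.Perm (Fin m)) (v : Fin m → X), L (v ∘ σ) = L v) ∧
      ∀ u, F u = L (fun _ => u))
    (x : X) (hx : ‖x‖ ≤ 1) :
    sSup ((fun y => ‖iteratedFDeriv ℝ k F x (fun _ => y)‖) '' closedBall (0 : X) 1)
        ≤ (m.choose k : ℝ) * (k.factorial : ℝ) * (m : ℝ) ^ ((m : ℝ) / 2)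
            / (((m : ℝ) - (k : ℝ)) ^ (((m : ℝ) - (k : ℝ)) / 2) * (k : ℝ) ^ ((k : ℝ) / 2))
            * sSup ((fun y => ‖F y‖) '' closedBall (0 : X) 1) ∧
      ‖iteratedFDeriv ℝ k F x‖
        ≤ (m.choose k : ℝ) * (m : ℝ) ^ ((m : ℝ) / 2) * (k : ℝ) ^ ((k : ℝ) / 2)
            / ((m : ℝ) - (k : ℝ)) ^ (((m : ℝ) - (k : ℝ)) / 2)
            * sSup ((fun y => ‖F y‖) '' closedBall (0 : X) 1) := by
  obtain ⟨L, hL, hFL⟩ := hF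
  obtain rfl : F = homogeneousPolynomial L := funext hFL
  exact markov_homogeneous_banach_general hk hL hx
end
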